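/- arXiv:2308.08988 — 7 statements merged into one kernel-verified Lean document; each statement's English description precedes it below -/
import Mathlib

section
/- Let q > 1 and let χ be a primitive even Dirichlet character modulo q. Let α, β > 0 satisfy α·β = π². Then for every nonzero integer m, α^{−m}·Σ_{r=1}^{q} Σ_{n=1}^{∞} χ(r)·e^{−(r/q)·2nα} / ( n^{2m+1}·(1 − e^{−2nα}) ) = (−β)^{−m}·( (q/(2 G(conj(χ)))) · L(2m+1, conj(χ)) + G(χ)·Σ_{n=1}^{∞} conj(χ)(n) / ( n^{2m+1}·(e^{2nβ} − 1) ) ) + (−1)^m · 2^{2m} · Σ_{j=1}^{m+1} ((−1)^{j+1}/q^{2j−1}) · (L(1−2j, χ)/(2j−1)!) · (B_{2m−2j+2}/(2m−2j+2)!) · α^{j} · β^{m−j+1}. -/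
/-- The Gauss sum `G(χ) = ∑_{r=1}^{q} χ(r) e^{2πi r/q}`. -/
noncomputable def gaussSum' {q : ℕ} (χ : DirichletCharacter ℂ q) : ℂ :=
  ∑ r ∈ Finset.Icc 1 q, χ (r : ZMod q) * Complex.exp (2 * Real.pi * Complex.I * r / q)

/-- The complex conjugate of a Dirichlet character. -/
noncomputable def conjChar {q : ℕ} (χ : DirichletCharacter ℂ q) : DirichletCharacter ℂ q :=
  χ.ringHomComp (starRingEnd ℂ)

/-- `B_k / k!` where `B_k` is the `k`-th Bernoulli number, interpreted as `0` for `k < 0`. -/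
noncomputable def bernOverFact (k : ℤ) : ℚ :=
  if 0 ≤ k then bernoulli k.toNat / (Nat.factorial k.toNat) else 0

namespace Katayama

open Complex DirichletCharacter
open ZMod (stdAddChar stdAddChar_coe dft dft_dft dft_const_mul)
open scoped Real UpperHalfPlane

section Characters

variable {q : ℕ}

lemma conjChar_eq_inv (χ : DirichletCharacter ℂ q) : conjChar χ = χ⁻¹ := by
  ext a
  simp [conjChar, ← MulChar.star_apply', MulChar.ringHomComp_apply]

lemma isPrimitive_inv {χ : DirichletCharacter ℂ q} (h : χ.IsPrimitive) : χ⁻¹.IsPrimitive := by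
  rw [isPrimitive_def] at h ⊢
  rw [conductor_inv, h]

lemma even_apply_neg {χ : DirichletCharacter ℂ q} (h : χ.Even) (a : ZMod q) : χ (-a) = χ a := by
  rw [← neg_one_mul, map_mul, h, one_mul]

lemma even_inv {χ : DirichletCharacter ℂ q} (h : χ.Even) : χ⁻¹.Even := by
  rw [DirichletCharacter.Even, ← MulChar.star_apply', h, star_one]

lemma apply_zero {χ : DirichletCharacter ℂ q} (hq : 1 < q) : χ 0 = 0 := by
  have : Fact (1 < q) := ⟨hq⟩
  exact MulChar.map_zero χ

lemma summable_char_mul {ι : Type*} (χ : DirichletCharacter ℂ q) (c : ι → ZMod q) {g : ι → ℂ}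
    (hs : Summable g) : Summable fun i ↦ χ (c i) * g i :=
  Summable.of_norm_bounded hs.norm fun i ↦ by
    rw [norm_mul]
    exact mul_le_of_le_one_left (norm_nonneg _) (χ.norm_le_one _)

variable [NeZero q]

lemma sum_fin_eq_sum_zmod (F : ZMod q → ℂ) :
    ∑ r : Fin q, F ((r : ℕ) : ZMod q) = ∑ a, F a := by
  refine Fintype.sum_bijective (fun r : Fin q ↦ ((r : ℕ) : ZMod q)) ⟨fun r s h ↦ ?_, fun a ↦ ?_⟩ _ _
    fun _ ↦ rfl
  · have h' := (ZMod.natCast_eq_natCast_iff _ _ _).mp h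
    exact Fin.ext (Nat.ModEq.eq_of_lt_of_lt h' r.2 s.2)
  · exact ⟨⟨a.val, a.val_lt⟩, by simp⟩

lemma sum_Icc_eq_sum_fin (F : ℕ → ℂ) (h : F q = F 0) :
    ∑ r ∈ Finset.Icc 1 q, F r = ∑ r : Fin q, F r := by
  have hq : 1 ≤ q := NeZero.one_le
  rw [Fin.sum_univ_eq_sum_range, ← Finset.Ico_add_one_right_eq_Icc, Finset.range_eq_Ico,
    Finset.sum_Ico_succ_top hq, h, Finset.sum_eq_sum_Ico_succ_bot hq, add_comm]

lemma gaussSum'_eq (χ : DirichletCharacter ℂ q) : gaussSum' χ = gaussSum χ stdAddChar := by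
  have key (r : ℕ) : χ (r : ZMod q) * exp (2 * π * I * r / q)
      = χ (r : ZMod q) * stdAddChar (r : ZMod q) := by
    have := stdAddChar_coe (N := q) r
    push_cast at this
    rw [this]
  rw [gaussSum', gaussSum, ← sum_fin_eq_sum_zmod (fun a ↦ χ a * stdAddChar a)]
  simp_rw [key]
  exact sum_Icc_eq_sum_fin (fun r ↦ χ (r : ZMod q) * stdAddChar (r : ZMod q)) (by simp)

lemma sum_char_mul_stdAddChar {χ : DirichletCharacter ℂ q} (h : χ.IsPrimitive) (a : ZMod q) :
    ∑ r : Fin q, χ (r : ℕ) * stdAddChar (((r : ℕ) : ZMod q) * a)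
      = χ⁻¹ a * gaussSum χ stdAddChar := by
  rw [sum_fin_eq_sum_zmod (fun b ↦ χ b * stdAddChar (b * a)),
    ← gaussSum_mulShift_of_isPrimitive _ h]
  simp [gaussSum, AddChar.mulShift_apply, mul_comm a]

lemma sum_char_eq_zero {χ : DirichletCharacter ℂ q} (hq : 1 < q) (h : χ.IsPrimitive) :
    ∑ r : Fin q, χ (r : ℕ) = 0 := by
  have := sum_char_mul_stdAddChar h 0
  simpa [apply_zero hq] using this

lemma dft_even {χ : DirichletCharacter ℂ q} (h : χ.IsPrimitive) (hev : χ.Even) :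
    dft χ = fun a ↦ gaussSum χ stdAddChar * χ⁻¹ a := by
  ext a
  rw [h.fourierTransform_eq_inv_mul_gaussSum, even_apply_neg (even_inv hev), mul_comm]

lemma gaussSum_mul_gaussSum_inv {χ : DirichletCharacter ℂ q} (h : χ.IsPrimitive) (hev : χ.Even) :
    gaussSum χ stdAddChar * gaussSum χ⁻¹ stdAddChar = q := by
  have h1 := congr_fun (dft_dft (χ : ZMod q → ℂ)) 1
  rw [dft_even h hev, dft_const_mul, dft_even (isPrimitive_inv h) (even_inv hev),
    even_apply_neg hev] at h1
  simpa using h1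

lemma LFunction_one_sub_two_mul {χ : DirichletCharacter ℂ q} (hq : 1 < q) (h : χ.IsPrimitive)
    (hev : χ.Even) {j : ℕ} (hj : 1 ≤ j) :
    LFunction χ (1 - 2 * (j : ℂ)) = (q : ℂ) ^ (2 * j - 1) * (2 * π) ^ (-(2 * j : ℤ)) *
      (2 * j - 1).factorial * (2 * (-1) ^ j) * gaussSum χ stdAddChar *
      LFunction χ⁻¹ (2 * (j : ℂ)) := by
  have h1 := ZMod.LFunction_one_sub (N := q) χ (s := 2 * (j : ℂ)) (fun n hn ↦ by
    have : ((2 * j + n : ℕ) : ℂ) = 0 := by push_cast; rw [hn]; ring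
    rw [Nat.cast_eq_zero] at this; omega) (Or.inl (apply_zero hq))
  have hx : (fun x ↦ χ (-x)) = (χ : ZMod q → ℂ) := funext fun x ↦ even_apply_neg hev x
  have hL : ZMod.LFunction (dft χ) (2 * (j : ℂ)) =
      gaussSum χ stdAddChar * LFunction χ⁻¹ (2 * (j : ℂ)) := by
    rw [dft_even h hev, DirichletCharacter.LFunction]
    simp only [ZMod.LFunction, Finset.mul_sum]
    refine Finset.sum_congr rfl fun _ _ ↦ by ring
  obtain ⟨i, rfl⟩ : ∃ i, j = i + 1 := ⟨j - 1, by omega⟩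
  have hG : Complex.Gamma (2 * ((i + 1 : ℕ) : ℂ)) = (2 * (i + 1) - 1).factorial := by
    have := Complex.Gamma_nat_eq_factorial (2 * i + 1)
    rw [show 2 * (i + 1) - 1 = 2 * i + 1 by omega, ← this]
    congr 1; push_cast; ring
  have he : exp (π * I * (2 * ((i + 1 : ℕ) : ℂ)) / 2) = (-1) ^ (i + 1) := by
    rw [← exp_pi_mul_I, ← exp_nat_mul]; congr 1; ring
  have he' : exp (-π * I * (2 * ((i + 1 : ℕ) : ℂ)) / 2) = (-1) ^ (i + 1) := by
    rw [show -π * I * (2 * ((i + 1 : ℕ) : ℂ)) / 2 = -(π * I * (2 * ((i + 1 : ℕ) : ℂ)) / 2) by ring,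
      exp_neg, he, ← inv_pow]; norm_num
  have hqp : (q : ℂ) ^ (2 * ((i + 1 : ℕ) : ℂ) - 1) = (q : ℂ) ^ (2 * (i + 1) - 1) := by
    rw [← cpow_natCast]; congr 1
    rw [show 2 * (i + 1) - 1 = 2 * i + 1 by omega]; push_cast; ring
  have hpi : (2 * π : ℂ) ^ (-(2 * ((i + 1 : ℕ) : ℂ))) = (2 * π) ^ (-(2 * (i + 1 : ℕ) : ℤ)) := by
    rw [← cpow_intCast]; push_cast; rfl
  rw [hx, hL, hG, he, he', hqp, hpi] at h1
  rw [DirichletCharacter.LFunction, h1]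
  ring

lemma hasSum_LFunction (χ : DirichletCharacter ℂ q) {k : ℕ} (hk : 2 ≤ k) :
    HasSum (fun n : ℕ ↦ χ ((n + 1 : ℕ) : ZMod q) / ((n : ℂ) + 1) ^ k) (LFunction χ k) := by
  have hre : 1 < (k : ℂ).re := by simp; omega
  rw [LFunction_eq_LSeries χ hre]
  have h := (LSeriesSummable_of_one_lt_re χ hre).LSeriesHasSum
  rw [LSeriesHasSum, ← hasSum_nat_add_iff' 1] at h
  simpa [LSeries.term_def] using h

lemma hasSum_int_blocks (χ : ZMod q → ℂ) {g : ℤ → ℂ} (hs : Summable fun l : ℤ ↦ χ l * g l) :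
    HasSum (fun t : ℤ ↦ ∑ r : Fin q, χ (r : ℕ) * g (t * q + r)) (∑' l : ℤ, χ l * g l) := by
  have h := (Int.divModEquiv q).symm.hasSum_iff.mpr hs.hasSum
  have h2 := h.prod_fiberwise (fun t ↦ hasSum_fintype _)
  simpa [Int.divModEquiv] using h2

lemma tsum_int_char (χ : ZMod q → ℂ) {g : ℤ → ℂ} (hs : Summable g)
    (hs' : Summable fun l : ℤ ↦ χ l * g l) :
    ∑' l : ℤ, χ l * g l = ∑ r : Fin q, χ (r : ℕ) * ∑' t : ℤ, g (t * q + r) := by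
  rw [← (hasSum_int_blocks χ hs').tsum_eq, Summable.tsum_finsetSum]
  · simp_rw [tsum_mul_left]
  · intro r _
    refine (hs.comp_injective (i := fun t : ℤ ↦ t * q + r) fun a b hab ↦ ?_).mul_left _
    simpa [NeZero.ne q] using hab

lemma tsum_char_mul_pow (hq : 1 < q) (χ : DirichletCharacter ℂ q) {y : ℂ} (hy : ‖y‖ < 1) :
    ∑' n : ℕ, χ (n : ZMod q) * y ^ n
      = ∑ r ∈ Finset.Icc 1 q, χ (r : ZMod q) * y ^ r / (1 - y ^ q) := by
  have hyq : ‖y ^ q‖ < 1 := by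
    rw [norm_pow]; exact pow_lt_one₀ (norm_nonneg _) hy (NeZero.ne q)
  have hs : Summable fun n : ℕ ↦ χ (n : ZMod q) * y ^ n :=
    summable_char_mul χ _ (summable_geometric_of_norm_lt_one hy)
  have h := (Nat.divModEquiv q).symm.hasSum_iff.mpr hs.hasSum
  have h2 := h.prod_fiberwise (fun t ↦ hasSum_fintype _)
  have h3 : HasSum (fun t : ℕ ↦ (y ^ q) ^ t * ∑ r : Fin q, χ (r : ℕ) * y ^ (r : ℕ))
      (∑' n : ℕ, χ (n : ZMod q) * y ^ n) := by
    refine h2.congr_fun ?_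
    intro t
    simp only [Function.comp_apply, Nat.divModEquiv, Equiv.coe_fn_symm_mk, Finset.mul_sum]
    refine Finset.sum_congr rfl fun r _ ↦ ?_
    rw [pow_add, mul_comm t q, pow_mul]
    push_cast
    simp only [CharP.cast_eq_zero, zero_mul, zero_add]
    ring
  rw [sum_Icc_eq_sum_fin (fun r ↦ χ (r : ZMod q) * y ^ r / (1 - y ^ q))
    (by simp [apply_zero hq]), ← h3.tsum_eq, tsum_mul_right, tsum_geometric_of_norm_lt_one hyq,
    Finset.mul_sum]
  exact Finset.sum_congr rfl fun r _ ↦ by rw [div_eq_mul_inv]; ring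

end Characters

section PartialFractions

lemma ne_of_im_pos {z : ℂ} (hz : 0 < z.im) (l : ℤ) : z + l ≠ 0 ∧ z - l ≠ 0 := by
  constructor <;> intro h <;> simpa [hz.ne'] using congr_arg im h

lemma summable_inv_add_inv {z : ℂ} (hz : 0 < z.im) :
    Summable fun l : ℤ ↦ 1 / (z + l) + 1 / (z - l) := by
  refine ((EisensteinSeries.summable_linear_sub_mul_linear_add z 1 1).mul_left (2 * z)).congr
    fun l ↦ ?_
  obtain ⟨h1, h2⟩ := ne_of_im_pos hz l
  push_cast
  rw [one_mul]
  field_simp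
  ring

lemma inv_add_inv_of_imag {x : ℝ} (hx : 0 < x) (l : ℕ) :
    1 / (I * (x / π : ℝ) + (l + 1)) + 1 / (I * (x / π : ℝ) - (l + 1))
      = -2 * π * I * (x / (x ^ 2 + π ^ 2 * ((l : ℂ) + 1) ^ 2)) := by
  have hπ : (π : ℂ) ≠ 0 := by exact_mod_cast Real.pi_ne_zero
  have hzim : 0 < (I * (x / π : ℝ)).im := by simpa using div_pos hx Real.pi_pos
  have hh := ne_of_im_pos hzim (l + 1)
  push_cast at hh
  obtain ⟨n1, n2⟩ := hh
  have hD : (x : ℂ) ^ 2 + π ^ 2 * ((l : ℂ) + 1) ^ 2 ≠ 0 := by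
    have : (0 : ℝ) < x ^ 2 + π ^ 2 * ((l : ℝ) + 1) ^ 2 := by positivity
    exact_mod_cast this.ne'
  have hprod : (I * ((x : ℂ) / π) + (l + 1)) * (I * ((x : ℂ) / π) - (l + 1)) =
      -((x : ℂ) ^ 2 + π ^ 2 * ((l : ℂ) + 1) ^ 2) / π ^ 2 := by
    field_simp; ring_nf; rw [I_sq]; ring
  push_cast
  rw [one_div_add_one_div n1 n2, hprod]
  field_simp
  ring

lemma one_div_exp_sub_one {x : ℝ} (hx : 0 < x) :
    1 / (exp (2 * x) - 1) = -1 / 2 + 1 / (2 * x) +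
      ∑' n : ℕ, (x : ℂ) / (x ^ 2 + π ^ 2 * ((n : ℂ) + 1) ^ 2) := by
  have hπ : (π : ℂ) ≠ 0 := by exact_mod_cast Real.pi_ne_zero
  have hx0 : (x : ℂ) ≠ 0 := by exact_mod_cast hx.ne'
  set z : ℂ := I * (x / π : ℝ) with hz
  have hzim : 0 < z.im := by simpa [hz] using div_pos hx Real.pi_pos
  have h1 := cot_series_rep' (UpperHalfPlane.coe_mem_integerComplement ⟨z, hzim⟩)
  simp only at h1
  have hterm (l : ℕ) : 1 / (z - (l + 1)) + 1 / (z + (l + 1))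
      = -2 * π * I * (x / (x ^ 2 + π ^ 2 * ((l : ℂ) + 1) ^ 2)) := by
    rw [add_comm]; exact inv_add_inv_of_imag hx l
  simp_rw [hterm] at h1
  have hy : exp (2 * π * I * z) = (exp (2 * x))⁻¹ := by
    rw [← exp_neg]; congr 1; rw [hz]; push_cast; field_simp; rw [I_sq]
  have he : exp (2 * (x : ℂ)) - 1 ≠ 0 := by
    have : (1 : ℝ) < Real.exp (2 * x) := Real.one_lt_exp_iff.mpr (by positivity)
    have h2 : Real.exp (2 * x) - 1 ≠ 0 := by linarith
    exact_mod_cast h2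
  rw [tsum_mul_left, cot_pi_eq_exp_ratio, hy] at h1
  have hzinv : 1 / z = -2 * π * I * (1 / (2 * x)) := by
    rw [hz]; push_cast; field_simp; rw [I_sq, neg_neg]
  have hfr : (π : ℂ) * (((exp (2 * (x : ℂ)))⁻¹ + 1) / (I * (1 - (exp (2 * (x : ℂ)))⁻¹)))
      = -2 * π * I * (1 / 2 + 1 / (exp (2 * x) - 1)) := by
    have hE := exp_ne_zero (2 * (x : ℂ))
    field_simp
    ring_nf
    rw [I_sq]; ring
  rw [hzinv, hfr] at h1
  have h4 : -2 * π * I ≠ 0 := by simp [hπ]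
  apply mul_left_cancel₀ h4
  linear_combination h1

variable {q : ℕ} [NeZero q]

lemma sum_char_mul_tsum {ψ : DirichletCharacter ℂ q} (h : ψ.IsPrimitive) (hev : ψ.Even)
    {s : ℤ} (hs : s = 1 ∨ s = -1) {c : ℕ → ℂ} {y : ℂ} (hc : Summable fun n ↦ c n * y ^ n) :
    ∑ r : Fin q, ψ (r : ℕ) * ∑' n : ℕ, c n * (y * exp (2 * π * I * (s * (r : ℕ)) / q)) ^ n
      = gaussSum ψ stdAddChar * ∑' n : ℕ, ψ⁻¹ (n : ZMod q) * (c n * y ^ n) := by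
  have he (r n : ℕ) : exp (2 * π * I * (s * r) / q) ^ n
      = stdAddChar ((r : ZMod q) * ((s * n : ℤ) : ZMod q)) := by
    have h1 := stdAddChar_coe (N := q) (r * (s * n))
    push_cast at h1 ⊢
    rw [h1, ← exp_nat_mul]
    congr 1
    ring
  have hterm (r : Fin q) (n : ℕ) : c n * (y * exp (2 * π * I * (s * (r : ℕ)) / q)) ^ n
      = stdAddChar (((r : ℕ) : ZMod q) * ((s * n : ℤ) : ZMod q)) * (c n * y ^ n) := by
    rw [mul_pow, he]; ring
  have hsum (r : Fin q) : Summable fun n : ℕ ↦ ψ (r : ℕ) *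
      (stdAddChar (((r : ℕ) : ZMod q) * ((s * n : ℤ) : ZMod q)) * (c n * y ^ n)) := by
    refine Summable.mul_left _ (Summable.of_norm_bounded hc.norm fun n ↦ ?_)
    rw [norm_mul, AddChar.norm_apply, one_mul]
  simp_rw [hterm, ← tsum_mul_left]
  rw [← Summable.tsum_finsetSum fun r _ ↦ hsum r]
  refine tsum_congr fun n ↦ ?_
  simp_rw [← mul_assoc]
  rw [← Finset.sum_mul, ← Finset.sum_mul, sum_char_mul_stdAddChar h]
  have : ψ⁻¹ ((s * n : ℤ) : ZMod q) = ψ⁻¹ (n : ZMod q) := by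
    rcases hs with rfl | rfl
    · simp
    · simpa using even_apply_neg (even_inv hev) (n : ZMod q)
  rw [this]
  ring

lemma cot_add_cot {z : ℂ} (hz : 0 < z.im) (r : ℕ) :
    π * cot (π * ((z + r) / q)) + π * cot (π * ((z - r) / q))
      = q * ∑' t : ℤ, (1 / (z + ((t * q + r : ℤ) : ℂ)) + 1 / (z - ((t * q + r : ℤ) : ℂ))) := by
  have hq0 : (q : ℂ) ≠ 0 := NeZero.ne _
  have hqpos : (0 : ℝ) < q := by exact_mod_cast NeZero.pos q
  have hint {w : ℂ} (hw : 0 < w.im) : w ∈ integerComplement :=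
    UpperHalfPlane.coe_mem_integerComplement ⟨w, hw⟩
  have h1 : 0 < ((z + r) / q).im := by simpa [div_natCast_im] using div_pos hz hqpos
  have h2 : 0 < ((z - r) / q).im := by simpa [div_natCast_im] using div_pos hz hqpos
  set x := (z + r) / q with hx
  set y := (z - r) / q with hy
  have hs : Summable fun t : ℤ ↦ 1 / (x + t) + 1 / (y - t) := by
    have := ((summable_inv_add_inv hz).comp_injective (i := fun t : ℤ ↦ t * q + r)
      fun a b hab ↦ by simpa [NeZero.ne q] using hab).mul_left (q : ℂ)
    refine this.congr fun t ↦ ?_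
    have e1 : x + t = (z + ((t * q + r : ℤ) : ℂ)) / q := by rw [hx]; push_cast; field_simp; ring
    have e2 : y - t = (z - ((t * q + r : ℤ) : ℂ)) / q := by rw [hy]; push_cast; field_simp; ring
    rw [e1, e2, one_div_div, one_div_div, Function.comp_apply]
    ring
  have hS : ∑' t : ℤ, (1 / (x + t) + 1 / (y - t))
      = q * ∑' t : ℤ, (1 / (z + ((t * q + r : ℤ) : ℂ)) + 1 / (z - ((t * q + r : ℤ) : ℂ))) := by
    rw [← tsum_mul_left]
    refine tsum_congr fun t ↦ ?_
    have e1 : x + t = (z + ((t * q + r : ℤ) : ℂ)) / q := by rw [hx]; push_cast; field_simp; ring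
    have e2 : y - t = (z - ((t * q + r : ℤ) : ℂ)) / q := by rw [hy]; push_cast; field_simp; ring
    rw [e1, e2, one_div_div, one_div_div]
    ring
  rw [← hS]
  have hsp : Summable fun n : ℕ ↦ 1 / (x + ((n + 1 : ℕ) : ℤ)) + 1 / (y - ((n + 1 : ℕ) : ℤ)) :=
    hs.comp_injective (i := fun n : ℕ ↦ ((n + 1 : ℕ) : ℤ)) fun a b hab ↦ by simpa using hab
  have hsn : Summable fun n : ℕ ↦ 1 / (x + (-((n + 1 : ℕ) : ℤ) : ℤ)) +
      1 / (y - (-((n + 1 : ℕ) : ℤ) : ℤ)) :=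
    hs.comp_injective (i := fun n : ℕ ↦ -((n + 1 : ℕ) : ℤ)) fun a b hab ↦ by simpa using hab
  have c1 := cot_series_rep' (hint h1)
  have c2 := cot_series_rep' (hint h2)
  have d1 := summable_cotTerm (hint h1)
  have d2 := summable_cotTerm (hint h2)
  rw [sub_eq_iff_eq_add] at c1 c2
  have := tsum_of_add_one_of_neg_add_one (f := fun t : ℤ ↦ 1 / (x + t) + 1 / (y - t))
    (by simpa using hsp) (by simpa using hsn)
  rw [this, c1, c2]
  have key : ∑' n : ℕ, (1 / (x - (n + 1)) + 1 / (x + (n + 1))) +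
      ∑' n : ℕ, (1 / (y - (n + 1)) + 1 / (y + (n + 1))) =
      ∑' n : ℕ, (1 / (x + ((n + 1 : ℕ) : ℤ)) + 1 / (y - ((n + 1 : ℕ) : ℤ))) +
      ∑' n : ℕ, (1 / (x + (-((n + 1 : ℕ) : ℤ) : ℤ)) + 1 / (y - (-((n + 1 : ℕ) : ℤ) : ℤ))) := by
    rw [← Summable.tsum_add hsp hsn, ← Summable.tsum_add d1 d2]
    refine tsum_congr fun n ↦ ?_
    push_cast
    ring
  push_cast at key ⊢
  linear_combination key

lemma gaussSum_mul_tsum_exp {ψ : DirichletCharacter ℂ q} (hq : 1 < q) (h : ψ.IsPrimitive)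
    (hev : ψ.Even) {z : ℂ} (hz : 0 < z.im) :
    -2 * π * I * gaussSum ψ stdAddChar * ∑' n : ℕ, ψ⁻¹ (n : ZMod q) * exp (2 * π * I * (z / q)) ^ n
      = q * ∑' l : ℕ, ψ ((l + 1 : ℕ) : ZMod q) * (1 / (z + (l + 1)) + 1 / (z - (l + 1))) := by
  have hqpos : (0 : ℝ) < q := by exact_mod_cast NeZero.pos q
  set y := exp (2 * π * I * (z / q)) with hy
  have hzq : 0 < (z / q).im := by simpa [div_natCast_im] using div_pos hz hqpos
  have hy1 : ‖y‖ < 1 := UpperHalfPlane.norm_exp_two_pi_I_lt_one ⟨z / q, hzq⟩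
  have hsy : Summable fun n : ℕ ↦ (1 : ℂ) * y ^ n := by
    simpa using summable_geometric_of_norm_lt_one hy1
  have hcot (s : ℤ) (r : ℕ) : π * cot (π * ((z + s * r) / q))
      = π * I - 2 * π * I * ∑' n : ℕ, (1 : ℂ) * (y * exp (2 * π * I * (s * r) / q)) ^ n := by
    have h1 : 0 < ((z + s * r) / q).im := by simpa [div_natCast_im] using div_pos hz hqpos
    have := pi_mul_cot_pi_q_exp ⟨(z + s * r) / q, h1⟩
    simp only at this
    rw [this, hy, ← exp_add]
    simp only [one_mul]
    congr 5
    funext n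
    congr 2
    ring
  have hA (s : ℤ) (hs : s = 1 ∨ s = -1) :
      ∑ r : Fin q, ψ (r : ℕ) * (π * cot (π * ((z + s * (r : ℕ)) / q)))
      = -2 * π * I * (gaussSum ψ stdAddChar * ∑' n : ℕ, ψ⁻¹ (n : ZMod q) * y ^ n) := by
    have := sum_char_mul_tsum h hev hs hsy
    simp only [one_mul] at this
    rw [← this]
    simp_rw [hcot, mul_sub]
    rw [Finset.sum_sub_distrib, ← Finset.sum_mul, sum_char_eq_zero hq h, Finset.mul_sum, zero_mul,
      zero_sub, ← Finset.sum_neg_distrib]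
    refine Finset.sum_congr rfl fun r _ ↦ ?_
    simp only [one_mul]
    ring
  have hB := tsum_int_char (ψ : ZMod q → ℂ) (summable_inv_add_inv hz)
    (summable_char_mul ψ _ (summable_inv_add_inv hz))
  have hC : (q : ℂ) * ∑' l : ℤ, ψ l * (1 / (z + l) + 1 / (z - l))
      = 2 * (-2 * π * I * (gaussSum ψ stdAddChar * ∑' n : ℕ, ψ⁻¹ (n : ZMod q) * y ^ n)) := by
    rw [hB, two_mul]
    nth_rewrite 1 [← hA 1 (Or.inl rfl)]
    rw [← hA (-1) (Or.inr rfl), ← Finset.sum_add_distrib, Finset.mul_sum]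
    refine Finset.sum_congr rfl fun r _ ↦ ?_
    have := cot_add_cot (q := q) hz r
    push_cast at this ⊢
    rw [one_mul, neg_one_mul, ← sub_eq_add_neg, ← mul_add, this]
    ring
  have hsZ := summable_char_mul ψ (fun l : ℤ ↦ (l : ZMod q)) (summable_inv_add_inv hz)
  have hD := tsum_int_eq_zero_add_two_mul_tsum_pnat
    (f := fun l : ℤ ↦ ψ l * (1 / (z + l) + 1 / (z - l)))
    (fun l ↦ by
      have := even_apply_neg hev (l : ZMod q)
      push_cast
      rw [this, add_comm, sub_neg_eq_add, sub_eq_add_neg]) hsZ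
  have hE := tsum_pnat_eq_tsum_succ
    (f := fun l : ℕ ↦ ψ (l : ZMod q) * (1 / (z + l) + 1 / (z - l)))
  rw [hD] at hC
  push_cast at hC hE
  rw [hE, apply_zero hq] at hC
  push_cast
  linear_combination -hC / 2

/-- Partial fraction expansion of the generating function of a primitive even character. -/
lemma sum_char_exp_div {χ : DirichletCharacter ℂ q} (hq : 1 < q) (h : χ.IsPrimitive)
    (hev : χ.Even) {x : ℝ} (hx : 0 < x) :
    ∑ r ∈ Finset.Icc 1 q, χ (r : ZMod q) * exp (-((r : ℂ) / q) * (2 * x)) / (1 - exp (-(2 * x)))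
      = gaussSum χ stdAddChar *
        ∑' l : ℕ, χ⁻¹ ((l + 1 : ℕ) : ZMod q) * (x / (x ^ 2 + π ^ 2 * ((l : ℂ) + 1) ^ 2)) := by
  have hq0 : (q : ℂ) ≠ 0 := NeZero.ne _
  have hπ : (π : ℂ) ≠ 0 := by exact_mod_cast Real.pi_ne_zero
  have hqpos : (0 : ℝ) < q := by exact_mod_cast NeZero.pos q
  set z : ℂ := I * (x / π : ℝ) with hz
  have hzim : 0 < z.im := by simpa [hz] using div_pos hx Real.pi_pos
  have hy : exp (2 * π * I * (z / q)) = exp (-(2 * x) / q) := by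
    congr 1; rw [hz]; push_cast; field_simp; rw [I_sq]; ring
  have hy1 : ‖exp (-(2 * x) / q)‖ < 1 := by
    rw [← hy]
    exact UpperHalfPlane.norm_exp_two_pi_I_lt_one
      ⟨z / q, by simpa [div_natCast_im] using div_pos hzim hqpos⟩
  have h1 := gaussSum_mul_tsum_exp hq (isPrimitive_inv h) (even_inv hev) hzim
  rw [inv_inv, hy, tsum_char_mul_pow hq χ hy1] at h1
  simp_rw [hz, inv_add_inv_of_imag hx] at h1
  have h2 : ∑ r ∈ Finset.Icc 1 q,
      χ (r : ZMod q) * exp (-((r : ℂ) / q) * (2 * x)) / (1 - exp (-(2 * x)))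
      = ∑ r ∈ Finset.Icc 1 q, χ (r : ZMod q) * exp (-(2 * x) / q) ^ r /
        (1 - exp (-(2 * x) / q) ^ q) := by
    refine Finset.sum_congr rfl fun r _ ↦ ?_
    rw [← exp_nat_mul, ← exp_nat_mul]
    congr 3
    · ring
    · field_simp
  rw [h2]
  have hGG := gaussSum_mul_gaussSum_inv h hev
  have hG' : gaussSum χ⁻¹ stdAddChar ≠ 0 := fun h0 ↦ hq0 (by rw [← hGG, h0, mul_zero])
  have h3 : ∑' l : ℕ, χ⁻¹ ((l + 1 : ℕ) : ZMod q) *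
      (-2 * π * I * (x / (x ^ 2 + π ^ 2 * ((l : ℂ) + 1) ^ 2))) = -2 * π * I *
      ∑' l : ℕ, χ⁻¹ ((l + 1 : ℕ) : ZMod q) * (x / (x ^ 2 + π ^ 2 * ((l : ℂ) + 1) ^ 2)) := by
    rw [← tsum_mul_left]; exact tsum_congr fun l ↦ by ring
  rw [h3] at h1
  have h4 : -2 * π * I * gaussSum χ⁻¹ stdAddChar ≠ 0 := by simp [hπ, hG']
  apply mul_left_cancel₀ h4
  rw [h1]
  generalize (∑' l : ℕ, _ : ℂ) = T
  linear_combination (2 * π * I * T) * hGG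

end PartialFractions

section DoubleSums

lemma summable_pow_succ {u : ℕ → ℝ} (hu : ∀ n, 0 < u n) (hs : Summable u) (k : ℕ) :
    Summable fun n ↦ u n ^ (k + 1) := by
  refine Summable.of_nonneg_of_le (fun n ↦ (pow_pos (hu n) _).le) (fun n ↦ ?_)
    (hs.mul_left ((∑' n, u n) ^ k))
  rw [pow_succ]
  have := hs.le_tsum n fun j _ ↦ (hu j).le
  have := hu n
  gcongr

lemma sub_pow_mul_harmonic {u w : ℝ} (hu : 0 < u) (hw : 0 < w) (M : ℕ) :
    (u : ℂ) ^ M * (u * w / (u + w) : ℝ) - (-(w : ℂ)) ^ M * (u * w / (u + w) : ℝ)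
      = -∑ i ∈ Finset.range M, (u : ℂ) ^ (i + 1) * (-(w : ℂ)) ^ (M - i) := by
  have h := geom_sum₂_mul (u : ℂ) (-(w : ℂ)) M
  have h0 : (u : ℂ) + w ≠ 0 := by exact_mod_cast (add_pos hu hw).ne'
  have h1 : ∑ i ∈ Finset.range M, (u : ℂ) ^ (i + 1) * (-(w : ℂ)) ^ (M - i)
      = u * (-w) * ∑ i ∈ Finset.range M, (u : ℂ) ^ i * (-(w : ℂ)) ^ (M - 1 - i) := by
    rw [Finset.mul_sum]
    refine Finset.sum_congr rfl fun i hi ↦ ?_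
    have : M - i = M - 1 - i + 1 := by have := Finset.mem_range.mp hi; omega
    rw [this]
    ring
  rw [h1, ← sub_mul, ← h]
  push_cast
  field_simp
  ring

/-- Comparison of the two iterated sums of a weighted harmonic kernel. -/
lemma tsum_harmonic_sub_tsum_harmonic {a : ℕ → ℂ} (ha : ∀ l, ‖a l‖ ≤ 1) {u w : ℕ → ℝ}
    (hu : ∀ n, 0 < u n) (hw : ∀ n, 0 < w n) (hsu : Summable u) (hsw : Summable w)
    {M : ℕ} (hM : 1 ≤ M) :
    ∑' n, (u n : ℂ) ^ M * ∑' l, a l * (u n * w l / (u n + w l) : ℝ)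
        - ∑' l, a l * (-(w l : ℂ)) ^ M * ∑' n, ((u n * w l / (u n + w l) : ℝ) : ℂ)
      = -∑ i ∈ Finset.range M, (∑' n, (u n : ℂ) ^ (i + 1)) *
          ∑' l, a l * (-(w l : ℂ)) ^ (M - i) := by
  obtain ⟨k, rfl⟩ := Nat.exists_eq_add_of_le' hM
  have hDpos (n l) : 0 ≤ u n * w l / (u n + w l) := by
    have := hu n; have := hw l; positivity
  have hDu (n l) : u n * w l / (u n + w l) ≤ u n := by
    have := hu n; have := hw l
    rw [div_le_iff₀ (by positivity)]; nlinarith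
  have hDw (n l) : u n * w l / (u n + w l) ≤ w l := by
    have := hu n; have := hw l
    rw [div_le_iff₀ (by positivity)]; nlinarith
  have hsF : Summable fun p : ℕ × ℕ ↦
      (u p.1 : ℂ) ^ (k + 1) * (a p.2 * (u p.1 * w p.2 / (u p.1 + w p.2) : ℝ)) := by
    refine Summable.of_norm_bounded ((summable_pow_succ hu hsu k).mul_of_nonneg hsw
      (fun n ↦ (pow_pos (hu n) _).le) fun n ↦ (hw n).le) fun p ↦ ?_
    rw [norm_mul, norm_mul, norm_pow, norm_real, norm_real, Real.norm_of_nonneg (hu _).le,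
      Real.norm_of_nonneg (hDpos _ _)]
    have h1 := (mul_le_mul (ha p.2) (hDw p.1 p.2) (hDpos _ _) zero_le_one)
    rw [one_mul] at h1
    exact mul_le_mul_of_nonneg_left h1 (pow_pos (hu _) _).le
  have hsG : Summable fun p : ℕ × ℕ ↦
      a p.2 * (-(w p.2 : ℂ)) ^ (k + 1) * ((u p.1 * w p.2 / (u p.1 + w p.2) : ℝ) : ℂ) := by
    refine Summable.of_norm_bounded (hsu.mul_of_nonneg (summable_pow_succ hw hsw k)
      (fun n ↦ (hu n).le) fun n ↦ (pow_pos (hw n) _).le) fun p ↦ ?_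
    rw [norm_mul, norm_mul, norm_pow, norm_neg, norm_real, norm_real,
      Real.norm_of_nonneg (hw _).le, Real.norm_of_nonneg (hDpos _ _), mul_comm]
    have h1 := mul_le_mul_of_nonneg_right (ha p.2) (pow_pos (hw p.2) (k + 1)).le
    rw [one_mul] at h1
    exact mul_le_mul (hDu _ _) h1 (by have := hw p.2; positivity) (hu _).le
  have hsi (i) (hi : i ∈ Finset.range (k + 1)) : Summable fun p : ℕ × ℕ ↦
      (u p.1 : ℂ) ^ (i + 1) * (a p.2 * (-(w p.2 : ℂ)) ^ (k + 1 - i)) := by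
    have e : k + 1 - i = (k - i) + 1 := by have := Finset.mem_range.mp hi; omega
    rw [e]
    refine Summable.of_norm_bounded ((summable_pow_succ hu hsu i).mul_of_nonneg
      (summable_pow_succ hw hsw (k - i)) (fun n ↦ (pow_pos (hu n) _).le)
      fun n ↦ (pow_pos (hw n) _).le) fun p ↦ ?_
    rw [norm_mul, norm_mul, norm_pow, norm_pow, norm_neg, norm_real, norm_real,
      Real.norm_of_nonneg (hw _).le, Real.norm_of_nonneg (hu _).le]
    have h1 := mul_le_mul_of_nonneg_right (ha p.2) (pow_pos (hw p.2) (k - i + 1)).le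
    rw [one_mul] at h1
    exact mul_le_mul_of_nonneg_left h1 (pow_pos (hu _) _).le
  have hprod (i) (hi : i ∈ Finset.range (k + 1)) :
      (∑' n, (u n : ℂ) ^ (i + 1)) * ∑' l, a l * (-(w l : ℂ)) ^ (k + 1 - i)
        = ∑' p : ℕ × ℕ, (u p.1 : ℂ) ^ (i + 1) * (a p.2 * (-(w p.2 : ℂ)) ^ (k + 1 - i)) := by
    rw [(hsi i hi).tsum_prod]
    simp_rw [tsum_mul_left, tsum_mul_right]
  rw [Finset.sum_congr rfl hprod, ← Summable.tsum_finsetSum hsi, ← tsum_neg]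
  simp_rw [← tsum_mul_left]
  rw [← hsF.tsum_prod, Summable.tsum_comm (f := fun n l ↦ a l * (-(w l : ℂ)) ^ (k + 1) *
    ((u n * w l / (u n + w l) : ℝ) : ℂ)) hsG, ← hsG.tsum_prod, ← hsF.tsum_sub hsG]
  refine tsum_congr fun p ↦ ?_
  have h1 := sub_pow_mul_harmonic (hu p.1) (hw p.2) (k + 1)
  calc _ = a p.2 * ((u p.1 : ℂ) ^ (k + 1) * (u p.1 * w p.2 / (u p.1 + w p.2) : ℝ) -
        (-(w p.2 : ℂ)) ^ (k + 1) * (u p.1 * w p.2 / (u p.1 + w p.2) : ℝ)) := by ring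
    _ = _ := by
      rw [h1, mul_neg, Finset.mul_sum]
      exact congr_arg _ (Finset.sum_congr rfl fun i _ ↦ by ring)

variable {q : ℕ} [NeZero q]

/-- Interchange of the finite sum over residues with the series over `n`. -/
lemma sum_tsum_char_exp (χ : DirichletCharacter ℂ q) {α : ℝ} (hα : 0 < α) (m : ℤ) :
    ∑ r ∈ Finset.Icc 1 q, ∑' n : ℕ,
        χ (r : ZMod q) * exp (-((r : ℂ) / q) * (2 * ((n : ℂ) + 1)) * α) /
          (((n : ℂ) + 1) ^ (2 * m + 1) * (1 - exp (-(2 * ((n : ℂ) + 1)) * α)))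
      = ∑' n : ℕ, (((n : ℂ) + 1) ^ (2 * m + 1))⁻¹ * ∑ r ∈ Finset.Icc 1 q,
          χ (r : ZMod q) * exp (-((r : ℂ) / q) * (2 * ((((n : ℝ) + 1) * α : ℝ) : ℂ))) /
            (1 - exp (-(2 * ((((n : ℝ) + 1) * α : ℝ) : ℂ)))) := by
  have hqpos : (0 : ℝ) < q := by exact_mod_cast NeZero.pos q
  rw [← Summable.tsum_finsetSum]
  · refine tsum_congr fun n ↦ ?_
    rw [Finset.mul_sum]
    refine Finset.sum_congr rfl fun r _ ↦ ?_
    push_cast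
    rw [show -((r : ℂ) / q) * (2 * ((n : ℂ) + 1)) * α = -((r : ℂ) / q) * (2 * ((n + 1) * α)) by
      ring, show -(2 * ((n : ℂ) + 1)) * α = -(2 * ((n + 1) * α)) by ring, div_eq_mul_inv,
      div_eq_mul_inv, mul_inv]
    ring
  · intro r hr
    have hr1 : 1 ≤ r := (Finset.mem_Icc.mp hr).1
    have hrpos : (0 : ℝ) < r := by exact_mod_cast hr1
    set ρ : ℝ := Real.exp (-(r / q * (2 * α))) with hρ
    have hρ1 : ‖ρ‖ < 1 := by
      rw [Real.norm_of_nonneg (Real.exp_pos _).le]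
      exact Real.exp_lt_one_iff.mpr (neg_lt_zero.mpr (by positivity))
    have hs := (summable_pow_mul_geometric_of_norm_lt_one (2 * m + 1).natAbs hρ1)
    have hs1 := ((summable_nat_add_iff 1).mpr hs).mul_left ((1 - Real.exp (-(2 * α)))⁻¹)
    have he1 : 0 < 1 - Real.exp (-(2 * α)) := by
      have : Real.exp (-(2 * α)) < 1 := Real.exp_lt_one_iff.mpr (by linarith)
      linarith
    refine Summable.of_norm_bounded hs1 fun n ↦ ?_
    have hn1 : (1 : ℝ) ≤ (n : ℝ) + 1 := by linarith [(Nat.cast_nonneg n : (0 : ℝ) ≤ n)]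
    have hden : 1 - exp (-(2 * ((n : ℂ) + 1)) * α) =
        ((1 - Real.exp (-(2 * (n + 1)) * α) : ℝ) : ℂ) := by push_cast; rfl
    have hnum : exp (-((r : ℂ) / q) * (2 * ((n : ℂ) + 1)) * α) = ((ρ ^ (n + 1) : ℝ) : ℂ) := by
      rw [hρ, ← Real.exp_nat_mul]; push_cast; congr 1; ring
    have hpow : ‖((n : ℂ) + 1) ^ (2 * m + 1)‖ = ((n : ℝ) + 1) ^ (2 * m + 1) := by
      rw [norm_zpow]; congr 1; norm_cast
    have hle : 1 - Real.exp (-(2 * α)) ≤ 1 - Real.exp (-(2 * (n + 1)) * α) := by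
      gcongr; nlinarith
    have hinv : (((n : ℝ) + 1) ^ (2 * m + 1))⁻¹ ≤ ((n : ℝ) + 1) ^ (2 * m + 1).natAbs := by
      rw [← zpow_neg, ← zpow_natCast]
      exact zpow_le_zpow_right₀ hn1 (by omega)
    rw [hden, hnum, norm_div, norm_mul, norm_mul, hpow, norm_real, norm_real,
      Real.norm_of_nonneg (by positivity), Real.norm_of_nonneg (he1.le.trans hle), div_eq_mul_inv,
      mul_inv]
    have hχ := χ.norm_le_one (r : ZMod q)
    have hi2 := inv_anti₀ he1 hle
    have hρ0 : 0 ≤ ρ ^ (n + 1) := by positivity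
    have hi0 : 0 ≤ (1 - Real.exp (-(2 * (n + 1)) * α))⁻¹ := inv_nonneg.mpr (he1.le.trans hle)
    calc _ ≤ 1 * ρ ^ (n + 1) * (((n : ℝ) + 1) ^ (2 * m + 1).natAbs *
          (1 - Real.exp (-(2 * α)))⁻¹) := by gcongr
      _ = _ := by push_cast; ring

end DoubleSums

section BernoulliTerms

variable {q : ℕ} [NeZero q]

lemma bernoulli_term {χ : DirichletCharacter ℂ q} (hq : 1 < q) (h : χ.IsPrimitive) (hev : χ.Even)
    (α β : ℂ) {j : ℕ} (hj : 1 ≤ j) (a : ℕ) :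
    (-1 : ℂ) ^ ((j : ℤ) + 1) / (q : ℂ) ^ (2 * (j : ℤ) - 1) *
        (LFunction χ (1 - 2 * ((j : ℤ) : ℂ)) / (Nat.factorial (2 * (j : ℤ) - 1).toNat : ℂ)) *
        ((bernOverFact (2 * (a : ℤ)) : ℚ) : ℂ) * α ^ (j : ℤ) * β ^ (a : ℤ)
      = -2 * gaussSum χ stdAddChar * LFunction χ⁻¹ (2 * (j : ℂ)) / (2 * π) ^ (2 * j) *
        (bernoulli (2 * a) / (Nat.factorial (2 * a) : ℂ)) * α ^ j * β ^ a := by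
  have hq0 : (q : ℂ) ≠ 0 := NeZero.ne _
  have hπ : (π : ℂ) ≠ 0 := by exact_mod_cast Real.pi_ne_zero
  have e1 : (2 * (j : ℤ) - 1) = ((2 * j - 1 : ℕ) : ℤ) := by omega
  have e2 : (2 * (a : ℤ)) = ((2 * a : ℕ) : ℤ) := by omega
  have e3 : ((j : ℤ) + 1) = ((j + 1 : ℕ) : ℤ) := by omega
  have e4 : (2 * (j : ℤ)) = ((2 * j : ℕ) : ℤ) := by omega
  have hs : ((-1 : ℂ) ^ j) ^ 2 = 1 := by rw [← pow_mul, mul_comm, pow_mul]; simp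
  have hf : (Nat.factorial (2 * j - 1) : ℂ) ≠ 0 := by exact_mod_cast Nat.factorial_ne_zero _
  rw [Int.cast_natCast, LFunction_one_sub_two_mul hq h hev hj, e1, e2, e3, bernOverFact,
    if_pos (Int.natCast_nonneg _), Int.toNat_natCast, Int.toNat_natCast, e4]
  simp only [zpow_natCast, zpow_neg]
  push_cast
  field_simp
  linear_combination (-gaussSum χ stdAddChar * LFunction χ⁻¹ (2 * (j : ℂ)) * bernoulli (2 * a) *
    α ^ j * β ^ a / (Nat.factorial (2 * a) : ℂ)) * hs

lemma tsum_inv_sq_pow (α : ℝ) {a : ℕ} (ha : a ≠ 0) :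
    ∑' n : ℕ, (((1 / (((n : ℝ) + 1) * α) ^ 2 : ℝ) : ℂ)) ^ a
      = 1 / (α : ℂ) ^ (2 * a) * ((-1) ^ (a + 1) * 2 ^ (2 * a - 1) * π ^ (2 * a) *
        (bernoulli (2 * a) / (Nat.factorial (2 * a) : ℂ))) := by
  have h1 := (hasSum_nat_add_iff' 1).mpr (hasSum_zeta_nat ha)
  have h2 := (h1.mul_left (1 / α ^ (2 * a))).tsum_eq
  rw [← ofReal_inj] at h2
  push_cast at h2
  simp only [Finset.range_one, Finset.sum_singleton, Nat.cast_zero, ne_eq, mul_eq_zero,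
    OfNat.ofNat_ne_zero, ha, or_self, not_false_eq_true, zero_pow, div_zero, sub_zero] at h2
  calc _ = ∑' n : ℕ, 1 / (α : ℂ) ^ (2 * a) * (1 / ((n : ℂ) + 1) ^ (2 * a)) := by
        refine tsum_congr fun n ↦ ?_
        push_cast
        rw [div_pow, ← pow_mul, mul_pow, one_pow, one_div_mul_one_div, mul_comm]
    _ = _ := by rw [h2]; ring

lemma tsum_char_mul_neg_inv_sq_pow (ψ : DirichletCharacter ℂ q) {b : ℕ} (hb : 1 ≤ b) :
    ∑' l : ℕ, ψ ((l + 1 : ℕ) : ZMod q) * (-((1 / (π * ((l : ℝ) + 1)) ^ 2 : ℝ) : ℂ)) ^ b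
      = (-1) ^ b / π ^ (2 * b) * LFunction ψ (2 * (b : ℂ)) := by
  have h := hasSum_LFunction ψ (k := 2 * b) (by omega)
  rw [show ((2 * b : ℕ) : ℂ) = 2 * (b : ℂ) by push_cast; rfl] at h
  rw [← h.tsum_eq, ← tsum_mul_left]
  refine tsum_congr fun n ↦ ?_
  push_cast
  rw [neg_pow, div_pow, one_pow, mul_pow, mul_pow, ← pow_mul, ← pow_mul]
  ring

lemma sum_Icc_int_succ (M : ℕ) (f : ℤ → ℂ) :
    ∑ j ∈ Finset.Icc (1 : ℤ) (M + 1), f j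
      = ∑ i ∈ Finset.range M, f ((M - i : ℕ) : ℤ) + f ((M + 1 : ℕ) : ℤ) := by
  have h1 : Finset.Icc (1 : ℤ) (M + 1)
      = (Finset.range (M + 1)).image fun k : ℕ ↦ ((k + 1 : ℕ) : ℤ) := by
    ext j
    simp only [Finset.mem_Icc, Finset.mem_image, Finset.mem_range]
    constructor
    · intro hj
      exact ⟨(j - 1).toNat, by omega, by omega⟩
    · rintro ⟨k, hk, rfl⟩
      omega
  rw [h1, Finset.sum_image (by intro a _ b _ hab; simpa using hab), Finset.sum_range_succ,
    ← Finset.sum_range_reflect]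
  congr 1
  refine Finset.sum_congr rfl fun i hi ↦ ?_
  have : M - 1 - i + 1 = M - i := by have := Finset.mem_range.mp hi; omega
  rw [this]

lemma sum_bernoulli_terms {χ : DirichletCharacter ℂ q} (hq : 1 < q) (h : χ.IsPrimitive)
    (hev : χ.Even) {α β : ℝ} (hα : 0 < α) (hβ : 0 < β) (hαβ : α * β = π ^ 2) (M : ℕ) :
    (-1 : ℂ) ^ (M : ℤ) * (2 : ℂ) ^ (2 * (M : ℤ)) *
        ∑ j ∈ Finset.Icc (1 : ℤ) (M + 1), ((-1 : ℂ) ^ (j + 1) / (q : ℂ) ^ (2 * j - 1)) *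
          (LFunction χ (1 - 2 * (j : ℂ)) / (Nat.factorial (2 * j - 1).toNat : ℂ)) *
          ((bernOverFact (2 * (M : ℤ) - 2 * j + 2) : ℚ) : ℂ) *
          (α : ℂ) ^ j * (β : ℂ) ^ ((M : ℤ) - j + 1)
      = -gaussSum χ stdAddChar * (α ^ (M + 1) * ∑ i ∈ Finset.range M,
          (∑' n : ℕ, (((1 / (((n : ℝ) + 1) * α) ^ 2 : ℝ) : ℂ)) ^ (i + 1)) *
          (∑' l : ℕ, χ⁻¹ ((l + 1 : ℕ) : ZMod q) *
            (-((1 / (π * ((l : ℝ) + 1)) ^ 2 : ℝ) : ℂ)) ^ (M - i))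
          + (-1) ^ M / β ^ M * (1 / (2 * β)) * LFunction χ⁻¹ (2 * ((M + 1 : ℕ) : ℂ))) := by
  have hπ : (π : ℂ) ≠ 0 := by exact_mod_cast Real.pi_ne_zero
  have hα0 : (α : ℂ) ≠ 0 := by exact_mod_cast hα.ne'
  have hβ0 : (β : ℂ) ≠ 0 := by exact_mod_cast hβ.ne'
  have hc : (α : ℂ) * β = π ^ 2 := by exact_mod_cast hαβ
  rw [sum_Icc_int_succ, mul_add, mul_add, Finset.mul_sum, Finset.mul_sum, Finset.mul_sum]
  congr 1
  · refine Finset.sum_congr rfl fun i hi ↦ ?_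
    obtain ⟨j, hj1, hj⟩ : ∃ j : ℕ, 1 ≤ j ∧ M = j + i :=
      ⟨M - i, by have := Finset.mem_range.mp hi; omega, by have := Finset.mem_range.mp hi; omega⟩
    subst hj
    rw [Nat.add_sub_cancel, show 2 * ((j + i : ℕ) : ℤ) - 2 * (j : ℤ) + 2 = 2 * ((i + 1 : ℕ) : ℤ) by
      push_cast; ring, show ((j + i : ℕ) : ℤ) - (j : ℤ) + 1 = ((i + 1 : ℕ) : ℤ) by
      push_cast; ring, bernoulli_term hq h hev _ _ hj1, tsum_inv_sq_pow _ (a := i + 1) (by omega),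
      tsum_char_mul_neg_inv_sq_pow _ hj1, show 2 * ((j + i : ℕ) : ℤ) = ((2 * (j + i) : ℕ) : ℤ) by
      push_cast; ring, zpow_natCast, zpow_natCast, show 2 * (i + 1) - 1 = 2 * i + 1 by omega,
      show (π : ℂ) ^ (2 * (i + 1)) = (α * β) ^ (i + 1) by rw [hc, ← pow_mul]]
    generalize LFunction χ⁻¹ _ = L
    generalize (bernoulli _ : ℂ) / _ = b
    field_simp
    ring
  · rw [show 2 * (M : ℤ) - 2 * ((M + 1 : ℕ) : ℤ) + 2 = 2 * ((0 : ℕ) : ℤ) by push_cast; ring,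
      show (M : ℤ) - ((M + 1 : ℕ) : ℤ) + 1 = ((0 : ℕ) : ℤ) by push_cast; ring,
      bernoulli_term hq h hev _ _ (j := M + 1) (by omega), show 2 * (M : ℤ) = ((2 * M : ℕ) : ℤ) by
      push_cast; ring, zpow_natCast, zpow_natCast, mul_pow, pow_mul (π : ℂ), ← hc]
    simp only [mul_zero, bernoulli_zero, Nat.factorial_zero, pow_zero]
    generalize LFunction χ⁻¹ _ = L
    push_cast
    field_simp
    ring

end BernoulliTerms

section PositiveIdentity

lemma summable_inv_sq {c : ℝ} : Summable fun n : ℕ ↦ 1 / (((n : ℝ) + 1) * c) ^ 2 := by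
  have := ((summable_nat_add_iff 1).mpr
    (Real.summable_one_div_nat_pow.mpr one_lt_two)).mul_right (1 / c ^ 2)
  refine this.congr fun n ↦ ?_
  push_cast
  rw [mul_pow, one_div_mul_one_div]

lemma harmonic_inv_sq {x y : ℝ} (hx : 0 < x) (hy : 0 < y) :
    1 / x ^ 2 * (1 / y ^ 2) / (1 / x ^ 2 + 1 / y ^ 2) = 1 / (x ^ 2 + y ^ 2) := by
  field_simp
  ring

lemma summable_char_div_exp {q : ℕ} (ψ : DirichletCharacter ℂ q) {β : ℝ} (hβ : 0 < β)
    {k : ℕ} (hk : 2 ≤ k) :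
    Summable fun n : ℕ ↦ ψ ((n + 1 : ℕ) : ZMod q) /
      (((n : ℂ) + 1) ^ k * (exp (2 * ((n : ℂ) + 1) * β) - 1)) := by
  have hs := (((summable_nat_add_iff 1).mpr
    (Real.summable_one_div_nat_pow.mpr (by omega : 1 < k))).mul_right (1 / (2 * β)))
  refine Summable.of_norm_bounded hs fun n ↦ ?_
  have hn : (0 : ℝ) ≤ n := Nat.cast_nonneg n
  have he : exp (2 * ((n : ℂ) + 1) * β) - 1 = ((Real.exp (2 * (n + 1) * β) - 1 : ℝ) : ℂ) := by
    push_cast; rfl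
  have h1 : 2 * β ≤ Real.exp (2 * (n + 1) * β) - 1 := by
    have := Real.add_one_le_exp (2 * ((n : ℝ) + 1) * β)
    nlinarith
  have hp : ‖((n : ℂ) + 1) ^ k‖ = ((n : ℝ) + 1) ^ k := by rw [norm_pow]; congr 1; norm_cast
  rw [he, norm_div, norm_mul, hp, norm_real, Real.norm_of_nonneg (by linarith),
    one_div_mul_one_div]
  push_cast
  have := ψ.norm_le_one ((n + 1 : ℕ) : ZMod q)
  push_cast at this
  gcongr

variable {q : ℕ} [NeZero q]

lemma tsum_char_exp_pos {χ : DirichletCharacter ℂ q} (hq : 1 < q) (h : χ.IsPrimitive)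
    (hev : χ.Even) {α : ℝ} (hα : 0 < α) (M : ℕ) :
    ∑' n : ℕ, (((n : ℂ) + 1) ^ (2 * M + 1))⁻¹ * ∑ r ∈ Finset.Icc 1 q,
          χ (r : ZMod q) * exp (-((r : ℂ) / q) * (2 * ((((n : ℝ) + 1) * α : ℝ) : ℂ))) /
            (1 - exp (-(2 * ((((n : ℝ) + 1) * α : ℝ) : ℂ))))
      = gaussSum χ stdAddChar * α ^ (2 * M + 1) *
        ∑' n : ℕ, ((1 / (((n : ℝ) + 1) * α) ^ 2 : ℝ) : ℂ) ^ M *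
          ∑' l : ℕ, χ⁻¹ ((l + 1 : ℕ) : ZMod q) *
            ((1 / (((n : ℝ) + 1) * α) ^ 2 * (1 / (π * ((l : ℝ) + 1)) ^ 2) /
              (1 / (((n : ℝ) + 1) * α) ^ 2 + 1 / (π * ((l : ℝ) + 1)) ^ 2) : ℝ) : ℂ) := by
  have hα0 : (α : ℂ) ≠ 0 := by exact_mod_cast hα.ne'
  rw [← tsum_mul_left]
  refine tsum_congr fun n ↦ ?_
  have hn : (n : ℂ) + 1 ≠ 0 := by exact_mod_cast n.succ_ne_zero
  rw [sum_char_exp_div hq h hev (by positivity : 0 < ((n : ℝ) + 1) * α), ← tsum_mul_left,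
    ← tsum_mul_left, ← tsum_mul_left, ← tsum_mul_left]
  refine tsum_congr fun l ↦ ?_
  rw [harmonic_inv_sq (by positivity) (by positivity)]
  push_cast
  generalize χ⁻¹ _ = c
  rw [← mul_pow (π : ℂ)]
  generalize ((π : ℂ) * (l + 1)) ^ 2 = y
  rw [div_pow, one_pow, ← pow_mul, mul_pow _ _ (2 * M)]
  field_simp
  ring

lemma tsum_char_div_exp_pos (ψ : DirichletCharacter ℂ q) {α β : ℝ} (hα : 0 < α) (hβ : 0 < β)
    (hαβ : α * β = π ^ 2) {M : ℕ} (hM : 1 ≤ M) :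
    ∑' n : ℕ, ψ ((n + 1 : ℕ) : ZMod q) /
        (((n : ℂ) + 1) ^ (2 * M + 1) * (exp (2 * ((n : ℂ) + 1) * β) - 1))
      = -1 / 2 * LFunction ψ ((2 * M + 1 : ℕ) : ℂ) +
          1 / (2 * β) * LFunction ψ ((2 * (M + 1) : ℕ) : ℂ) +
        α * π ^ (2 * M) * (-1) ^ M *
          ∑' l : ℕ, ψ ((l + 1 : ℕ) : ZMod q) * (-((1 / (π * ((l : ℝ) + 1)) ^ 2 : ℝ) : ℂ)) ^ M *
            ∑' n : ℕ, ((1 / (((n : ℝ) + 1) * α) ^ 2 * (1 / (π * ((l : ℝ) + 1)) ^ 2) /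
              (1 / (((n : ℝ) + 1) * α) ^ 2 + 1 / (π * ((l : ℝ) + 1)) ^ 2) : ℝ) : ℂ) := by
  have hα0 : (α : ℂ) ≠ 0 := by exact_mod_cast hα.ne'
  have hβ0 : (β : ℂ) ≠ 0 := by exact_mod_cast hβ.ne'
  have hπ : (π : ℂ) ≠ 0 := by exact_mod_cast Real.pi_ne_zero
  have hc : (α : ℂ) * β = π ^ 2 := by exact_mod_cast hαβ
  have h0 := (summable_char_div_exp ψ hβ (k := 2 * M + 1) (by omega)).hasSum
  have h1 := (hasSum_LFunction ψ (k := 2 * M + 1) (by omega)).mul_left (-1 / 2 : ℂ)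
  have h2 := (hasSum_LFunction ψ (k := 2 * (M + 1)) (by omega)).mul_left (1 / (2 * (β : ℂ)))
  rw [← sub_eq_iff_eq_add', ← (h0.sub (h1.add h2)).tsum_eq, ← tsum_mul_left]
  refine tsum_congr fun l ↦ ?_
  have hl : (l : ℂ) + 1 ≠ 0 := by exact_mod_cast l.succ_ne_zero
  have hs : ((-1 : ℂ) ^ M) ^ 2 = 1 := by rw [← pow_mul, mul_comm, pow_mul]; simp
  have hx : 0 < ((l : ℝ) + 1) * β := by positivity
  have h3 := one_div_exp_sub_one hx
  have h4 : ∑' n : ℕ, ((((l : ℝ) + 1) * β : ℝ) : ℂ) /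
        (((((l : ℝ) + 1) * β : ℝ) : ℂ) ^ 2 + π ^ 2 * ((n : ℂ) + 1) ^ 2)
      = ((l : ℂ) + 1) * α *
        ∑' n : ℕ, ((1 / (((n : ℝ) + 1) * α) ^ 2 * (1 / (π * ((l : ℝ) + 1)) ^ 2) /
          (1 / (((n : ℝ) + 1) * α) ^ 2 + 1 / (π * ((l : ℝ) + 1)) ^ 2) : ℝ) : ℂ) := by
    rw [← tsum_mul_left]
    refine tsum_congr fun n ↦ ?_
    rw [harmonic_inv_sq (by positivity) (by positivity)]
    have hβ' : β = π ^ 2 / α := by field_simp; linarith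
    rw [hβ']
    norm_cast
    push_cast
    have := Real.pi_pos
    field_simp
    ring
  rw [h4] at h3
  push_cast at h3
  rw [← mul_assoc 2] at h3
  rw [div_mul_eq_div_mul_one_div, h3]
  push_cast
  generalize ψ _ = c
  generalize (∑' n : ℕ, _ : ℂ) = S
  rw [neg_pow (1 / _), div_pow, one_pow, mul_pow, mul_pow, ← pow_mul, ← pow_mul]
  field_simp
  linear_combination (-2 * c * β * α * S * ((l : ℂ) + 1) ^ (4 * M + 4)) * hs

/-- The identity for a positive exponent. -/
theorem katayama_pos {χ : DirichletCharacter ℂ q} (hq : 1 < q) (h : χ.IsPrimitive)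
    (hev : χ.Even) {α β : ℝ} (hα : 0 < α) (hβ : 0 < β) (hαβ : α * β = π ^ 2)
    {M : ℕ} (hM : 1 ≤ M) :
    (α : ℂ) ^ (-(M : ℤ)) * ∑ r ∈ Finset.Icc 1 q, ∑' n : ℕ,
        χ (r : ZMod q) * exp (-((r : ℂ) / q) * (2 * ((n : ℂ) + 1)) * α) /
          (((n : ℂ) + 1) ^ (2 * (M : ℤ) + 1) * (1 - exp (-(2 * ((n : ℂ) + 1)) * α)))
      = (-(β : ℂ)) ^ (-(M : ℤ)) *
          ((q / (2 * gaussSum χ⁻¹ stdAddChar)) * LFunction χ⁻¹ (2 * ((M : ℤ) : ℂ) + 1)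
            + gaussSum χ stdAddChar * ∑' n : ℕ, χ⁻¹ ((n + 1 : ℕ) : ZMod q) /
                (((n : ℂ) + 1) ^ (2 * (M : ℤ) + 1) * (exp (2 * ((n : ℂ) + 1) * β) - 1)))
        + (-1 : ℂ) ^ (M : ℤ) * (2 : ℂ) ^ (2 * (M : ℤ)) *
            ∑ j ∈ Finset.Icc (1 : ℤ) (M + 1), ((-1 : ℂ) ^ (j + 1) / (q : ℂ) ^ (2 * j - 1)) *
              (LFunction χ (1 - 2 * (j : ℂ)) / (Nat.factorial (2 * j - 1).toNat : ℂ)) *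
              ((bernOverFact (2 * (M : ℤ) - 2 * j + 2) : ℚ) : ℂ) *
              (α : ℂ) ^ j * (β : ℂ) ^ ((M : ℤ) - j + 1) := by
  have hα0 : (α : ℂ) ≠ 0 := by exact_mod_cast hα.ne'
  have hβ0 : (β : ℂ) ≠ 0 := by exact_mod_cast hβ.ne'
  have hc : (α : ℂ) * β = π ^ 2 := by exact_mod_cast hαβ
  have hq0 : (q : ℂ) ≠ 0 := NeZero.ne _
  have hGG := gaussSum_mul_gaussSum_inv h hev
  have hG' : gaussSum χ⁻¹ stdAddChar ≠ 0 := fun h0 ↦ hq0 (by rw [← hGG, h0, mul_zero])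
  have hπ := Real.pi_pos
  have hE := tsum_harmonic_sub_tsum_harmonic (a := fun l ↦ χ⁻¹ ((l + 1 : ℕ) : ZMod q))
    (u := fun n ↦ 1 / (((n : ℝ) + 1) * α) ^ 2) (w := fun l ↦ 1 / (π * ((l : ℝ) + 1)) ^ 2)
    (fun l ↦ χ⁻¹.norm_le_one _) (fun n ↦ by positivity) (fun l ↦ by positivity)
    summable_inv_sq (by simpa only [mul_comm π] using summable_inv_sq (c := π)) hM
  have hfrac : (q : ℂ) / (2 * gaussSum χ⁻¹ stdAddChar) = gaussSum χ stdAddChar / 2 := by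
    rw [← hGG]; field_simp
  have hz : 2 * (M : ℤ) + 1 = ((2 * M + 1 : ℕ) : ℤ) := by push_cast; rfl
  rw [sum_bernoulli_terms hq h hev hα hβ hαβ, sum_tsum_char_exp χ hα, hz]
  simp only [zpow_natCast, zpow_neg]
  rw [tsum_char_exp_pos hq h hev hα, tsum_char_div_exp_pos _ hα hβ hαβ hM, hfrac,
    pow_mul (π : ℂ), ← hc, sub_eq_iff_eq_add.mp hE]
  generalize (∑ i ∈ Finset.range M, _ : ℂ) = T
  generalize (∑' l : ℕ, _ : ℂ) = Q
  have hs : ((-1 : ℂ) ^ M) ^ 2 = 1 := by rw [← pow_mul, mul_comm, pow_mul]; simp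
  have hs' : (-(β : ℂ)) ^ M = (-1) ^ M * β ^ M := neg_pow _ _
  have hs0 : (-1 : ℂ) ^ M ≠ 0 := by simp
  rw [hs']
  push_cast
  generalize gaussSum χ stdAddChar = G
  field_simp
  linear_combination (G * α ^ M * LFunction χ⁻¹ (2 * (M + 1))) * hs

end PositiveIdentity

section LatticeSummability

open Filter Asymptotics

lemma summable_pow_mul_geometric_prod (K : ℕ) {ρ : ℂ} (hρ : ‖ρ‖ < 1) :
    Summable fun p : ℕ × ℕ ↦ ((p.2 : ℂ) + 1) ^ K * ρ ^ ((p.1 + 1) * (p.2 + 1)) := by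
  have h := summable_prod_mul_pow K hρ
  rw [← (Equiv.prodCongr Equiv.pnatEquivNat Equiv.pnatEquivNat).symm.summable_iff] at h
  refine h.congr fun p ↦ ?_
  simp [Equiv.pnatEquivNat]

lemma isBigO_inv_linear (τ : ℍ) {q : ℕ} (hq : q ≠ 0) (r : ℕ) :
    (fun x : Fin 2 → ℤ ↦ (x 0 * (τ : ℂ) + ((x 1 * q + r : ℤ) : ℂ))⁻¹) =O[cofinite]
      fun x ↦ ‖x‖⁻¹ := by
  have hinj : Function.Injective fun x : Fin 2 → ℤ ↦ (![x 0, x 1 * q] : Fin 2 → ℤ) := by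
    intro x y hxy
    have h0 := congr_fun hxy 0
    have h1 := congr_fun hxy 1
    ext i
    fin_cases i
    · simpa using h0
    · simpa [hq] using h1
  have h1 := (EisensteinSeries.isBigO_linear_add_const_vec τ 0 r).comp_tendsto
    hinj.tendsto_cofinite
  refine IsBigO.trans (h1.congr_left fun x ↦ ?_) (IsBigO.of_bound 1 ?_)
  · simp [add_assoc]
  · filter_upwards [(Set.finite_singleton (0 : Fin 2 → ℤ)).compl_mem_cofinite] with x hx
    have hx0 : 0 < ‖x‖ := norm_pos_iff.mpr hx
    rw [Function.comp_apply, norm_inv, norm_inv, norm_norm, norm_norm, one_mul]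
    refine inv_anti₀ hx0 ((pi_norm_le_iff_of_nonneg (norm_nonneg _)).mpr fun i ↦ ?_)
    fin_cases i
    · exact norm_le_pi_norm (![x 0, x 1 * q] : Fin 2 → ℤ) 0
    · refine le_trans ?_ (norm_le_pi_norm (![x 0, x 1 * q] : Fin 2 → ℤ) 1)
      have : (1 : ℝ) ≤ q := by exact_mod_cast Nat.one_le_iff_ne_zero.mpr hq
      simp only [Fin.mk_one, Matrix.cons_val_one, Matrix.cons_val_fin_one, Int.norm_eq_abs]
      push_cast
      rw [abs_mul, Nat.abs_cast]
      nlinarith [abs_nonneg ((x 1 : ℤ) : ℝ)]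

lemma isBigO_inv_pow_sub_inv_pow (τ : ℍ) {q : ℕ} (hq : q ≠ 0) (r : ℕ) {K : ℕ} (hK : 1 ≤ K) :
    (fun x : Fin 2 → ℤ ↦ 1 / (x 0 * (τ : ℂ) + ((x 1 * q + r : ℤ) : ℂ)) ^ (K + 1)
        - 1 / (x 0 * (τ : ℂ) + ((x 1 * q + (0 : ℕ) : ℤ) : ℂ)) ^ (K + 1)) =O[cofinite]
      fun x ↦ (‖x‖ ^ (3 : ℝ))⁻¹ := by
  have hA := isBigO_inv_linear τ hq r
  have hB := isBigO_inv_linear τ hq 0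
  have hne (s : ℕ) : ∀ᶠ x : Fin 2 → ℤ in cofinite,
      x 0 * (τ : ℂ) + ((x 1 * q + s : ℤ) : ℂ) ≠ 0 := by
    have hinj : Function.Injective
        fun x : Fin 2 → ℤ ↦ x 0 * (τ : ℂ) + ((x 1 * q + s : ℤ) : ℂ) := by
      intro x y hxy
      have h0 : x 0 = y 0 := by simpa [τ.im_ne_zero] using congr_arg im hxy
      have h1 : x 1 = y 1 := by simpa [h0, hq] using hxy
      ext i
      fin_cases i
      exacts [h0, h1]
    exact hinj.tendsto_cofinite.eventually (Set.finite_singleton (0 : ℂ)).compl_mem_cofinite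
  set A := fun x : Fin 2 → ℤ ↦ (x 0 * (τ : ℂ) + ((x 1 * q + r : ℤ) : ℂ))⁻¹ with hAdef
  set B := fun x : Fin 2 → ℤ ↦ (x 0 * (τ : ℂ) + ((x 1 * q + (0 : ℕ) : ℤ) : ℂ))⁻¹ with hBdef
  have hsub : (fun x ↦ A x - B x) =O[cofinite] fun x ↦ ‖x‖⁻¹ * ‖x‖⁻¹ := by
    refine ((hA.mul hB).const_mul_left (-(r : ℂ))).congr' ?_ EventuallyEq.rfl
    filter_upwards [hne r, hne 0] with x ha hb
    simp only [hAdef, hBdef]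
    rw [inv_sub_inv ha hb, ← mul_inv, div_eq_mul_inv]
    congr 1
    push_cast
    ring
  have hone : ∀ᶠ x : Fin 2 → ℤ in cofinite, 1 ≤ ‖x‖ := by
    filter_upwards [(Set.finite_singleton (0 : Fin 2 → ℤ)).compl_mem_cofinite] with x hx
    obtain ⟨i, hi⟩ := Function.ne_iff.mp (show x ≠ 0 from hx)
    refine le_trans ?_ (norm_le_pi_norm x i)
    rw [Int.norm_eq_abs]
    exact_mod_cast Int.one_le_abs hi
  have hgeom : (fun x ↦ ∑ i ∈ Finset.range (K + 1), A x ^ i * B x ^ (K + 1 - 1 - i)) =O[cofinite]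
      fun x ↦ ‖x‖⁻¹ := by
    refine IsBigO.fun_sum fun i hi ↦ ((hA.pow i).mul (hB.pow (K + 1 - 1 - i))).trans
      (IsBigO.of_bound 1 ?_)
    filter_upwards [hone] with x hx
    rw [← pow_add, one_mul, norm_pow, norm_inv, norm_norm]
    refine pow_le_of_le_one (by positivity) (inv_le_one_of_one_le₀ hx) ?_
    have := Finset.mem_range.mp hi
    omega
  refine (hgeom.mul hsub).congr (fun x ↦ ?_) fun x ↦ ?_
  · rw [geom_sum₂_mul]
    simp only [hAdef, hBdef, inv_pow, one_div]
  · rw [show (3 : ℝ) = (3 : ℕ) by norm_num, Real.rpow_natCast]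
    ring

variable {q : ℕ} [NeZero q]

lemma summable_char_block {χ : DirichletCharacter ℂ q} (hq : 1 < q) (h : χ.IsPrimitive) (τ : ℍ)
    {K : ℕ} (hK : 1 ≤ K) :
    Summable fun p : ℤ × ℤ ↦ ∑ r : Fin q, χ (r : ℕ) *
      (1 / (p.1 * (τ : ℂ) + ((p.2 * q + (r : ℕ) : ℤ) : ℂ)) ^ (K + 1)) := by
  rw [← (finTwoArrowEquiv ℤ).summable_iff]
  refine EisensteinSeries.summable_of_isBigO_rpow_norm (a := 3) (by norm_num) ?_
  have h1 : (fun x : Fin 2 → ℤ ↦ ∑ r : Fin q, χ (r : ℕ) *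
      (1 / (x 0 * (τ : ℂ) + ((x 1 * q + (r : ℕ) : ℤ) : ℂ)) ^ (K + 1)
        - 1 / (x 0 * (τ : ℂ) + ((x 1 * q + (0 : ℕ) : ℤ) : ℂ)) ^ (K + 1))) =O[cofinite]
      fun x ↦ (‖x‖ ^ (3 : ℝ))⁻¹ :=
    IsBigO.fun_sum fun r _ ↦ (isBigO_inv_pow_sub_inv_pow τ (NeZero.ne q) r hK).const_mul_left _
  refine h1.congr_left fun x ↦ ?_
  simp_rw [mul_sub]
  rw [Finset.sum_sub_distrib, ← Finset.sum_mul, sum_char_eq_zero hq h, zero_mul, sub_zero]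
  rfl

end LatticeSummability

section LatticeSum

lemma summable_inv_add_pow (z : ℂ) {K : ℕ} (hK : 1 ≤ K) :
    Summable fun l : ℤ ↦ 1 / (z + l) ^ (K + 1) := by
  have := EisensteinSeries.linear_right_summable z 1 (k := ((K + 1 : ℕ) : ℤ)) (by omega)
  simpa only [Int.cast_one, one_mul, zpow_natCast, one_div] using this

/-- The Lipschitz formula, with the vanishing term dropped. -/
lemma lipschitz {z : ℂ} (hz : 0 < z.im) {K : ℕ} (hK : 1 ≤ K) :
    ∑' l : ℤ, 1 / (z + l) ^ (K + 1) = (-2 * π * I) ^ (K + 1) / (Nat.factorial K : ℂ) *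
      ∑' n : ℕ, ((n : ℂ) + 1) ^ K * exp (2 * π * I * z) ^ (n + 1) := by
  have hy1 : ‖exp (2 * π * I * z)‖ < 1 := UpperHalfPlane.norm_exp_two_pi_I_lt_one ⟨z, hz⟩
  have hs := summable_pow_mul_geometric_of_norm_lt_one K hy1
  have h := EisensteinSeries.qExpansion_identity hK ⟨z, hz⟩
  simp only at h
  rw [h, hs.tsum_eq_zero_add]
  simp [Nat.one_le_iff_ne_zero.mp hK]

lemma tsum_inv_linear_left (τ : ℍ) {K : ℕ} (hK : 1 ≤ K) (hodd : _root_.Odd K) (l : ℕ) :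
    ∑' k : ℤ, 1 / (k * (τ : ℂ) + ((l + 1 : ℕ) : ℤ)) ^ (K + 1)
      = (-2 * π * I) ^ (K + 1) / (Nat.factorial K : ℂ) / (τ : ℂ) ^ (K + 1) *
        ∑' n : ℕ, ((n : ℂ) + 1) ^ K * exp (2 * π * I * (-1 / τ)) ^ ((l + 1) * (n + 1)) := by
  have hτ : (τ : ℂ) ≠ 0 := τ.ne_zero
  have him : 0 < (((l + 1 : ℕ) : ℂ) * (-1 / (τ : ℂ))).im := by
    have h0 : 0 < (-1 / (τ : ℂ)).im := by
      rw [neg_div, one_div, ← inv_neg]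
      exact UpperHalfPlane.im_inv_neg_coe_pos τ
    rw [← ofReal_natCast, im_ofReal_mul]
    positivity
  have h1 := lipschitz him hK
  have heven : _root_.Even (K + 1) := hodd.add_one
  rw [← (Equiv.neg ℤ).tsum_eq]
  calc _ = ∑' k : ℤ, 1 / (τ : ℂ) ^ (K + 1) *
        (1 / (((l + 1 : ℕ) : ℂ) * (-1 / (τ : ℂ)) + k) ^ (K + 1)) := by
        refine tsum_congr fun k ↦ ?_
        rw [one_div_mul_one_div, ← mul_pow, ← heven.neg_pow]
        congr 2
        simp only [Equiv.neg_apply]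
        push_cast
        field_simp
        ring
    _ = _ := by
        rw [tsum_mul_left, h1, ← mul_assoc]
        congr 1
        · ring
        · refine tsum_congr fun n ↦ ?_
          rw [pow_mul, ← exp_nat_mul (2 * π * I * (-1 / τ))]
          congr 3
          ring

variable {q : ℕ} [NeZero q]

/-- The Lipschitz formula twisted by a primitive even character. -/
lemma lipschitz_char {χ : DirichletCharacter ℂ q} (h : χ.IsPrimitive) (hev : χ.Even) {z : ℂ}
    (hz : 0 < z.im) {K : ℕ} (hK : 1 ≤ K) :
    ∑' l : ℤ, χ l * (1 / (z + l) ^ (K + 1))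
      = gaussSum χ stdAddChar * ((-2 * π * I) ^ (K + 1) / (Nat.factorial K : ℂ) / q ^ (K + 1)) *
        ∑' n : ℕ, χ⁻¹ ((n + 1 : ℕ) : ZMod q) *
          (((n : ℂ) + 1) ^ K * exp (2 * π * I * (z / q)) ^ (n + 1)) := by
  have hq0 : (q : ℂ) ≠ 0 := NeZero.ne _
  have hqpos : (0 : ℝ) < q := by exact_mod_cast NeZero.pos q
  set y := exp (2 * π * I * (z / q)) with hy
  have hzq : 0 < (z / q).im := by simpa [div_natCast_im] using div_pos hz hqpos
  have hy1 : ‖y‖ < 1 := UpperHalfPlane.norm_exp_two_pi_I_lt_one ⟨z / q, hzq⟩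
  have hsy := summable_pow_mul_geometric_of_norm_lt_one K hy1
  have hg := summable_inv_add_pow z hK
  rw [tsum_int_char (χ : ZMod q → ℂ) hg (summable_char_mul χ _ hg)]
  have hterm (r : Fin q) : ∑' t : ℤ, 1 / (z + ((t * q + (r : ℕ) : ℤ) : ℂ)) ^ (K + 1)
      = (-2 * π * I) ^ (K + 1) / (Nat.factorial K : ℂ) / q ^ (K + 1) *
        ∑' n : ℕ, (n : ℂ) ^ K * (y * exp (2 * π * I * (((1 : ℤ) : ℂ) * (r : ℕ)) / q)) ^ n := by
    have h1 : 0 < ((z + (r : ℕ)) / q).im := by simpa [div_natCast_im] using div_pos hz hqpos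
    have h2 := EisensteinSeries.qExpansion_identity hK ⟨(z + (r : ℕ)) / q, h1⟩
    simp only at h2
    calc _ = ∑' t : ℤ, 1 / (q : ℂ) ^ (K + 1) * (1 / ((z + (r : ℕ)) / q + t) ^ (K + 1)) := by
          refine tsum_congr fun t ↦ ?_
          rw [one_div_mul_one_div, ← mul_pow]
          congr 2
          push_cast
          field_simp
          ring
      _ = _ := by
          rw [tsum_mul_left, h2, ← mul_assoc, hy, ← exp_add]
          congr 1
          · ring
          · refine tsum_congr fun n ↦ ?_
            congr 3
            push_cast
            ring
  simp_rw [hterm]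
  have h3 := sum_char_mul_tsum h hev (Or.inl rfl) hsy
  have h4 : ∑' n : ℕ, χ⁻¹ (n : ZMod q) * ((n : ℂ) ^ K * y ^ n)
      = ∑' n : ℕ, χ⁻¹ ((n + 1 : ℕ) : ZMod q) * (((n : ℂ) + 1) ^ K * y ^ (n + 1)) := by
    rw [(summable_char_mul χ⁻¹ _ hsy).tsum_eq_zero_add]
    simp [Nat.one_le_iff_ne_zero.mp hK]
  rw [h4] at h3
  rw [mul_right_comm (gaussSum _ _), ← h3, Finset.sum_mul]
  exact Finset.sum_congr rfl fun r _ ↦ by ring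

end LatticeSum

section Transformation

lemma tsum_int_of_even {f : ℤ → ℂ} (hf : ∀ k, f (-k) = f k) (hs : Summable f) :
    ∑' k : ℤ, f k = f 0 + 2 * ∑' n : ℕ, f (n + 1 : ℕ) := by
  rw [tsum_int_eq_zero_add_two_mul_tsum_pnat hf hs, two_nsmul, two_mul,
    tsum_pnat_eq_tsum_succ (f := fun n : ℕ ↦ f n)]

lemma inv_pow_linear_neg {z : ℂ} {K : ℕ} (hodd : _root_.Odd K) (k l : ℤ) :
    1 / (((-k : ℤ) : ℂ) * z + l) ^ (K + 1) = 1 / (k * z + ((-l : ℤ) : ℂ)) ^ (K + 1) := by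
  rw [← hodd.add_one.neg_pow]
  congr 2
  push_cast
  ring

variable {q : ℕ} [NeZero q]

/-- Summing the lattice sum of a primitive even character along rows and along columns. -/
theorem lattice_transformation {χ : DirichletCharacter ℂ q} (hq : 1 < q) (h : χ.IsPrimitive)
    (hev : χ.Even) (τ : ℍ) {K : ℕ} (hK : 1 ≤ K) (hodd : _root_.Odd K) :
    LFunction χ ((K + 1 : ℕ) : ℂ)
        + gaussSum χ stdAddChar * ((-2 * π * I) ^ (K + 1) / (Nat.factorial K : ℂ) / q ^ (K + 1)) *
          ∑' k : ℕ, ∑' n : ℕ, χ⁻¹ ((n + 1 : ℕ) : ZMod q) *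
            (((n : ℂ) + 1) ^ K * exp (2 * π * I * (τ / q)) ^ ((k + 1) * (n + 1)))
      = (-2 * π * I) ^ (K + 1) / (Nat.factorial K : ℂ) / (τ : ℂ) ^ (K + 1) *
          ∑' l : ℕ, χ ((l + 1 : ℕ) : ZMod q) *
            ∑' n : ℕ, ((n : ℂ) + 1) ^ K * exp (2 * π * I * (-1 / τ)) ^ ((l + 1) * (n + 1)) := by
  have hs := summable_char_block hq h τ hK
  have hrow (k : ℤ) : ∑' t : ℤ, ∑ r : Fin q, χ (r : ℕ) *
      (1 / (k * (τ : ℂ) + ((t * q + (r : ℕ) : ℤ) : ℂ)) ^ (K + 1))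
      = ∑' l : ℤ, χ l * (1 / (k * (τ : ℂ) + l) ^ (K + 1)) :=
    (hasSum_int_blocks (χ : ZMod q → ℂ)
      (summable_char_mul χ _ (summable_inv_add_pow (k * (τ : ℂ)) hK))).tsum_eq
  have hcolsum (l : ℤ) : Summable fun k : ℤ ↦ 1 / (k * (τ : ℂ) + l) ^ (K + 1) := by
    have := EisensteinSeries.linear_left_summable τ.ne_zero l (k := ((K + 1 : ℕ) : ℤ)) (by omega)
    simpa only [zpow_natCast, one_div] using this
  set P : ℤ → ℂ := fun l ↦ ∑' k : ℤ, 1 / (k * (τ : ℂ) + l) ^ (K + 1) with hP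
  have hPneg (l : ℤ) : P (-l) = P l := by
    simp only [hP]
    rw [← (Equiv.neg ℤ).tsum_eq]
    exact tsum_congr fun k ↦ by rw [Equiv.neg_apply, inv_pow_linear_neg hodd, neg_neg]
  have hρ : ‖exp (2 * π * I * (-1 / τ))‖ < 1 := by
    have := UpperHalfPlane.norm_exp_two_pi_I_lt_one ⟨_, UpperHalfPlane.im_inv_neg_coe_pos τ⟩
    simpa [neg_div, inv_neg] using this
  have hPs : Summable fun l : ℕ ↦ χ ((l + 1 : ℕ) : ZMod q) * P (l + 1 : ℕ) := by
    simp only [hP, tsum_inv_linear_left τ hK hodd]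
    exact summable_char_mul χ _ ((summable_pow_mul_geometric_prod K hρ).prod.mul_left _)
  have hχneg (l : ℤ) : χ ((-l : ℤ) : ZMod q) = χ l := by
    rw [Int.cast_neg, even_apply_neg hev]
  have hPs' : Summable fun l : ℤ ↦ χ l * P l := by
    have hnat : Summable fun l : ℕ ↦ χ ((l : ℤ) : ZMod q) * P l := by
      rw [← summable_nat_add_iff 1]
      exact hPs.congr fun l ↦ by simp
    exact hnat.of_nat_of_neg (by simpa only [hχneg, hPneg] using hnat)
  have hcol (t : ℤ) : ∑' k : ℤ, ∑ r : Fin q, χ (r : ℕ) *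
      (1 / (k * (τ : ℂ) + ((t * q + (r : ℕ) : ℤ) : ℂ)) ^ (K + 1))
      = ∑ r : Fin q, χ (r : ℕ) * P (t * q + r) := by
    rw [Summable.tsum_finsetSum fun r _ ↦ (hcolsum _).mul_left _]
    simp only [tsum_mul_left, hP]
  have hR : Summable fun k : ℤ ↦ ∑' l : ℤ, χ l * (1 / (k * (τ : ℂ) + l) ^ (K + 1)) :=
    hs.prod.congr hrow
  have hRneg (k : ℤ) : ∑' l : ℤ, χ l * (1 / (((-k : ℤ) : ℂ) * (τ : ℂ) + l) ^ (K + 1))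
      = ∑' l : ℤ, χ l * (1 / (k * (τ : ℂ) + l) ^ (K + 1)) := by
    rw [← (Equiv.neg ℤ).tsum_eq]
    refine tsum_congr fun l ↦ ?_
    rw [Equiv.neg_apply, inv_pow_linear_neg hodd, neg_neg, hχneg]
  have hR0 : ∑' l : ℤ, χ l * (1 / (((0 : ℤ) : ℂ) * (τ : ℂ) + l) ^ (K + 1))
      = 2 * LFunction χ ((K + 1 : ℕ) : ℂ) := by
    rw [tsum_int_of_even]
    · rw [Int.cast_zero, apply_zero hq, zero_mul, zero_add,
        ← (hasSum_LFunction χ (show 2 ≤ K + 1 by omega)).tsum_eq]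
      congr 1
      exact tsum_congr fun n ↦ by push_cast; ring
    · intro l
      rw [hχneg]
      have := inv_pow_linear_neg (z := (τ : ℂ)) hodd 0 l
      rw [neg_zero] at this
      rw [this]
    · exact summable_char_mul χ _ (summable_inv_add_pow _ hK)
  have hRk (k : ℕ) : ∑' l : ℤ, χ l * (1 / ((((k + 1 : ℕ) : ℤ) : ℂ) * (τ : ℂ) + l) ^ (K + 1))
      = gaussSum χ stdAddChar * ((-2 * π * I) ^ (K + 1) / (Nat.factorial K : ℂ) / q ^ (K + 1)) *
          ∑' n : ℕ, χ⁻¹ ((n + 1 : ℕ) : ZMod q) *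
            (((n : ℂ) + 1) ^ K * exp (2 * π * I * (τ / q)) ^ ((k + 1) * (n + 1))) := by
    have him : 0 < ((((k + 1 : ℕ) : ℤ) : ℂ) * (τ : ℂ)).im := by
      rw [Int.cast_natCast, ← ofReal_natCast, im_ofReal_mul]
      exact mul_pos (by positivity) τ.im_pos
    rw [lipschitz_char h hev him hK]
    congr 1
    refine tsum_congr fun n ↦ ?_
    rw [pow_mul, ← exp_nat_mul (2 * π * I * (τ / q))]
    congr 4
    push_cast
    ring
  have hmain : ∑' k : ℤ, ∑' l : ℤ, χ l * (1 / (k * (τ : ℂ) + l) ^ (K + 1))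
      = ∑' l : ℤ, χ l * P l := by
    rw [← (hasSum_int_blocks (χ : ZMod q → ℂ) hPs').tsum_eq]
    rw [← tsum_congr hrow, ← tsum_congr hcol]
    exact Summable.tsum_comm (f := fun t k : ℤ ↦ ∑ r : Fin q, χ (r : ℕ) *
      (1 / (k * (τ : ℂ) + ((t * q + (r : ℕ) : ℤ) : ℂ)) ^ (K + 1)))
      (hs.prod_symm.congr fun _ ↦ rfl)
  have hcols := tsum_int_of_even (f := fun l ↦ χ l * P l)
    (fun l ↦ by simp only [hχneg, hPneg]) hPs'
  simp only [Int.cast_zero, apply_zero hq, zero_mul, zero_add] at hcols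
  have hrows := tsum_int_of_even hRneg hR
  rw [hR0, ← mul_add] at hrows
  rw [hrows, hcols] at hmain
  have hmain := mul_left_cancel₀ two_ne_zero hmain
  simp_rw [hRk, tsum_mul_left] at hmain
  rw [hmain, ← tsum_mul_left]
  refine tsum_congr fun l ↦ ?_
  simp only [hP]
  rw [tsum_inv_linear_left τ hK hodd]
  push_cast
  ring

end Transformation

section NegativeIdentity

lemma norm_pow_succ_lt_one {y : ℂ} (hy : ‖y‖ < 1) (n : ℕ) : ‖y ^ (n + 1)‖ < 1 := by
  rw [norm_pow]
  exact pow_lt_one₀ (norm_nonneg _) hy n.succ_ne_zero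

variable {q : ℕ}

lemma tsum_tsum_char_mul_pow (χ : DirichletCharacter ℂ q) (K : ℕ) {y : ℂ} (hy : ‖y‖ < 1) :
    ∑' k : ℕ, ∑' n : ℕ, χ ((n + 1 : ℕ) : ZMod q) *
        (((n : ℂ) + 1) ^ K * y ^ ((k + 1) * (n + 1)))
      = ∑' n : ℕ, χ ((n + 1 : ℕ) : ZMod q) *
          (((n : ℂ) + 1) ^ K * (y ^ (n + 1) / (1 - y ^ (n + 1)))) := by
  have hs := summable_char_mul χ (fun p : ℕ × ℕ ↦ ((p.2 + 1 : ℕ) : ZMod q))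
    (summable_pow_mul_geometric_prod K hy)
  rw [Summable.tsum_comm (f := fun n k : ℕ ↦ χ ((n + 1 : ℕ) : ZMod q) *
    (((n : ℂ) + 1) ^ K * y ^ ((k + 1) * (n + 1)))) (hs.prod_symm.congr fun _ ↦ rfl)]
  refine tsum_congr fun n ↦ ?_
  rw [tsum_mul_left, tsum_mul_left, div_eq_mul_inv,
    ← tsum_geometric_of_norm_lt_one (norm_pow_succ_lt_one hy n),
    ← tsum_mul_left (a := y ^ (n + 1))]
  congr 2
  refine tsum_congr fun k ↦ ?_
  rw [← pow_mul]
  ring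

variable [NeZero q]

lemma tsum_char_mul_tsum_pow (hq : 1 < q) (χ : DirichletCharacter ℂ q) (K : ℕ) {y : ℂ}
    (hy : ‖y‖ < 1) :
    ∑' l : ℕ, χ ((l + 1 : ℕ) : ZMod q) * ∑' n : ℕ, ((n : ℂ) + 1) ^ K * y ^ ((l + 1) * (n + 1))
      = ∑' n : ℕ, ((n : ℂ) + 1) ^ K * ∑ r ∈ Finset.Icc 1 q,
          χ (r : ZMod q) * (y ^ (n + 1)) ^ r / (1 - (y ^ (n + 1)) ^ q) := by
  have hs := summable_char_mul χ (fun p : ℕ × ℕ ↦ ((p.1 + 1 : ℕ) : ZMod q))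
    (summable_pow_mul_geometric_prod K hy)
  simp_rw [← tsum_mul_left]
  rw [Summable.tsum_comm (f := fun n l : ℕ ↦ χ ((l + 1 : ℕ) : ZMod q) *
    (((n : ℂ) + 1) ^ K * y ^ ((l + 1) * (n + 1)))) (hs.prod_symm.congr fun _ ↦ rfl)]
  refine tsum_congr fun n ↦ ?_
  have hyn := norm_pow_succ_lt_one hy n
  rw [← tsum_char_mul_pow hq χ hyn, (summable_char_mul χ _
    (summable_geometric_of_norm_lt_one hyn)).tsum_eq_zero_add, Nat.cast_zero, apply_zero hq,
    zero_mul, zero_add, ← tsum_mul_left]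
  refine tsum_congr fun l ↦ ?_
  rw [← pow_mul]
  ring

/-- The identity for a negative exponent. -/
theorem katayama_neg {χ : DirichletCharacter ℂ q} (hq : 1 < q) (h : χ.IsPrimitive)
    (hev : χ.Even) {α β : ℝ} (hα : 0 < α) (hβ : 0 < β) (hαβ : α * β = π ^ 2)
    {M : ℕ} (hM : 1 ≤ M) :
    (α : ℂ) ^ M * ∑ r ∈ Finset.Icc 1 q, ∑' n : ℕ,
        χ (r : ZMod q) * exp (-((r : ℂ) / q) * (2 * ((n : ℂ) + 1)) * α) /
          (((n : ℂ) + 1) ^ (2 * -(M : ℤ) + 1) * (1 - exp (-(2 * ((n : ℂ) + 1)) * α)))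
      = (-(β : ℂ)) ^ M *
          ((q / (2 * gaussSum χ⁻¹ stdAddChar)) * LFunction χ⁻¹ (1 - 2 * (M : ℂ))
            + gaussSum χ stdAddChar * ∑' n : ℕ, χ⁻¹ ((n + 1 : ℕ) : ZMod q) /
                (((n : ℂ) + 1) ^ (2 * -(M : ℤ) + 1) * (exp (2 * ((n : ℂ) + 1) * β) - 1))) := by
  have hα0 : (α : ℂ) ≠ 0 := by exact_mod_cast hα.ne'
  have hβ0 : (β : ℂ) ≠ 0 := by exact_mod_cast hβ.ne'
  have hc : (α : ℂ) * β = π ^ 2 := by exact_mod_cast hαβ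
  have hπ0 : (π : ℂ) ≠ 0 := by exact_mod_cast Real.pi_ne_zero
  have hq0 : (q : ℂ) ≠ 0 := NeZero.ne _
  have hqpos : (0 : ℝ) < q := by exact_mod_cast NeZero.pos q
  have hGG := gaussSum_mul_gaussSum_inv h hev
  have hG' : gaussSum χ⁻¹ stdAddChar ≠ 0 := fun h0 ↦ hq0 (by rw [← hGG, h0, mul_zero])
  obtain ⟨N, rfl⟩ : ∃ N, M = N + 1 := ⟨M - 1, by omega⟩
  have hzpow (n : ℕ) : ((n : ℂ) + 1) ^ (2 * -((N + 1 : ℕ) : ℤ) + 1)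
      = (((n : ℂ) + 1) ^ (2 * N + 1))⁻¹ := by
    rw [← zpow_natCast, ← zpow_neg]
    congr 1
  let τ : ℍ := ⟨(q * β / π : ℝ) * I, by
    rw [im_ofReal_mul, I_im, mul_one]
    exact div_pos (mul_pos hqpos hβ) Real.pi_pos⟩
  have hτ : (τ : ℂ) = q * β / π * I := by simp [τ]
  have hρ : exp (2 * π * I * (τ / q)) = exp (-(2 * β)) := by
    congr 1
    rw [hτ]
    field_simp
    rw [I_sq]
  have hρ' : exp (2 * π * I * (-1 / τ)) = exp (-(2 * α / q)) := by
    congr 1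
    rw [hτ]
    field_simp
    linear_combination hc
  have hnorm (x : ℝ) (hx : 0 < x) : ‖exp (-(x : ℂ))‖ < 1 := by
    rw [← ofReal_neg, norm_exp_ofReal, Real.exp_lt_one_iff]
    linarith
  have hy : ‖exp (-(2 * (β : ℂ)))‖ < 1 := by
    exact_mod_cast hnorm (2 * β) (by positivity)
  have hy' : ‖exp (-(2 * (α : ℂ) / q))‖ < 1 := by
    exact_mod_cast hnorm (2 * α / q) (by positivity)
  have key := lattice_transformation hq h hev τ (K := 2 * N + 1) (by omega) (odd_two_mul_add_one N)
  rw [hρ, hρ', tsum_char_mul_tsum_pow hq χ _ hy', tsum_tsum_char_mul_pow χ⁻¹ _ hy] at key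
  have hS : ∑' n : ℕ, ((n : ℂ) + 1) ^ (2 * N + 1) * ∑ r ∈ Finset.Icc 1 q,
        χ (r : ZMod q) * (exp (-(2 * (α : ℂ) / q)) ^ (n + 1)) ^ r /
          (1 - (exp (-(2 * (α : ℂ) / q)) ^ (n + 1)) ^ q)
      = ∑ r ∈ Finset.Icc 1 q, ∑' n : ℕ,
        χ (r : ZMod q) * exp (-((r : ℂ) / q) * (2 * ((n : ℂ) + 1)) * α) /
          (((n : ℂ) + 1) ^ (2 * -((N + 1 : ℕ) : ℤ) + 1) *
            (1 - exp (-(2 * ((n : ℂ) + 1)) * α))) := by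
    rw [sum_tsum_char_exp χ hα]
    refine tsum_congr fun n ↦ ?_
    rw [hzpow, inv_inv]
    congr 1
    refine Finset.sum_congr rfl fun r _ ↦ ?_
    simp_rw [← exp_nat_mul]
    have h1 : (r : ℂ) * (((n + 1 : ℕ) : ℂ) * -(2 * (α : ℂ) / q))
        = -((r : ℂ) / q) * (2 * ((((n : ℝ) + 1) * α : ℝ) : ℂ)) := by
      push_cast
      ring
    have h2 : (q : ℂ) * (((n + 1 : ℕ) : ℂ) * -(2 * (α : ℂ) / q))
        = -(2 * ((((n : ℝ) + 1) * α : ℝ) : ℂ)) := by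
      push_cast
      field_simp
    rw [h1, h2]
  have hT : ∑' n : ℕ, χ⁻¹ ((n + 1 : ℕ) : ZMod q) * (((n : ℂ) + 1) ^ (2 * N + 1) *
        (exp (-(2 * (β : ℂ))) ^ (n + 1) / (1 - exp (-(2 * (β : ℂ))) ^ (n + 1))))
      = ∑' n : ℕ, χ⁻¹ ((n + 1 : ℕ) : ZMod q) /
          (((n : ℂ) + 1) ^ (2 * -((N + 1 : ℕ) : ℤ) + 1) * (exp (2 * ((n : ℂ) + 1) * β) - 1)) := by
    refine tsum_congr fun n ↦ ?_
    have h1 : exp (-(2 * (β : ℂ))) ^ (n + 1) = (exp (2 * ((n : ℂ) + 1) * β))⁻¹ := by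
      rw [← exp_nat_mul, ← exp_neg]
      congr 1
      push_cast
      ring
    have h2 : exp (2 * ((n : ℂ) + 1) * β) ≠ 0 := exp_ne_zero _
    have h3 : (exp (2 * ((n : ℂ) + 1) * β))⁻¹ / (1 - (exp (2 * ((n : ℂ) + 1) * β))⁻¹)
        = (exp (2 * ((n : ℂ) + 1) * β) - 1)⁻¹ := by
      rw [div_eq_mul_inv, ← mul_inv, mul_sub, mul_one, mul_inv_cancel₀ h2]
    rw [hzpow, h1, h3, div_eq_mul_inv, mul_inv, inv_inv]
  rw [hS, hT] at key
  have hL := LFunction_one_sub_two_mul (χ := χ⁻¹) hq (isPrimitive_inv h) (even_inv hev) hM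
  rw [inv_inv] at hL
  have hF : ((2 * N + 1).factorial : ℂ) ≠ 0 := by exact_mod_cast (2 * N + 1).factorial_ne_zero
  have hC : (-2 * π * I) ^ (2 * N + 1 + 1) = (-1) ^ (N + 1) * (2 * π : ℂ) ^ (2 * N + 1 + 1) := by
    rw [show 2 * N + 1 + 1 = 2 * (N + 1) by ring, pow_mul, pow_mul, ← mul_pow]
    congr 1
    linear_combination (4 * (π : ℂ) ^ 2) * I_sq
  have hτpow : (τ : ℂ) ^ (2 * N + 1 + 1)
      = (-1) ^ (N + 1) * (q ^ (2 * N + 1 + 1) * (β : ℂ) ^ (N + 1) / (α : ℂ) ^ (N + 1)) := by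
    rw [show 2 * N + 1 + 1 = 2 * (N + 1) by ring, pow_mul, pow_mul, ← mul_pow, ← div_pow,
      ← mul_pow, hτ]
    congr 1
    field_simp
    linear_combination (α * β : ℂ) * I_sq - hc
  have he : ((-1 : ℂ) ^ (N + 1)) ^ 2 = 1 := by rw [← pow_mul, mul_comm, pow_mul]; simp
  have hz : (2 * π : ℂ) ^ (-(2 * (N + 1 : ℕ) : ℤ)) = ((2 * π : ℂ) ^ (2 * N + 1 + 1))⁻¹ := by
    rw [← zpow_natCast, ← zpow_neg]
    congr 1
  rw [hC, hτpow] at key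
  rw [hL, hz, show 2 * (N + 1) - 1 = 2 * N + 1 by omega, neg_pow (β : ℂ)]
  rw [show (2 * ((N + 1 : ℕ) : ℂ)) = ((2 * N + 1 + 1 : ℕ) : ℂ) by push_cast; ring]
  generalize (∑ r ∈ Finset.Icc 1 q, (_ : ℂ)) = S at key ⊢
  generalize (∑' n : ℕ, (_ : ℂ)) = T at key ⊢
  have he0 : (-1 : ℂ) ^ (N + 1) ≠ 0 := by simp
  have hw0 : (2 * π : ℂ) ^ (2 * N + 1 + 1) ≠ 0 := by simp [hπ0]
  generalize (2 * π : ℂ) ^ (2 * N + 1 + 1) = w at key hw0 ⊢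
  generalize (-1 : ℂ) ^ (N + 1) = e at key he he0 ⊢
  generalize ((2 * N + 1).factorial : ℂ) = F at key hF ⊢
  have hS : (α : ℂ) ^ (N + 1) * S = (β : ℂ) ^ (N + 1) * F * q ^ (2 * N + 1 + 1) / w *
      (e * w / F / (e * (q ^ (2 * N + 1 + 1) * (β : ℂ) ^ (N + 1) / (α : ℂ) ^ (N + 1))) * S) := by
    field_simp
  rw [hS, ← key]
  field_simp
  linear_combination -(F * q ^ (2 * N + 1 + 1) * LFunction χ ((2 * N + 1 + 1 : ℕ) : ℂ)) * he

end NegativeIdentity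

end Katayama

theorem stmt2 (q : ℕ) [NeZero q] (hq : 1 < q)
    (χ : DirichletCharacter ℂ q) (hprim : χ.IsPrimitive) (hev : χ.Even)
    (α β : ℝ) (hα : 0 < α) (hβ : 0 < β) (hαβ : α * β = Real.pi ^ 2)
    (m : ℤ) (hm : m ≠ 0) :
    ((α : ℂ)) ^ (-m) *
      ∑ r ∈ Finset.Icc 1 q, ∑' n : ℕ,
        χ (r : ZMod q) * Complex.exp (-((r : ℂ) / q) * (2 * ((n : ℂ) + 1)) * α) /
          (((n : ℂ) + 1) ^ (2 * m + 1) * (1 - Complex.exp (-(2 * ((n : ℂ) + 1)) * α)))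
    = (-(β : ℂ)) ^ (-m) *
        ((q / (2 * gaussSum' (conjChar χ))) *
            DirichletCharacter.LFunction (conjChar χ) (2 * (m : ℂ) + 1)
          + gaussSum' χ *
              ∑' n : ℕ, (starRingEnd ℂ) (χ ((n + 1 : ℕ) : ZMod q)) /
                (((n : ℂ) + 1) ^ (2 * m + 1) *
                  (Complex.exp (2 * ((n : ℂ) + 1) * β) - 1)))
      + (-1 : ℂ) ^ m * (2 : ℂ) ^ (2 * m) *
          ∑ j ∈ Finset.Icc (1 : ℤ) (m + 1),
            ((-1 : ℂ) ^ (j + 1) / (q : ℂ) ^ (2 * j - 1)) *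
              (DirichletCharacter.LFunction χ (1 - 2 * (j : ℂ)) /
                (Nat.factorial (2 * j - 1).toNat : ℂ)) *
              ((bernOverFact (2 * m - 2 * j + 2) : ℚ) : ℂ) *
              ((α : ℂ)) ^ j * ((β : ℂ)) ^ (m - j + 1) := by
  have hstar (a : ZMod q) : (starRingEnd ℂ) (χ a) = χ⁻¹ a := MulChar.star_apply' χ a
  simp only [Katayama.conjChar_eq_inv, Katayama.gaussSum'_eq, hstar]
  rcases lt_or_gt_of_ne hm with hneg | hpos
  · obtain ⟨M, rfl⟩ : ∃ M : ℕ, m = -(M : ℤ) := ⟨m.natAbs, by omega⟩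
    have hM : 1 ≤ M := by omega
    have hs : (2 * ((-(M : ℤ) : ℤ) : ℂ) + 1) = 1 - 2 * (M : ℂ) := by
      push_cast
      ring
    rw [Finset.Icc_eq_empty (show ¬(1 : ℤ) ≤ -(M : ℤ) + 1 by omega), Finset.sum_empty, mul_zero,
      add_zero, neg_neg, zpow_natCast, zpow_natCast, hs]
    exact Katayama.katayama_neg hq hprim hev hα hβ hαβ hM
  · lift m to ℕ using hpos.le with M
    exact Katayama.katayama_pos hq hprim hev hα hβ hαβ (by omega)
end

section
/- Let χ₅ be the even primitive Dirichlet character modulo 5 (the quadratic character, with χ₅(1)=χ₅(4)=1 and χ₅(2)=χ₅(3)=−1). Let α, β > 0 satisfy α³·β = 2π⁴. Then Σ_{r=1}^{5} Σ_{n=1}^{∞} χ₅(r)·n·e^{−(r/5)(nα)³} / (1 − e^{−(nα)³}) = (G(χ₅)/3)·(2π/α³)^{2/3}·( L(1/3, χ₅) + Σ_{m=1}^{∞} (χ₅(m)/m^{1/3})·( e^{−(mβ)^{1/3}} / (2·sinh((mβ)^{1/3})) + ( cos(√3·(mβ)^{1/3} + π/3) − e^{−(mβ)^{1/3}}/2 )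 / ( cosh((mβ)^{1/3}) − cos(√3·(mβ)^{1/3}) ) ) ). -/
open Complex Filter Topology

/-- The sum of `f` over the block `5k + 1, …, 5k + 4`, weighted by the quadratic character
modulo `5`. -/
def quadraticBlock {R : Type*} [AddCommGroup R] (f : ℕ → R) (k : ℕ) : R :=
  f (5 * k + 1) - f (5 * k + 2) - f (5 * k + 3) + f (5 * k + 4)

/-- An absolutely convergent series twisted by the quadratic character modulo `5` may be summed
block by block. -/
lemma hasSum_quadraticBlock (χ : DirichletCharacter ℂ 5)
    (h1 : χ (1 : ZMod 5) = 1) (h2 : χ (2 : ZMod 5) = -1)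
    (h3 : χ (3 : ZMod 5) = -1) (h4 : χ (4 : ZMod 5) = 1) {f : ℕ → ℂ}
    (hf : Summable fun m : ℕ ↦ χ (m : ZMod 5) * f m) :
    HasSum (quadraticBlock f) (∑' m : ℕ, χ (m : ZMod 5) * f m) := by
  have h0 : χ (0 : ZMod 5) = 0 := χ.map_nonunit (by decide)
  have h := (Nat.divModEquiv 5).symm.hasSum_iff.mpr hf.hasSum
  have h' := h.prod_fiberwise (fun k ↦ hasSum_fintype _)
  have h5 (k : ℕ) : (5 * k : ZMod 5) = 0 := by
    rw [show (5 : ZMod 5) = 0 from rfl, zero_mul]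
  convert h' using 1
  funext k
  simp [Fin.sum_univ_five, quadraticBlock, Nat.divModEquiv, h0, mul_comm k 5, h5, h1, h2, h3, h4]
  ring

/-- The difference of consecutive terms of a Dirichlet series. -/
lemma norm_cpow_neg_sub_cpow_neg_succ_le {s : ℂ} (hs : 0 < s.re) {m : ℕ} (hm : 0 < m) :
    ‖(m : ℂ) ^ (-s) - ((m + 1 : ℕ) : ℂ) ^ (-s)‖ ≤ ‖s‖ * (m : ℝ) ^ (-s.re - 1) := by
  have hs0 : -s ≠ 0 := by
    intro h
    simp [neg_eq_zero.mp h] at hs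
  have hm' : (0 : ℝ) < m := by exact_mod_cast hm
  have key := (convex_Icc (m : ℝ) (m + 1)).norm_image_sub_le_of_norm_hasDerivWithin_le
    (f := fun x : ℝ ↦ (x : ℂ) ^ (-s)) (f' := fun x : ℝ ↦ -s * (x : ℂ) ^ (-s - 1))
    (C := ‖s‖ * (m : ℝ) ^ (-s.re - 1)) (x := (m : ℝ) + 1) (y := m)
    (fun x hx ↦ (hasDerivAt_ofReal_cpow_const (hm'.trans_le hx.1).ne' hs0).hasDerivWithinAt)
    (fun x hx ↦ by
      rw [norm_mul, norm_neg, norm_cpow_eq_rpow_re_of_pos (hm'.trans_le hx.1)]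
      gcongr ?_ * ?_
      simp only [sub_re, neg_re, one_re]
      exact Real.rpow_le_rpow_of_nonpos hm' hx.1 (by linarith))
    (by simp) (by simp)
  simpa using key

/-- The `L`-function of the quadratic character modulo `5` at `1/3`, as a conditionally convergent
Dirichlet series. -/
lemma hasSum_quadraticBlock_cpow (χ : DirichletCharacter ℂ 5)
    (h1 : χ (1 : ZMod 5) = 1) (h2 : χ (2 : ZMod 5) = -1)
    (h3 : χ (3 : ZMod 5) = -1) (h4 : χ (4 : ZMod 5) = 1) :
    HasSum (quadraticBlock fun m : ℕ ↦ (m : ℂ) ^ (-(1 / 3 : ℂ))) (χ.LFunction (1 / 3)) := by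
  have hχ : χ ≠ 1 := by
    rintro rfl
    have : IsUnit (2 : ZMod 5) := by decide
    rw [MulChar.one_apply this] at h2
    norm_num at h2
  set U : Set ℂ := Metric.ball 1 (3 / 4)
  have hU (s : ℂ) (hs : s ∈ U) : 1 / 4 < s.re ∧ ‖s‖ ≤ 2 := by
    have hs' : ‖s - 1‖ < 3 / 4 := by simpa [U, dist_eq_norm] using hs
    have hre := (abs_re_le_norm (s - 1)).trans_lt hs'
    have hn := norm_sub_norm_le s 1
    rw [abs_lt] at hre
    simp only [sub_re, one_re, norm_one] at hre hn
    constructor <;> linarith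
  set F : ℕ → ℂ → ℂ := fun k s ↦ quadraticBlock (fun m : ℕ ↦ (m : ℂ) ^ (-s)) k
  have hdiff (s : ℂ) (hs : s ∈ U) (k j : ℕ) (hj : 0 < j) :
      ‖((5 * k + j : ℕ) : ℂ) ^ (-s) - ((5 * k + j + 1 : ℕ) : ℂ) ^ (-s)‖
        ≤ 2 * ((k + 1 : ℕ) : ℝ) ^ (-(5 / 4) : ℝ) := by
    obtain ⟨hre, hn⟩ := hU s hs
    refine (norm_cpow_neg_sub_cpow_neg_succ_le (by linarith) (by omega)).trans ?_
    have hle : ((k + 1 : ℕ) : ℝ) ≤ ((5 * k + j : ℕ) : ℝ) := by exact_mod_cast by omega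
    have hk : (0 : ℝ) < ((k + 1 : ℕ) : ℝ) := by positivity
    have h1' : (1 : ℝ) ≤ ((k + 1 : ℕ) : ℝ) := by simp
    gcongr
    calc ((5 * k + j : ℕ) : ℝ) ^ (-s.re - 1) ≤ ((k + 1 : ℕ) : ℝ) ^ (-s.re - 1) :=
          Real.rpow_le_rpow_of_nonpos hk hle (by linarith)
      _ ≤ _ := Real.rpow_le_rpow_of_exponent_le h1' (by linarith)
  have hbound (k : ℕ) (s : ℂ) (hs : s ∈ U) :
      ‖F k s‖ ≤ 4 * ((k + 1 : ℕ) : ℝ) ^ (-(5 / 4) : ℝ) := by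
    have ha := hdiff s hs k 1 one_pos
    have hb := hdiff s hs k 3 (by norm_num)
    have : F k s = (((5 * k + 1 : ℕ) : ℂ) ^ (-s) - ((5 * k + 1 + 1 : ℕ) : ℂ) ^ (-s))
        - (((5 * k + 3 : ℕ) : ℂ) ^ (-s) - ((5 * k + 3 + 1 : ℕ) : ℂ) ^ (-s)) := by
      simp only [F, quadraticBlock, add_assoc, Nat.reduceAdd]
      ring
    rw [this]
    refine (norm_sub_le _ _).trans ?_
    linarith
  have hsum : Summable fun k : ℕ ↦ 4 * ((k + 1 : ℕ) : ℝ) ^ (-(5 / 4) : ℝ) :=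
    ((summable_nat_add_iff 1).mpr (Real.summable_nat_rpow.mpr (by norm_num))).mul_left 4
  have hF : DifferentiableOn ℂ (fun s ↦ ∑' k, F k s) U := by
    refine differentiableOn_tsum_of_summable_norm hsum (fun k ↦ ?_) Metric.isOpen_ball hbound
    have hpow (j : ℕ) (hj : 0 < j) : Differentiable ℂ fun s : ℂ ↦ ((5 * k + j : ℕ) : ℂ) ^ (-s) :=
      fun s ↦ differentiableAt_id.neg.const_cpow (Or.inl (by exact_mod_cast by omega))
    exact ((((hpow 1 (by norm_num)).sub (hpow 2 (by norm_num))).sub (hpow 3 (by norm_num))).add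
      (hpow 4 (by norm_num))).differentiableOn
  have hmem : (3 / 2 : ℂ) ∈ U := by
    simp only [U, Metric.mem_ball, dist_eq_norm]
    norm_num
  have hmem' : (1 / 3 : ℂ) ∈ U := by
    simp only [U, Metric.mem_ball, dist_eq_norm]
    norm_num
  have heq : (fun s ↦ ∑' k, F k s) =ᶠ[𝓝 (3 / 2)] χ.LFunction := by
    have : {s : ℂ | 1 < s.re} ∈ 𝓝 (3 / 2 : ℂ) :=
      (isOpen_lt continuous_const continuous_re).mem_nhds (by norm_num)
    filter_upwards [this] with s hs
    rw [χ.LFunction_eq_LSeries hs, LSeries]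
    have hterm (m : ℕ) : LSeries.term (fun m ↦ χ m) s m = χ (m : ZMod 5) * (m : ℂ) ^ (-s) := by
      rw [LSeries.term_def₀ (by simpa using χ.map_nonunit (by decide))]
    simp_rw [hterm]
    refine (hasSum_quadraticBlock χ h1 h2 h3 h4 ?_).tsum_eq
    exact (χ.LSeriesSummable_of_one_lt_re hs).congr hterm
  have key := (hF.analyticOnNhd Metric.isOpen_ball).eqOn_of_preconnected_of_eventuallyEq
    ((χ.differentiable_LFunction hχ).differentiableOn.analyticOnNhd Metric.isOpen_ball)
    (convex_ball _ _).isPreconnected hmem heq hmem'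
  rw [← key]
  exact (Summable.of_norm_bounded hsum fun k ↦ hbound k _ hmem').hasSum

/-- For functions decreasing to `0` the blocks are summable over both variables. -/
lemma summable_quadraticBlock_of_antitone {g : ℕ → ℕ → ℝ} (hanti : ∀ n, Antitone (g n))
    (hlim : ∀ n, Tendsto (g n) atTop (𝓝 0)) (hsum : Summable fun n ↦ g n 1) :
    Summable fun p : ℕ × ℕ ↦ quadraticBlock (g p.1) p.2 := by
  have hnonneg (n k : ℕ) : 0 ≤ g n (5 * k + 1) - g n (5 * (k + 1) + 1) :=
    sub_nonneg.mpr (hanti n (by omega))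
  have hrow (n : ℕ) : HasSum (fun k ↦ g n (5 * k + 1) - g n (5 * (k + 1) + 1)) (g n 1) := by
    rw [hasSum_iff_tendsto_nat_of_nonneg (hnonneg n)]
    simp_rw [Finset.sum_range_sub' (fun k ↦ g n (5 * k + 1))]
    have : Tendsto (fun k ↦ 5 * k + 1) atTop atTop :=
      tendsto_atTop_mono (fun k ↦ show k ≤ 5 * k + 1 by omega) tendsto_id
    simpa using ((hlim n).comp this).const_sub (g n 1)
  have hbig : Summable fun p : ℕ × ℕ ↦ g p.1 (5 * p.2 + 1) - g p.1 (5 * (p.2 + 1) + 1) := by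
    rw [summable_prod_of_nonneg fun p ↦ hnonneg p.1 p.2]
    exact ⟨fun n ↦ (hrow n).summable, by simpa only [(hrow _).tsum_eq] using hsum⟩
  refine Summable.of_norm_bounded hbig fun ⟨n, k⟩ ↦ ?_
  have e1 := hanti n (show 5 * k + 1 ≤ 5 * k + 2 by omega)
  have e2 := hanti n (show 5 * k + 2 ≤ 5 * k + 3 by omega)
  have e3 := hanti n (show 5 * k + 3 ≤ 5 * k + 4 by omega)
  have e4 := hanti n (show 5 * k + 4 ≤ 5 * (k + 1) + 1 by omega)
  rw [Real.norm_eq_abs, abs_le]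
  simp only [quadraticBlock]
  constructor <;> linarith

/-- The symmetric pair of terms in the partial fraction expansion of `π cot (π z)`. -/
noncomputable def cotPair (z : ℂ) (m : ℕ) : ℂ :=
  1 / (z - m) + 1 / (z + m)

lemma mem_integerComplement_of_im_pos {z : ℂ} (hz : 0 < z.im) : z ∈ integerComplement := by
  rw [mem_integerComplement_iff]
  rintro ⟨n, rfl⟩
  simp at hz

lemma hasSum_cotPair_succ {z : ℂ} (hz : 0 < z.im) :
    HasSum (fun n : ℕ ↦ cotPair z (n + 1)) (Real.pi * cot (Real.pi * z) - 1 / z) := by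
  have hz' := mem_integerComplement_of_im_pos hz
  rw [cot_series_rep' hz']
  have h := (summable_cotTerm hz').hasSum
  simpa [cotPair, cotTerm] using h

/-- The partial fraction expansion along the residue classes `± j` modulo `5`. -/
lemma hasSum_cotPair_residues {z : ℂ} (hz : 0 < z.im) {j : ℕ} (hj : 0 < j) (hj5 : j < 5) :
    HasSum (fun k : ℕ ↦ cotPair z (5 * k + j) + cotPair z (5 * k + (5 - j)))
      (Real.pi / 5 * (cot (Real.pi * ((z - j) / 5)) + cot (Real.pi * ((z + j) / 5)))) := by
  have hne (m : ℤ) : z + m ≠ 0 :=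
    integerComplement_add_ne_zero (mem_integerComplement_of_im_pos hz) m
  have hu : 0 < ((z - j) / 5).im := by
    simpa [Complex.div_ofNat_im] using hz
  have hv : 0 < ((z + j) / 5).im := by
    simpa [Complex.div_ofNat_im] using hz
  have hA : Summable fun k : ℕ ↦ cotPair z (5 * k + j) := by
    have h := (hasSum_cotPair_succ hz).summable.comp_injective
      (i := fun k : ℕ ↦ 5 * k + (j - 1)) (fun a b hab ↦ by simp only at hab; omega)
    refine h.congr fun k ↦ ?_
    simp only [Function.comp]
    congr 1
    omega
  have hA' := (hasSum_nat_add_iff' 1).mpr hA.hasSum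
  have hC := ((hasSum_cotPair_succ hu).add (hasSum_cotPair_succ hv)).mul_left (1 / 5 : ℂ)
  have hterm (n : ℕ) : 1 / 5 * (cotPair ((z - j) / 5) (n + 1) + cotPair ((z + j) / 5) (n + 1))
      - cotPair z (5 * (n + 1) + j) = cotPair z (5 * n + (5 - j)) := by
    have e1 := hne (5 * (n + 1) + j)
    have e2 := hne (5 * (n + 1) - j)
    have e3 := hne (-(5 * (n + 1) + j))
    have e4 := hne (-(5 * (n + 1) - j))
    push_cast at e1 e2 e3 e4
    have a1 : (z - j) / 5 - (n + 1) = (z + -(5 * (n + 1) + j)) / 5 := by ring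
    have a2 : (z - j) / 5 + (n + 1) = (z + (5 * (n + 1) - j)) / 5 := by ring
    have a3 : (z + j) / 5 - (n + 1) = (z + -(5 * (n + 1) - j)) / 5 := by ring
    have a4 : (z + j) / 5 + (n + 1) = (z + (5 * (n + 1) + j)) / 5 := by ring
    simp only [cotPair]
    push_cast [Nat.cast_sub hj5.le]
    rw [a1, a2, a3, a4, show z - (5 * (n + 1) + j : ℂ) = z + -(5 * (n + 1) + j) by ring,
      show z - (5 * n + (5 - j) : ℂ) = z + -(5 * (n + 1) - j) by ring,
      show z + (5 * n + (5 - j) : ℂ) = z + (5 * (n + 1) - j) by ring]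
    generalize z + (5 * ((n : ℂ) + 1) + j) = y1 at *
    generalize z + (5 * ((n : ℂ) + 1) - j) = y2 at *
    generalize z + -(5 * ((n : ℂ) + 1) + j) = y3 at *
    generalize z + -(5 * ((n : ℂ) + 1) - j) = y4 at *
    field_simp
    ring
  have hB := hC.sub hA'
  simp_rw [hterm] at hB
  convert hA.hasSum.add hB using 1
  have e1 := hne j
  have e2 := hne (-j)
  push_cast at e1 e2
  rw [← sub_eq_add_neg] at e2
  simp [cotPair]
  field_simp
  ring

lemma gauss_five_identity {ζ w : ℂ} (hζ : ζ ^ 4 + ζ ^ 3 + ζ ^ 2 + ζ + 1 = 0) (hw : 1 - w ^ 5 ≠ 0) :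
    (ζ - ζ ^ 2 - ζ ^ 3 + ζ ^ 4) / 10 *
        ((w * ζ ^ 4 + 1) / (1 - w * ζ ^ 4) + (w * ζ + 1) / (1 - w * ζ)
          - ((w * ζ ^ 3 + 1) / (1 - w * ζ ^ 3) + (w * ζ ^ 2 + 1) / (1 - w * ζ ^ 2))) =
      (w - w ^ 2 - w ^ 3 + w ^ 4) / (1 - w ^ 5) := by
  have h5 : ζ ^ 5 = 1 := by linear_combination (ζ - 1) * hζ
  have hfrac (u : ℂ) (hu : u ^ 5 = w ^ 5) :
      (u + 1) / (1 - u) =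
        (1 + 2 * u + 2 * u ^ 2 + 2 * u ^ 3 + 2 * u ^ 4 + u ^ 5) / (1 - w ^ 5) := by
    have hu' : 1 - u ≠ 0 := by
      intro h
      apply hw
      rw [← hu]
      linear_combination (1 + u + u ^ 2 + u ^ 3 + u ^ 4) * h
    rw [div_eq_div_iff hu' hw, ← hu]
    ring
  have hpow (j : ℕ) : (w * ζ ^ j) ^ 5 = w ^ 5 := by
    rw [mul_pow, ← pow_mul, mul_comm j, pow_mul, h5, one_pow, mul_one]
  rw [hfrac _ (hpow 4), hfrac _ (by simpa using hpow 1), hfrac _ (hpow 3), hfrac _ (hpow 2),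
    ← add_div, ← add_div, ← sub_div, ← mul_div_assoc]
  congr 1
  have h6 : ζ ^ 6 = ζ := by linear_combination ζ * h5
  have h8 : ζ ^ 8 = ζ ^ 3 := by linear_combination ζ ^ 3 * h5
  have h9 : ζ ^ 9 = ζ ^ 4 := by linear_combination ζ ^ 4 * h5
  have h12 : ζ ^ 12 = ζ ^ 2 := by linear_combination (ζ ^ 7 + ζ ^ 2) * h5
  have h16 : ζ ^ 16 = ζ := by linear_combination (ζ ^ 11 + ζ ^ 6 + ζ) * h5
  have e1 : (w * ζ ^ 4) ^ 2 = w ^ 2 * ζ ^ 3 := by linear_combination w ^ 2 * h8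
  have e2 : (w * ζ ^ 4) ^ 3 = w ^ 3 * ζ ^ 2 := by linear_combination w ^ 3 * h12
  have e3 : (w * ζ ^ 4) ^ 4 = w ^ 4 * ζ := by linear_combination w ^ 4 * h16
  have e4 : (w * ζ ^ 3) ^ 2 = w ^ 2 * ζ := by linear_combination w ^ 2 * h6
  have e5 : (w * ζ ^ 3) ^ 3 = w ^ 3 * ζ ^ 4 := by linear_combination w ^ 3 * h9
  have e6 : (w * ζ ^ 3) ^ 4 = w ^ 4 * ζ ^ 2 := by linear_combination w ^ 4 * h12
  have e7 : (w * ζ ^ 2) ^ 3 = w ^ 3 * ζ := by linear_combination w ^ 3 * h6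
  have e8 : (w * ζ ^ 2) ^ 4 = w ^ 4 * ζ ^ 3 := by linear_combination w ^ 4 * h8
  have hG : (ζ - ζ ^ 2 - ζ ^ 3 + ζ ^ 4) ^ 2 = 5 := by
    linear_combination (ζ ^ 4 - 3 * ζ ^ 3 + ζ ^ 2 + 5 * ζ - 5) * hζ
  rw [e1, e2, e3, e4, e5, e6, e7, e8, hpow 4, hpow 3, hpow 2, mul_pow w ζ 5, h5]
  linear_combination (w - w ^ 2 - w ^ 3 + w ^ 4) / 5 * hG

/-- The partial fraction expansion of `∑ χ(r) e^{-rx/5} / (1 - e^{-x})`. -/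
lemma hasSum_quadraticBlock_partialFraction {x : ℝ} (hx : 0 < x) {ζ : ℂ}
    (hζ : ζ = exp (2 * Real.pi * I / 5)) :
    HasSum (fun k ↦ 2 * (ζ - ζ ^ 2 - ζ ^ 3 + ζ ^ 4) *
        quadraticBlock (fun m : ℕ ↦ ((x / (x ^ 2 + 4 * Real.pi ^ 2 * m ^ 2) : ℝ) : ℂ)) k)
      ((exp (-x / 5) - exp (-x / 5) ^ 2 - exp (-x / 5) ^ 3 + exp (-x / 5) ^ 4) /
        (1 - exp (-x / 5) ^ 5)) := by
  have hpi : (Real.pi : ℂ) ≠ 0 := by exact_mod_cast Real.pi_ne_zero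
  set z : ℂ := I * (x / (2 * Real.pi) : ℝ) with hzdef
  have hz : 0 < z.im := by
    simp only [hzdef, I_mul_im, ofReal_re]
    positivity
  set w : ℂ := exp (-x / 5) with hwdef
  have hw5 : 1 - w ^ 5 ≠ 0 := by
    rw [hwdef, ← Complex.exp_nat_mul]
    have : ((5 : ℕ) : ℂ) * (-x / 5) = ((-x : ℝ) : ℂ) := by push_cast; ring
    rw [this, ← ofReal_exp, sub_ne_zero]
    exact_mod_cast (Real.exp_lt_one_iff.mpr (by linarith)).ne'
  have hprim : IsPrimitiveRoot ζ 5 := by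
    have := Complex.isPrimitiveRoot_exp 5 (by norm_num)
    rw [hζ]
    exact_mod_cast this
  have hζ0 : ζ ^ 4 + ζ ^ 3 + ζ ^ 2 + ζ + 1 = 0 := by
    have := hprim.geom_sum_eq_zero (by norm_num)
    simp only [Finset.sum_range_succ, Finset.sum_range_zero] at this
    linear_combination this
  have hwζ (j : ℤ) : exp (2 * Real.pi * I * ((z + j) / 5)) = w * ζ ^ j := by
    rw [hζ, ← Complex.exp_int_mul, hwdef, ← Complex.exp_add]
    congr 1
    rw [hzdef]
    push_cast
    field_simp
    linear_combination (x : ℂ) * I_sq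
  have h5 : ζ ^ 5 = 1 := hprim.pow_eq_one
  have c1 : exp (2 * Real.pi * I * ((z + (1 : ℕ)) / 5)) = w * ζ := by simpa using hwζ 1
  have c2 : exp (2 * Real.pi * I * ((z + (2 : ℕ)) / 5)) = w * ζ ^ 2 := by
    simpa using hwζ 2
  have c3 : exp (2 * Real.pi * I * ((z - (2 : ℕ)) / 5)) = w * ζ ^ 3 := by
    have h := hwζ (-2)
    rw [zpow_neg, show (ζ ^ (2 : ℤ))⁻¹ = ζ ^ 3 from
      inv_eq_of_mul_eq_one_right (by rw [zpow_ofNat, ← pow_add, h5])] at h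
    rw [← h]
    push_cast
    ring_nf
  have c4 : exp (2 * Real.pi * I * ((z - (1 : ℕ)) / 5)) = w * ζ ^ 4 := by
    have h := hwζ (-1)
    rw [zpow_neg_one, show ζ⁻¹ = ζ ^ 4 from
      inv_eq_of_mul_eq_one_right (by rw [← pow_succ', h5])] at h
    rw [← h]
    push_cast
    ring_nf
  have hmain := ((hasSum_cotPair_residues hz (j := 1) (by norm_num) (by norm_num)).sub
    (hasSum_cotPair_residues hz (j := 2) (by norm_num) (by norm_num))).mul_left
    (2 * (ζ - ζ ^ 2 - ζ ^ 3 + ζ ^ 4) * (I / (4 * Real.pi)))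
  have hpair (m : ℕ) : ((x / (x ^ 2 + 4 * Real.pi ^ 2 * m ^ 2) : ℝ) : ℂ) =
      I / (4 * Real.pi) * cotPair z m := by
    have e1 : z + m ≠ 0 := by
      intro h
      have := congrArg im h
      simp at this
      linarith
    have e2 : z - m ≠ 0 := by
      intro h
      have := congrArg im h
      simp at this
      linarith
    have hz2 : ((x ^ 2 + 4 * Real.pi ^ 2 * m ^ 2 : ℝ) : ℂ) =
        -4 * Real.pi ^ 2 * ((z - m) * (z + m)) := by
      rw [hzdef]
      push_cast
      field_simp
      linear_combination (4 * x ^ 2 : ℂ) * I_sq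
    have hxz : (x : ℂ) = -2 * Real.pi * I * z := by
      rw [hzdef]
      push_cast
      field_simp
      linear_combination (x : ℂ) * I_sq
    rw [ofReal_div, hz2, hxz, cotPair]
    field_simp
    ring
  convert hmain using 1
  · rfl
  · funext k
    simp only [quadraticBlock, hpair]
    ring
  · have hcot (a b : ℂ) : a / (I * b) = -I * (a / b) := by
      rw [div_mul_eq_div_div, div_I]
      ring
    have hI : I / (4 * Real.pi) * (Real.pi / 5) * -I = 1 / 20 := by
      field_simp
      linear_combination (-20 : ℂ) * I_sq
    rw [cot_pi_eq_exp_ratio, cot_pi_eq_exp_ratio, cot_pi_eq_exp_ratio, cot_pi_eq_exp_ratio,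
      c1, c2, c3, c4, ← gauss_five_identity hζ0 hw5]
    simp only [hcot]
    linear_combination -(2 * (ζ - ζ ^ 2 - ζ ^ 3 + ζ ^ 4) *
        ((w * ζ ^ 4 + 1) / (1 - w * ζ ^ 4) + (w * ζ + 1) / (1 - w * ζ)
          - ((w * ζ ^ 3 + 1) / (1 - w * ζ ^ 3) + (w * ζ ^ 2 + 1) / (1 - w * ζ ^ 2)))) * hI

lemma one_sub_exp_ne_zero {b : ℂ} (hb : b.re < 0) : 1 - exp b ≠ 0 := by
  rw [sub_ne_zero]
  intro h
  have := congrArg norm h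
  rw [norm_exp, norm_one] at this
  exact (Real.exp_lt_one_iff.mpr hb).ne' this

lemma hasSum_one_div_sq_add_sq {b : ℂ} (hb : 0 < b.re) :
    HasSum (fun n : ℕ ↦ 1 / (((n + 1 : ℕ) : ℂ) ^ 2 + b ^ 2))
      (Real.pi / (2 * b) * ((1 + exp (-2 * Real.pi * b)) / (1 - exp (-2 * Real.pi * b)))
        - 1 / (2 * b ^ 2)) := by
  have hz : 0 < (I * b).im := by simpa using hb
  have hb0 : b ≠ 0 := by
    rintro rfl
    simp at hb
  have hq : 1 - exp (-2 * Real.pi * b) ≠ 0 := by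
    apply one_sub_exp_ne_zero
    simp [Real.pi_pos, hb]
  have h := (hasSum_cotPair_succ hz).mul_left (I / (2 * b))
  rw [cot_pi_eq_exp_ratio, show 2 * Real.pi * I * (I * b) = -2 * Real.pi * b by
    linear_combination 2 * Real.pi * b * I_sq] at h
  convert h using 1
  · rfl
  · funext n
    have e1 := integerComplement_add_ne_zero (mem_integerComplement_of_im_pos hz) (n + 1)
    have e2 := integerComplement_add_ne_zero (mem_integerComplement_of_im_pos hz) (-(n + 1))
    push_cast at e1 e2
    have hd : ((n : ℂ) + 1) ^ 2 + b ^ 2 = -((I * b + (n + 1)) * (I * b + -(n + 1))) := by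
      linear_combination b ^ 2 * I_sq
    rw [cotPair]
    push_cast
    rw [hd, sub_eq_add_neg]
    field_simp
    linear_combination (-2 * b : ℂ) * I_sq
  · field_simp
    ring

/-- The exponentially small correction on the dual side. -/
noncomputable def dualTerm (y : ℝ) : ℝ :=
  Real.exp (-y) / (2 * Real.sinh y) +
    (Real.cos (Real.sqrt 3 * y + Real.pi / 3) - Real.exp (-y) / 2) /
      (Real.cosh y - Real.cos (Real.sqrt 3 * y))

lemma cosh_sub_cos_pos {y : ℝ} (hy : 0 < y) (t : ℝ) : 0 < Real.cosh y - Real.cos t := by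
  have := Real.one_lt_cosh.mpr hy.ne'
  linarith [Real.cos_le_one t]

lemma exp_ratio_sum_eq_dualTerm {y : ℝ} (hy : 0 < y) {ρ σ : ℂ}
    (hρ : ρ = 1 / 2 + Real.sqrt 3 / 2 * I) (hσ : σ = 1 / 2 - Real.sqrt 3 / 2 * I) :
    (1 + exp (-2 * y)) / (1 - exp (-2 * y))
      + σ * ((1 + exp (-2 * (y * ρ))) / (1 - exp (-2 * (y * ρ))))
      + ρ * ((1 + exp (-2 * (y * σ))) / (1 - exp (-2 * (y * σ)))) = 2 * (1 + dualTerm y) := by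
  set r : ℂ := exp (-y) with hr
  set C : ℂ := ((Real.cos (Real.sqrt 3 * y) : ℝ) : ℂ) with hC
  set S : ℂ := ((Real.sin (Real.sqrt 3 * y) : ℝ) : ℂ) with hS
  have hCS : S ^ 2 + C ^ 2 = 1 := by
    rw [hC, hS]
    exact_mod_cast Real.sin_sq_add_cos_sq (Real.sqrt 3 * y)
  have hr0 : r ≠ 0 := exp_ne_zero _
  have hq0 : exp (-2 * y) = r ^ 2 := by
    rw [hr, ← Complex.exp_nat_mul]
    push_cast
    ring_nf
  have hqρ : exp (-2 * (y * ρ)) = r * (C - S * I) := by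
    rw [hr, hC, hS, ofReal_cos, ofReal_sin, ← Complex.cos_neg, ← neg_neg (Complex.sin _),
      ← Complex.sin_neg, neg_mul (Complex.sin _) I, sub_neg_eq_add, ← Complex.exp_mul_I,
      ← Complex.exp_add, hρ]
    push_cast
    ring_nf
  have hqσ : exp (-2 * (y * σ)) = r * (C + S * I) := by
    rw [hr, hC, hS, ofReal_cos, ofReal_sin, ← Complex.exp_mul_I, ← Complex.exp_add, hσ]
    push_cast
    ring_nf
  have n0 : 1 - r ^ 2 ≠ 0 := by
    rw [← hq0]
    exact one_sub_exp_ne_zero (by simpa using hy)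
  have n1 : 1 - r * (C - S * I) ≠ 0 := by
    rw [← hqρ]
    exact one_sub_exp_ne_zero (by simpa [hρ] using hy)
  have n2 : 1 - r * (C + S * I) ≠ 0 := by
    rw [← hqσ]
    exact one_sub_exp_ne_zero (by simpa [hσ] using hy)
  have hprod : (1 - r * (C - S * I)) * (1 - r * (C + S * I)) = 1 - 2 * r * C + r ^ 2 := by
    linear_combination r ^ 2 * hCS - r ^ 2 * S ^ 2 * I_sq
  have n3 : 1 - 2 * r * C + r ^ 2 ≠ 0 := hprod ▸ mul_ne_zero n1 n2
  have hE : (dualTerm y : ℂ) = r ^ 2 / (1 - r ^ 2)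
      + r * (C - Real.sqrt 3 * S - r) / (1 - 2 * r * C + r ^ 2) := by
    have hexp : exp (y : ℂ) = r⁻¹ := by rw [hr, Complex.exp_neg, inv_inv]
    have hsinh : ((Real.sinh y : ℝ) : ℂ) = (r⁻¹ - r) / 2 := by
      rw [ofReal_sinh, Complex.sinh, hexp]
    have hcosh : ((Real.cosh y : ℝ) : ℂ) = (r⁻¹ + r) / 2 := by
      rw [ofReal_cosh, Complex.cosh, hexp]
    have hcos : ((Real.cos (Real.sqrt 3 * y + Real.pi / 3) : ℝ) : ℂ) =
        C / 2 - Real.sqrt 3 / 2 * S := by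
      rw [Real.cos_add, Real.cos_pi_div_three, Real.sin_pi_div_three, hC, hS]
      push_cast
      ring
    rw [dualTerm, ofReal_add, ofReal_div, ofReal_div, ofReal_mul, ofReal_sub, ofReal_sub, hsinh,
      hcosh, hcos, ofReal_div, ofReal_exp, ofReal_neg, ← hr, ← hC]
    push_cast
    have d1 : 2 * ((r⁻¹ - r) / 2) = (1 - r ^ 2) / r := by
      field_simp
    have d2 : (r⁻¹ + r) / 2 - C = (1 - 2 * r * C + r ^ 2) / (2 * r) := by
      field_simp
      ring
    rw [d1, d2]
    field_simp
  have hpair : σ * ((1 + r * (C - S * I)) / (1 - r * (C - S * I)))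
      + ρ * ((1 + r * (C + S * I)) / (1 - r * (C + S * I))) =
      (1 - r ^ 2 - 2 * Real.sqrt 3 * r * S) / (1 - 2 * r * C + r ^ 2) := by
    rw [← hprod]
    field_simp
    rw [hρ, hσ]
    linear_combination (-r ^ 2) * hCS + (r ^ 2 * S ^ 2 + 2 * Real.sqrt 3 * r * S) * I_sq
  rw [hq0, hqρ, hqσ, add_assoc, hpair, hE]
  obtain ⟨D, hD⟩ : ∃ D, D = 1 - 2 * r * C + r ^ 2 := ⟨_, rfl⟩
  rw [← hD] at n3 ⊢
  field_simp
  linear_combination -(1 - r ^ 2) * hD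

lemma hasSum_pow_four_div {c : ℝ} (hc : 0 < c) :
    HasSum (fun n : ℕ ↦ (((n + 1 : ℕ) : ℝ) ^ 4 / (((n + 1 : ℕ) : ℝ) ^ 6 + c ^ 6) : ℝ))
      (Real.pi / (3 * c) * (1 + dualTerm (Real.pi * c))) := by
  have hc0 : (c : ℂ) ≠ 0 := by exact_mod_cast hc.ne'
  have h3 : (Real.sqrt 3 : ℂ) ^ 2 = 3 := by
    exact_mod_cast Real.sq_sqrt (show (0 : ℝ) ≤ 3 by norm_num)
  obtain ⟨ρ, hρ⟩ : ∃ ρ : ℂ, ρ = 1 / 2 + Real.sqrt 3 / 2 * I := ⟨_, rfl⟩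
  obtain ⟨σ, hσ⟩ : ∃ σ : ℂ, σ = 1 / 2 - Real.sqrt 3 / 2 * I := ⟨_, rfl⟩
  have hadd : ρ + σ = 1 := by rw [hρ, hσ]; ring
  have hmul : ρ * σ = 1 := by
    rw [hρ, hσ]
    linear_combination (-(Real.sqrt 3 : ℂ) ^ 2 / 4) * I_sq + h3 / 4
  have hρre : 0 < ((c : ℂ) * ρ).re := by simpa [hρ] using hc
  have hσre : 0 < ((c : ℂ) * σ).re := by simpa [hσ] using hc
  have h1 := hasSum_one_div_sq_add_sq (b := c) (by simpa using hc)
  have h2 := hasSum_one_div_sq_add_sq hρre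
  have h := ((h1.add h2).add (hasSum_one_div_sq_add_sq hσre)).mul_left (1 / 3 : ℂ)
  have hρ0 : ρ ≠ 0 := left_ne_zero_of_mul_eq_one hmul
  have hσ0 : σ ≠ 0 := right_ne_zero_of_mul_eq_one hmul
  have key := exp_ratio_sum_eq_dualTerm (mul_pos Real.pi_pos hc) hρ hσ
  have hne (n : ℕ) {b : ℂ} (hb : 0 < b.re) : ((n + 1 : ℕ) : ℂ) ^ 2 + b ^ 2 ≠ 0 := by
    have hz : 0 < (I * b).im := by simpa using hb
    have := integerComplement_pow_two_ne_pow_two (mem_integerComplement_of_im_pos hz) (n + 1)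
    intro h0
    apply this
    push_cast at h0 ⊢
    linear_combination b ^ 2 * I_sq - h0
  have hsq : ρ ^ 2 + σ ^ 2 = -1 := by linear_combination (ρ + σ + 1) * hadd - 2 * hmul
  have hsq' : ρ ^ 2 * σ ^ 2 = 1 := by linear_combination (ρ * σ + 1) * hmul
  have hexp (t : ℂ) : -2 * Real.pi * (c * t) = -2 * (((Real.pi * c : ℝ) : ℂ) * t) := by
    push_cast
    ring
  have hexp' : -2 * Real.pi * (c : ℂ) = -2 * ((Real.pi * c : ℝ) : ℂ) := by
    push_cast
    ring
  rw [← hasSum_ofReal]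
  convert h using 1
  · rfl
  · funext n
    have d1 := hne n (b := c) (by simpa using hc)
    have d2 := hne n hρre
    have d3 := hne n hσre
    have hprod : (((n + 1 : ℕ) : ℂ) ^ 6 + c ^ 6) = (((n + 1 : ℕ) : ℂ) ^ 2 + c ^ 2) *
        ((((n + 1 : ℕ) : ℂ) ^ 2 + (c * ρ) ^ 2) * (((n + 1 : ℕ) : ℂ) ^ 2 + (c * σ) ^ 2)) := by
      generalize ((n + 1 : ℕ) : ℂ) = X
      linear_combination -(X ^ 2 + c ^ 2) * c ^ 2 * X ^ 2 * hsq - (X ^ 2 + c ^ 2) * c ^ 4 * hsq'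
    rw [ofReal_div, ofReal_add, ofReal_pow, ofReal_pow, ofReal_pow, ofReal_natCast, hprod]
    generalize ((n + 1 : ℕ) : ℂ) = X at *
    rw [one_div_add_one_div d1 d2, div_add_div _ _ (mul_ne_zero d1 d2) d3, ← mul_div_assoc,
      ← mul_assoc]
    congr 1
    linear_combination (-(c ^ 2 * X ^ 2 + (X ^ 2 + c ^ 2) * c ^ 2) * hsq - c ^ 4 * hsq') / 3
  · have i1 : Real.pi / (2 * (c * ρ)) = Real.pi / (2 * c) * σ := by
      field_simp
      linear_combination -hmul
    have i2 : Real.pi / (2 * (c * σ)) = Real.pi / (2 * c) * ρ := by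
      field_simp
      linear_combination -hmul
    have i3 : 1 / (2 * (c * ρ) ^ 2) = 1 / (2 * c ^ 2) * σ ^ 2 := by
      field_simp
      linear_combination -hsq'
    have i4 : 1 / (2 * (c * σ) ^ 2) = 1 / (2 * c ^ 2) * ρ ^ 2 := by
      field_simp
      linear_combination -hsq'
    rw [i1, i2, i3, i4, hexp, hexp, hexp', ofReal_mul, ofReal_add, ofReal_one, ofReal_div,
      ofReal_mul (3 : ℝ), ofReal_ofNat]
    linear_combination -(Real.pi / (6 * c) : ℂ) * key + 1 / (6 * c ^ 2 : ℂ) * hsq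

lemma exists_abs_dualTerm_le {y₀ : ℝ} (hy₀ : 0 < y₀) :
    ∃ K, 0 ≤ K ∧ ∀ y, y₀ ≤ y → |dualTerm y| ≤ K * Real.exp (-y) := by
  have hδ : 0 < 1 - Real.exp (-y₀) := sub_pos.mpr (Real.exp_lt_one_iff.mpr (by linarith))
  have hs₀ : 0 < Real.sinh y₀ := Real.sinh_pos_iff.mpr hy₀
  refine ⟨1 / (2 * Real.sinh y₀) + 3 / (1 - Real.exp (-y₀)) ^ 2, by positivity, fun y hy ↦ ?_⟩
  have hy0 : 0 < y := hy₀.trans_le hy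
  have hsinh : Real.sinh y₀ ≤ Real.sinh y := Real.sinh_le_sinh.mpr hy
  have hD := cosh_sub_cos_pos hy0 (Real.sqrt 3 * y)
  have hr : Real.exp (-y) ≤ Real.exp (-y₀) := Real.exp_le_exp.mpr (by linarith)
  have hr1 : Real.exp (-y) ≤ 1 := Real.exp_le_one_iff.mpr (by linarith)
  have hrpos := Real.exp_pos (-y)
  have hinv : Real.exp y * Real.exp (-y) = 1 := by rw [← Real.exp_add]; simp
  have hlow : (1 - Real.exp (-y₀)) ^ 2 ≤
      2 * Real.exp (-y) * (Real.cosh y - Real.cos (Real.sqrt 3 * y)) := by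
    have hsq : (1 - Real.exp (-y)) ^ 2 = 2 * Real.exp (-y) * (Real.cosh y - 1) := by
      rw [Real.cosh_eq]
      linear_combination -hinv
    calc (1 - Real.exp (-y₀)) ^ 2 ≤ (1 - Real.exp (-y)) ^ 2 := by gcongr
      _ = 2 * Real.exp (-y) * (Real.cosh y - 1) := hsq
      _ ≤ _ := by
        gcongr
        exact Real.cos_le_one _
  rw [dualTerm, add_mul]
  refine (abs_add_le _ _).trans (add_le_add ?_ ?_)
  · rw [abs_of_pos (by positivity [hs₀.trans_le hsinh]), one_div_mul_eq_div]
    gcongr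
  · have hnum : |Real.cos (Real.sqrt 3 * y + Real.pi / 3) - Real.exp (-y) / 2| ≤ 3 / 2 := by
      rw [abs_le]
      constructor <;> linarith [Real.neg_one_le_cos (Real.sqrt 3 * y + Real.pi / 3),
        Real.cos_le_one (Real.sqrt 3 * y + Real.pi / 3)]
    rw [abs_div, abs_of_pos hD, div_mul_eq_mul_div, div_le_div_iff₀ hD (by positivity)]
    calc _ ≤ 3 / 2 * (1 - Real.exp (-y₀)) ^ 2 := by gcongr
      _ ≤ 3 / 2 * (2 * Real.exp (-y) * (Real.cosh y - Real.cos (Real.sqrt 3 * y))) := by gcongr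
      _ = _ := by ring

lemma summable_rpow_mul_dualTerm {β : ℝ} (hβ : 0 < β) :
    Summable fun m : ℕ ↦ ((m + 1 : ℕ) : ℝ) ^ (-(1 / 3) : ℝ) *
      dualTerm ((((m + 1 : ℕ) : ℝ) * β) ^ ((1 : ℝ) / 3)) := by
  obtain ⟨K, hK, hbound⟩ := exists_abs_dualTerm_le (Real.rpow_pos_of_pos hβ ((1 : ℝ) / 3))
  have hs : Summable fun m : ℕ ↦ K * (720 / β ^ 2) * (1 / ((m + 1 : ℕ) : ℝ) ^ 2) :=
    ((summable_nat_add_iff 1).mpr (Real.summable_one_div_nat_pow.mpr one_lt_two)).mul_left _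
  refine Summable.of_norm_bounded hs fun m ↦ ?_
  have hm : (1 : ℝ) ≤ ((m + 1 : ℕ) : ℝ) := by simp
  set t : ℝ := ((m + 1 : ℕ) : ℝ)
  have ht : 0 < t := by linarith
  set y : ℝ := (t * β) ^ ((1 : ℝ) / 3)
  have hy : 0 < y := Real.rpow_pos_of_pos (by positivity) _
  have hy₀ : β ^ ((1 : ℝ) / 3) ≤ y := by
    refine Real.rpow_le_rpow hβ.le ?_ (by norm_num)
    nlinarith
  have hy6 : y ^ 6 = (t * β) ^ 2 := by
    rw [← Real.rpow_natCast y, ← Real.rpow_mul (by positivity), ← Real.rpow_natCast]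
    norm_num
  have hexp : Real.exp (-y) ≤ 720 / y ^ 6 := by
    have := Real.pow_div_factorial_le_exp y hy.le 6
    rw [show (Nat.factorial 6 : ℝ) = 720 by norm_num [Nat.factorial]] at this
    rw [Real.exp_neg, ← inv_div]
    gcongr
  rw [norm_mul, Real.norm_eq_abs, Real.norm_eq_abs, abs_of_pos (Real.rpow_pos_of_pos ht _)]
  calc t ^ (-(1 / 3) : ℝ) * |dualTerm y| ≤ 1 * (K * (720 / y ^ 6)) := by
        gcongr
        · exact Real.rpow_le_one_of_one_le_of_nonpos hm (by norm_num)
        · exact (hbound y hy₀).trans (by gcongr)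
    _ = K * (720 / β ^ 2) * (1 / t ^ 2) := by
        rw [hy6]
        field_simp

/-- The general term of the double series obtained from the partial fraction expansion. -/
noncomputable def doubleTerm (α : ℝ) (n m : ℕ) : ℝ :=
  ((n : ℝ) + 1) * ((((n : ℝ) + 1) * α) ^ 3 /
    (((((n : ℝ) + 1) * α) ^ 3) ^ 2 + 4 * Real.pi ^ 2 * (m : ℝ) ^ 2))

lemma antitone_doubleTerm {α : ℝ} (hα : 0 < α) (n : ℕ) : Antitone (doubleTerm α n) := by
  intro m m' h
  have : (m : ℝ) ≤ m' := by exact_mod_cast h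
  unfold doubleTerm
  gcongr

lemma tendsto_doubleTerm (α : ℝ) (n : ℕ) : Tendsto (doubleTerm α n) atTop (𝓝 0) := by
  have hm : Tendsto (fun m : ℕ ↦ (m : ℝ) ^ 2) atTop atTop :=
    (tendsto_pow_atTop two_ne_zero).comp tendsto_natCast_atTop_atTop
  have h := (tendsto_atTop_add_const_left _ (((((n : ℝ) + 1) * α) ^ 3) ^ 2)
    (hm.const_mul_atTop (show 0 < 4 * Real.pi ^ 2 by positivity)))
  have h0 := (h.const_div_atTop ((((n : ℝ) + 1) * α) ^ 3)).const_mul ((n : ℝ) + 1)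
  rwa [mul_zero] at h0

lemma hasSum_doubleTerm {α β : ℝ} (hα : 0 < α)
    (hαβ : α ^ 3 * β = 2 * Real.pi ^ 4) {m : ℕ} (hm : 0 < m) :
    HasSum (fun n ↦ doubleTerm α n m)
      (1 / 6 * (2 * Real.pi / α ^ 3) ^ ((2 : ℝ) / 3) * ((m : ℝ) ^ (-(1 / 3) : ℝ) +
        (m : ℝ) ^ (-(1 / 3) : ℝ) * dualTerm (((m : ℝ) * β) ^ ((1 : ℝ) / 3)))) := by
  have hm' : (0 : ℝ) < m := by exact_mod_cast hm
  have hpi := Real.pi_pos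
  obtain ⟨A, hA⟩ : ∃ A, A = 2 * Real.pi / α ^ 3 := ⟨_, rfl⟩
  have hApos : 0 < A := by rw [hA]; positivity
  obtain ⟨c, hcdef⟩ : ∃ c, c = (A * m) ^ ((1 : ℝ) / 3) := ⟨_, rfl⟩
  have hc : 0 < c := by rw [hcdef]; positivity
  have hc3 : c ^ 3 = A * m := by
    rw [hcdef, ← Real.rpow_natCast, ← Real.rpow_mul (by positivity)]
    norm_num
  have hy : (m * β) ^ ((1 : ℝ) / 3) = Real.pi * c := by
    have hpow : m * β = (Real.pi * c) ^ 3 := by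
      rw [mul_pow, hc3, hA]
      field_simp
      linear_combination hαβ
    rw [hpow, ← Real.rpow_natCast, ← Real.rpow_mul (by positivity)]
    norm_num
  have hvalue : 1 / α ^ 3 * (Real.pi / (3 * c)) =
      1 / 6 * A ^ ((2 : ℝ) / 3) * (m : ℝ) ^ (-(1 / 3) : ℝ) := by
    have h1 : A ^ ((2 : ℝ) / 3) * A ^ ((1 : ℝ) / 3) = A := by
      rw [← Real.rpow_add hApos]
      norm_num
    have h2 : (m : ℝ) ^ (-(1 / 3) : ℝ) * (m : ℝ) ^ ((1 : ℝ) / 3) = 1 := by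
      rw [← Real.rpow_add hm']
      norm_num
    have h3 : c = A ^ ((1 : ℝ) / 3) * (m : ℝ) ^ ((1 : ℝ) / 3) := by
      rw [hcdef, Real.mul_rpow hApos.le hm'.le]
    have h4 : 1 / 6 * A ^ ((2 : ℝ) / 3) * (m : ℝ) ^ (-(1 / 3) : ℝ) * c = A / 6 := by
      rw [h3]
      linear_combination (1 / 6 * (m : ℝ) ^ (-(1 / 3) : ℝ) * (m : ℝ) ^ ((1 : ℝ) / 3)) * h1
        + A / 6 * h2
    rw [← mul_left_inj' hc.ne', h4, hA]
    field_simp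
    norm_num
  have h := (hasSum_pow_four_div hc).mul_left (1 / α ^ 3)
  convert h using 1
  · rfl
  · funext n
    have hc6 : c ^ 6 = 4 * Real.pi ^ 2 * (m : ℝ) ^ 2 / α ^ 6 := by
      rw [show c ^ 6 = (c ^ 3) ^ 2 by ring, hc3, hA]
      field_simp
      norm_num
    rw [hc6, doubleTerm]
    push_cast
    field_simp
  · rw [hy, ← hA, ← mul_assoc, hvalue]
    ring

lemma hasSum_ofReal_quadraticBlock_doubleTerm {α β : ℝ} (hα : 0 < α)
    (hαβ : α ^ 3 * β = 2 * Real.pi ^ 4) (k : ℕ) :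
    HasSum (fun n ↦ quadraticBlock (fun m ↦ (doubleTerm α n m : ℂ)) k)
      (((1 / 6 * (2 * Real.pi / α ^ 3) ^ ((2 : ℝ) / 3) : ℝ) : ℂ) *
        (quadraticBlock (fun m : ℕ ↦ (m : ℂ) ^ (-(1 / 3 : ℂ))) k +
          quadraticBlock (fun m : ℕ ↦ (((m : ℝ) ^ (-(1 / 3) : ℝ) *
            dualTerm (((m : ℝ) * β) ^ ((1 : ℝ) / 3)) : ℝ) : ℂ)) k)) := by
  have hcol (j : ℕ) (hj : 0 < j) :=
    hasSum_ofReal.mpr (hasSum_doubleTerm hα hαβ (m := 5 * k + j) (by omega))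
  have hpow (m : ℕ) : (m : ℂ) ^ (-(1 / 3 : ℂ)) = (((m : ℝ) ^ (-(1 / 3) : ℝ) : ℝ) : ℂ) := by
    rw [ofReal_cpow (Nat.cast_nonneg m)]
    push_cast
    rfl
  have h := (((hcol 1 (by norm_num)).sub (hcol 2 (by norm_num))).sub (hcol 3 (by norm_num))).add
    (hcol 4 (by norm_num))
  simp only [quadraticBlock, hpow]
  convert h using 1
  · rfl
  · push_cast
    ring

/-- The interchange of summations. -/
lemma tsum_tsum_quadraticBlock_doubleTerm (χ : DirichletCharacter ℂ 5)
    (h1 : χ (1 : ZMod 5) = 1) (h2 : χ (2 : ZMod 5) = -1)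
    (h3 : χ (3 : ZMod 5) = -1) (h4 : χ (4 : ZMod 5) = 1)
    {α β : ℝ} (hα : 0 < α) (hβ : 0 < β) (hαβ : α ^ 3 * β = 2 * Real.pi ^ 4) :
    ∑' n, ∑' k, quadraticBlock (fun m ↦ (doubleTerm α n m : ℂ)) k =
      ((1 / 6 * (2 * Real.pi / α ^ 3) ^ ((2 : ℝ) / 3) : ℝ) : ℂ) *
        (χ.LFunction (1 / 3) + ∑' m : ℕ, χ ((m + 1 : ℕ) : ZMod 5) *
          ((((m + 1 : ℕ) : ℝ) ^ (-(1 / 3) : ℝ) *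
            dualTerm ((((m + 1 : ℕ) : ℝ) * β) ^ ((1 : ℝ) / 3)) : ℝ) : ℂ)) := by
  have hdouble : Summable fun p : ℕ × ℕ ↦
      quadraticBlock (fun m ↦ (doubleTerm α p.1 m : ℂ)) p.2 := by
    have h := summable_ofReal.mpr (summable_quadraticBlock_of_antitone (antitone_doubleTerm hα)
      (tendsto_doubleTerm α) (hasSum_doubleTerm hα hαβ one_pos).summable)
    refine h.congr fun p ↦ ?_
    simp [quadraticBlock]
  set q : ℕ → ℂ := fun m ↦ (((m : ℝ) ^ (-(1 / 3) : ℝ) *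
    dualTerm (((m : ℝ) * β) ^ ((1 : ℝ) / 3)) : ℝ) : ℂ)
  have hχq : Summable fun m : ℕ ↦ χ (m : ZMod 5) * q m := by
    rw [← summable_nat_add_iff 1]
    refine Summable.of_norm_bounded (summable_rpow_mul_dualTerm hβ).norm fun m ↦ ?_
    rw [norm_mul, norm_real]
    exact mul_le_of_le_one_left (norm_nonneg _) (χ.norm_le_one _)
  have hχ0 : χ (0 : ZMod 5) = 0 := χ.map_nonunit (by decide)
  have hshift : ∑' m : ℕ, χ (m : ZMod 5) * q m =
      ∑' m : ℕ, χ ((m + 1 : ℕ) : ZMod 5) * q (m + 1) := by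
    rw [hχq.tsum_eq_zero_add, Nat.cast_zero, hχ0, zero_mul, zero_add]
  rw [← hdouble.tsum_comm (f := fun n k ↦ quadraticBlock (fun m ↦ (doubleTerm α n m : ℂ)) k)]
  simp_rw [(hasSum_ofReal_quadraticBlock_doubleTerm hα hαβ _).tsum_eq]
  rw [tsum_mul_left]
  congr 1
  rw [← hshift]
  exact ((hasSum_quadraticBlock_cpow χ h1 h2 h3 h4).add
    (hasSum_quadraticBlock χ h1 h2 h3 h4 hχq)).tsum_eq

lemma summable_mul_exp_div_one_sub_exp {α : ℝ} (hα : 0 < α) {t : ℝ} (ht : 0 < t) :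
    Summable fun n : ℕ ↦ ((n : ℂ) + 1) * exp (-(t : ℂ) * (((n : ℂ) + 1) * α) ^ 3) /
      (1 - exp (-(((n : ℂ) + 1) * α) ^ 3)) := by
  have hδ : 0 < 1 - Real.exp (-α ^ 3) :=
    sub_pos.mpr (Real.exp_lt_one_iff.mpr (neg_neg_of_pos (by positivity)))
  have hs := (((summable_nat_add_iff 1).mpr (Real.summable_pow_mul_exp_neg_nat_mul 1
    (show 0 < t * α ^ 3 by positivity))).mul_right (1 / (1 - Real.exp (-α ^ 3))))
  refine Summable.of_norm_bounded hs fun n ↦ ?_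
  have hcast : ((n : ℂ) + 1) * exp (-(t : ℂ) * (((n : ℂ) + 1) * α) ^ 3) /
      (1 - exp (-(((n : ℂ) + 1) * α) ^ 3)) =
      ((((n : ℝ) + 1) * Real.exp (-t * (((n : ℝ) + 1) * α) ^ 3) /
        (1 - Real.exp (-(((n : ℝ) + 1) * α) ^ 3)) : ℝ) : ℂ) := by
    push_cast
    rfl
  have hcube : (n : ℝ) + 1 ≤ ((n : ℝ) + 1) ^ 3 := le_self_pow₀ (by simp) three_ne_zero
  have hge : α ^ 3 ≤ (((n : ℝ) + 1) * α) ^ 3 := by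
    gcongr
    exact le_mul_of_one_le_left hα.le (by simp)
  have hden : 1 - Real.exp (-α ^ 3) ≤ 1 - Real.exp (-(((n : ℝ) + 1) * α) ^ 3) := by gcongr
  have hexp : Real.exp (-t * (((n : ℝ) + 1) * α) ^ 3) ≤
      Real.exp (-(t * α ^ 3) * ((n : ℝ) + 1)) := by
    apply Real.exp_le_exp.mpr
    have := mul_le_mul_of_nonneg_left hcube (show 0 ≤ t * α ^ 3 by positivity)
    rw [mul_pow]
    linarith
  have hden0 := hδ.trans_le hden
  rw [hcast, norm_real, Real.norm_of_nonneg (by positivity)]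
  push_cast
  rw [pow_one, mul_one_div]
  gcongr

lemma gaussSum'_eq (χ : DirichletCharacter ℂ 5)
    (h1 : χ (1 : ZMod 5) = 1) (h2 : χ (2 : ZMod 5) = -1)
    (h3 : χ (3 : ZMod 5) = -1) (h4 : χ (4 : ZMod 5) = 1) {ζ : ℂ}
    (hζ : ζ = exp (2 * Real.pi * I / 5)) :
    gaussSum' χ = ζ - ζ ^ 2 - ζ ^ 3 + ζ ^ 4 := by
  have hχ0 : χ (5 : ZMod 5) = 0 := χ.map_nonunit (by decide)
  have hexp (r : ℕ) : exp (2 * Real.pi * I * r / (5 : ℕ)) = ζ ^ r := by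
    rw [hζ, ← Complex.exp_nat_mul]
    push_cast
    ring_nf
  simp only [gaussSum', hexp]
  simp [Finset.sum_Icc_succ_top, h1, h2, h3, h4, hχ0]
  ring

theorem stmt3 (χ₅ : DirichletCharacter ℂ 5)
    (h1 : χ₅ (1 : ZMod 5) = 1) (h2 : χ₅ (2 : ZMod 5) = -1)
    (h3 : χ₅ (3 : ZMod 5) = -1) (h4 : χ₅ (4 : ZMod 5) = 1)
    (α β : ℝ) (hα : 0 < α) (hβ : 0 < β) (hαβ : α ^ 3 * β = 2 * Real.pi ^ 4) :
    ∑ r ∈ Finset.Icc (1 : ℕ) 5, ∑' n : ℕ,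
        χ₅ (r : ZMod 5) * ((n : ℂ) + 1) *
          Complex.exp (-((r : ℂ) / 5) * (((n : ℂ) + 1) * α) ^ 3) /
          (1 - Complex.exp (-(((n : ℂ) + 1) * α) ^ 3))
    = (gaussSum' χ₅ / 3) * Complex.ofReal ((2 * Real.pi / α ^ 3) ^ ((2 : ℝ) / 3)) *
        (DirichletCharacter.LFunction χ₅ (1 / 3)
          + ∑' m : ℕ,
              (χ₅ ((m + 1 : ℕ) : ZMod 5) / Complex.ofReal (((m : ℝ) + 1) ^ ((1 : ℝ) / 3))) *
                Complex.ofReal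
                  (Real.exp (-((((m : ℝ) + 1) * β) ^ ((1 : ℝ) / 3))) /
                      (2 * Real.sinh ((((m : ℝ) + 1) * β) ^ ((1 : ℝ) / 3)))
                    + (Real.cos (Real.sqrt 3 * (((m : ℝ) + 1) * β) ^ ((1 : ℝ) / 3) + Real.pi / 3)
                        - Real.exp (-((((m : ℝ) + 1) * β) ^ ((1 : ℝ) / 3))) / 2) /
                      (Real.cosh ((((m : ℝ) + 1) * β) ^ ((1 : ℝ) / 3))
                        - Real.cos (Real.sqrt 3 * (((m : ℝ) + 1) * β) ^ ((1 : ℝ) / 3))))) := by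
  have hχ0 : χ₅ (5 : ZMod 5) = 0 := χ₅.map_nonunit (by decide)
  obtain ⟨ζ, hζ⟩ : ∃ ζ : ℂ, ζ = exp (2 * Real.pi * I / 5) := ⟨_, rfl⟩
  have hrow (n : ℕ) : ∑ r ∈ Finset.Icc (1 : ℕ) 5, χ₅ (r : ZMod 5) * ((n : ℂ) + 1) *
      exp (-((r : ℂ) / 5) * (((n : ℂ) + 1) * α) ^ 3) / (1 - exp (-(((n : ℂ) + 1) * α) ^ 3)) =
      2 * gaussSum' χ₅ * ∑' k, quadraticBlock (fun m ↦ (doubleTerm α n m : ℂ)) k := by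
    have h := (hasSum_quadraticBlock_partialFraction
      (x := (((n : ℝ) + 1) * α) ^ 3) (by positivity) hζ).tsum_eq
    rw [tsum_mul_left] at h
    have hblock (k : ℕ) : quadraticBlock (fun m ↦ (doubleTerm α n m : ℂ)) k =
        ((n : ℂ) + 1) * quadraticBlock (fun m : ℕ ↦ (((((n : ℝ) + 1) * α) ^ 3 /
          (((((n : ℝ) + 1) * α) ^ 3) ^ 2 + 4 * Real.pi ^ 2 * (m : ℝ) ^ 2) : ℝ) : ℂ)) k := by
      simp only [quadraticBlock, doubleTerm]
      push_cast
      ring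
    have hexp (r : ℕ) : exp (-((r : ℂ) / 5) * (((n : ℂ) + 1) * α) ^ 3) =
        exp (-(((((n : ℝ) + 1) * α) ^ 3 : ℝ) : ℂ) / 5) ^ r := by
      rw [← Complex.exp_nat_mul]
      push_cast
      ring_nf
    have hexp5 : exp (-(((n : ℂ) + 1) * α) ^ 3) =
        exp (-(((((n : ℝ) + 1) * α) ^ 3 : ℝ) : ℂ) / 5) ^ 5 := by
      rw [← hexp 5]
      push_cast
      ring_nf
    simp_rw [hblock, tsum_mul_left, hexp, hexp5]
    rw [gaussSum'_eq χ₅ h1 h2 h3 h4 hζ, mul_left_comm, h]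
    simp [Finset.sum_Icc_succ_top, h1, h2, h3, h4, hχ0]
    ring
  rw [← Summable.tsum_finsetSum]
  · simp_rw [hrow]
    rw [tsum_mul_left, tsum_tsum_quadraticBlock_doubleTerm χ₅ h1 h2 h3 h4 hα hβ hαβ]
    have hterm (m : ℕ) : χ₅ ((m + 1 : ℕ) : ZMod 5) * ((((m + 1 : ℕ) : ℝ) ^ (-(1 / 3) : ℝ) *
        dualTerm ((((m + 1 : ℕ) : ℝ) * β) ^ ((1 : ℝ) / 3)) : ℝ) : ℂ) =
        (χ₅ ((m + 1 : ℕ) : ZMod 5) / Complex.ofReal (((m : ℝ) + 1) ^ ((1 : ℝ) / 3))) *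
          Complex.ofReal (dualTerm ((((m : ℝ) + 1) * β) ^ ((1 : ℝ) / 3))) := by
      rw [Nat.cast_succ (R := ℝ) m, Real.rpow_neg (by positivity), ofReal_mul, ofReal_inv]
      ring
    simp_rw [hterm, dualTerm]
    rw [ofReal_mul]
    push_cast
    ring
  · intro r hr
    have hr' : (0 : ℝ) < (r : ℝ) / 5 := by
      have : 0 < r := (Finset.mem_Icc.mp hr).1
      positivity
    refine ((summable_mul_exp_div_one_sub_exp hα hr').mul_left (χ₅ (r : ZMod 5))).congr
      fun n ↦ ?_
    push_cast
    ring
end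

section
/- For every real x > 0, Σ_{n=1}^{∞} 1/( n·(e^{n x} − 1) ) = (1/2)·log( x/(2π) ) + π²/(6x) − x/24 + Σ_{n=1}^{∞} 1/( n·(e^{4π² n/x} − 1) ). -/
open Complex
open UpperHalfPlane hiding I

/-- The Lambert series `∑ q ^ n / (n (1 - q ^ n))` has the same sum as `-∑ log (1 - q ^ n)`. -/
theorem hasSum_neg_log_one_sub_exp {x : ℝ} (hx : 0 < x) :
    HasSum (fun m : ℕ ↦ -Real.log (1 - Real.exp (-x) ^ (m + 1)))
      (∑' n : ℕ, 1 / (((n : ℝ) + 1) * (Real.exp (((n : ℝ) + 1) * x) - 1))) := by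
  set q := Real.exp (-x) with hq
  have hq0 : 0 < q := Real.exp_pos _
  have hq1 : q < 1 := Real.exp_lt_one_iff.mpr (by linarith)
  have hpow_lt (n : ℕ) : q ^ (n + 1) < 1 := pow_lt_one₀ hq0.le hq1 (by lia)
  have hgeom := summable_geometric_of_lt_one hq0.le hq1
  have hsummable : Summable fun p : ℕ × ℕ ↦ (q ^ (p.2 + 1)) ^ (p.1 + 1) / ((p.1 : ℝ) + 1) := by
    refine (hgeom.mul_of_nonneg hgeom (fun n ↦ by positivity) fun n ↦ by positivity).of_nonneg_of_le
      (fun p ↦ by positivity) fun p ↦ ?_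
    calc (q ^ (p.2 + 1)) ^ (p.1 + 1) / ((p.1 : ℝ) + 1)
        ≤ (q ^ (p.2 + 1)) ^ (p.1 + 1) := div_le_self (by positivity) (by simp)
      _ = q ^ ((p.2 + 1) * (p.1 + 1)) := (pow_mul ..).symm
      _ ≤ q ^ (p.1 + p.2) := pow_le_pow_of_le_one hq0.le hq1.le (by nlinarith)
      _ = q ^ p.1 * q ^ p.2 := pow_add ..
  have hrow (n : ℕ) : HasSum (fun m : ℕ ↦ (q ^ (m + 1)) ^ (n + 1) / ((n : ℝ) + 1))
      (1 / (((n : ℝ) + 1) * (Real.exp (((n : ℝ) + 1) * x) - 1))) := by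
    have h := (hasSum_geometric_of_lt_one (pow_pos hq0 (n + 1)).le (hpow_lt n)).mul_left
      (q ^ (n + 1) / ((n : ℝ) + 1))
    convert! h using 1
    · ext m
      ring
    · have hexp : Real.exp (((n : ℝ) + 1) * x) = (q ^ (n + 1))⁻¹ := by
        rw [hq, ← Real.exp_nat_mul, ← Real.exp_neg]
        push_cast
        ring_nf
      have h1 : 1 - q ^ (n + 1) ≠ 0 := by linarith [hpow_lt n]
      have h2 : q ^ (n + 1) ≠ 0 := by positivity
      rw [hexp]
      field_simp
  have hcol (m : ℕ) : HasSum (fun n : ℕ ↦ (q ^ (m + 1)) ^ (n + 1) / ((n : ℝ) + 1))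
      (-Real.log (1 - q ^ (m + 1))) :=
    Real.hasSum_pow_div_log_of_abs_lt_one (by rw [abs_of_pos (by positivity)]; exact hpow_lt m)
  rw [(hsummable.hasSum.prod_fiberwise hrow).tsum_eq]
  exact ((Equiv.prodComm ℕ ℕ).hasSum_iff.mpr hsummable.hasSum).prod_fiberwise hcol

/-- On the imaginary axis, `log η` is a Lambert series. -/
theorem norm_eta_mul_I {t : ℝ} (ht : 0 < t) :
    ‖ModularForm.eta (t * I)‖ = Real.exp (-(2 * Real.pi * t / 24) -
      ∑' n : ℕ, 1 / (((n : ℝ) + 1) * (Real.exp (((n : ℝ) + 1) * (2 * Real.pi * t)) - 1))) := by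
  have hx : 0 < 2 * Real.pi * t := by positivity
  have hq1 : Real.exp (-(2 * Real.pi * t)) < 1 := Real.exp_lt_one_iff.mpr (by linarith)
  have hsum := (hasSum_neg_log_one_sub_exp hx).neg
  simp only [neg_neg] at hsum
  have hpos (m : ℕ) : 0 < 1 - Real.exp (-(2 * Real.pi * t)) ^ (m + 1) :=
    sub_pos.mpr (pow_lt_one₀ (Real.exp_pos _).le hq1 m.succ_ne_zero)
  have hprod := Real.rexp_tsum_eq_tprod hpos hsum.summable
  have hqI : Function.Periodic.qParam 1 (t * I) = (Real.exp (-(2 * Real.pi * t)) : ℝ) := by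
    simp only [Function.Periodic.qParam, ofReal_exp]
    congr 1
    push_cast
    linear_combination (2 * Real.pi * t : ℂ) * I_sq
  have heta : ∏' n, (1 - ModularForm.eta_q n (t * I)) =
      ((∏' n : ℕ, (1 - Real.exp (-(2 * Real.pi * t)) ^ (n + 1)) : ℝ) : ℂ) := by
    have h := (Real.multipliable_of_summable_log hpos hsum.summable).map_tprod ofRealHom
      continuous_ofReal
    simp only [ofRealHom_eq_coe] at h
    rw [h]
    simp [ModularForm.eta_q, hqI]
  rw [ModularForm.eta, norm_mul, heta, ← hprod, hsum.tsum_eq, norm_real,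
    Real.norm_of_nonneg (Real.exp_pos _).le, Function.Periodic.norm_qParam, ← Real.exp_add]
  congr 1
  simp
  ring

theorem norm_eta_inv_mul_I {t : ℝ} (ht : 0 < t) :
    ‖ModularForm.eta ((t⁻¹ : ℝ) * I)‖ = t ^ (1 / 2 : ℝ) * ‖ModularForm.eta (t * I)‖ := by
  have hnorm_sqrt (z : ℂ) : ‖sqrt z‖ = ‖z‖ ^ (1 / 2 : ℝ) := by
    rw [sqrt, ← norm_cpow_real]
    norm_num
  have h := ModularForm.eta_comp_eq_csqrt_I_inv (x := t * I)
    (by simpa [upperHalfPlaneSet] using ht)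
  have hinv : -1 / ((t : ℂ) * I) = (t⁻¹ : ℝ) * I := by
    have : (t : ℂ) ≠ 0 := by exact_mod_cast ht.ne'
    push_cast
    field_simp
    simp
  simp only [Function.comp_apply, hinv, Pi.smul_apply, Pi.mul_apply, smul_eq_mul] at h
  rw [h]
  simp [hnorm_sqrt, abs_of_pos ht]

theorem stmt6 (x : ℝ) (hx : 0 < x) :
    ∑' n : ℕ, 1 / (((n : ℝ) + 1) * (Real.exp (((n : ℝ) + 1) * x) - 1))
    = (1 / 2) * Real.log (x / (2 * Real.pi)) + Real.pi ^ 2 / (6 * x) - x / 24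
      + ∑' n : ℕ, 1 / (((n : ℝ) + 1) *
          (Real.exp (4 * Real.pi ^ 2 * ((n : ℝ) + 1) / x) - 1)) := by
  have ht : 0 < x / (2 * Real.pi) := by positivity
  have hx' : 2 * Real.pi * (x / (2 * Real.pi)) = x := by field_simp
  have hy (n : ℕ) : ((n : ℝ) + 1) * (2 * Real.pi * (x / (2 * Real.pi))⁻¹) =
      4 * Real.pi ^ 2 * ((n : ℝ) + 1) / x := by
    field_simp
    ring
  have hpi : 2 * Real.pi * (x / (2 * Real.pi))⁻¹ / 24 = Real.pi ^ 2 / (6 * x) := by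
    field_simp
    ring
  have h := norm_eta_inv_mul_I ht
  rw [norm_eta_mul_I ht, norm_eta_mul_I (inv_pos.mpr ht), Real.rpow_def_of_pos ht,
    ← Real.exp_add, Real.exp_eq_exp, hx', hpi] at h
  simp only [hy] at h
  linarith
end

section
/- Let α, β > 0 satisfy α·β = π². Then Σ_{n=1}^{∞} 1/( n·(e^{2nα} − 1) ) − Σ_{n=1}^{∞} 1/( n·(e^{2nβ} − 1) ) = (β − α)/12 + (1/4)·log(α/β). -/
/-- The double series `∑ q ^ (m n) / n` over `m, n ≥ 1`, summed over `m` and over `n` first. -/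
theorem hasSum_log_one_sub_pow {q : ℝ} (hq0 : 0 < q) (hq1 : q < 1) :
    HasSum (fun m : ℕ ↦ Real.log (1 - q ^ (m + 1)))
      (-∑' n : ℕ, 1 / (((n : ℝ) + 1) * ((q ^ (n + 1))⁻¹ - 1))) := by
  have hpow (m : ℕ) : q ^ (m + 1) < 1 := pow_lt_one₀ hq0.le hq1 m.succ_ne_zero
  have hrow (m : ℕ) : HasSum (fun n : ℕ ↦ (q ^ (m + 1)) ^ (n + 1) / ((n : ℝ) + 1))
      (-Real.log (1 - q ^ (m + 1))) :=
    Real.hasSum_pow_div_log_of_abs_lt_one (by rw [abs_of_pos (by positivity)]; exact hpow m)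
  have hcol (n : ℕ) : ∑' m : ℕ, (q ^ (m + 1)) ^ (n + 1) / ((n : ℝ) + 1) =
      1 / (((n : ℝ) + 1) * ((q ^ (n + 1))⁻¹ - 1)) := by
    have hne : 1 - q ^ (n + 1) ≠ 0 := (sub_pos.mpr (hpow n)).ne'
    have hterm (m : ℕ) : (q ^ (m + 1)) ^ (n + 1) / ((n : ℝ) + 1) =
        q ^ (n + 1) / ((n : ℝ) + 1) * (q ^ (n + 1)) ^ m := by
      rw [← pow_mul, mul_comm (m + 1), pow_mul, pow_succ _ m]
      ring
    simp_rw [hterm]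
    rw [tsum_mul_left, tsum_geometric_of_lt_one (by positivity) (hpow n)]
    have hinv : (q ^ (n + 1))⁻¹ - 1 = (1 - q ^ (n + 1)) / q ^ (n + 1) := by
      rw [sub_div, div_self (by positivity), one_div]
    rw [hinv]
    field_simp
  have hlog : Summable fun m : ℕ ↦ Real.log (1 - q ^ (m + 1)) := by
    simpa [sub_eq_add_neg] using Real.summable_log_one_add_of_summable
      ((summable_nat_add_iff 1).mpr (summable_geometric_of_lt_one hq0.le hq1)).neg
  have hdouble : Summable fun p : ℕ × ℕ ↦ (q ^ (p.1 + 1)) ^ (p.2 + 1) / ((p.2 : ℝ) + 1) := by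
    refine (summable_prod_of_nonneg fun p ↦ by positivity).mpr ⟨fun m ↦ (hrow m).summable, ?_⟩
    simpa only [(hrow _).tsum_eq] using hlog.neg
  have hswap := hdouble.prod_symm.tsum_comm
    (f := fun n m : ℕ ↦ (q ^ (m + 1)) ^ (n + 1) / ((n : ℝ) + 1))
  simp_rw [hcol, (hrow _).tsum_eq, tsum_neg] at hswap
  rw [← hswap, neg_neg]
  exact hlog.hasSum

/-- The Lambert-type series `∑ 1 / (n (e ^ (2 n a) - 1))` is minus the logarithm of the Euler
product at `q = e ^ (-2 a)`. -/
theorem hasSum_log_one_sub_exp_pow {a : ℝ} (ha : 0 < a) :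
    HasSum (fun m : ℕ ↦ Real.log (1 - Real.exp (-2 * a) ^ (m + 1)))
      (-∑' n : ℕ, 1 / (((n : ℝ) + 1) * (Real.exp (2 * ((n : ℝ) + 1) * a) - 1))) := by
  have hexp (n : ℕ) :
      Real.exp (2 * ((n : ℝ) + 1) * a) = (Real.exp (-2 * a) ^ (n + 1))⁻¹ := by
    rw [← Real.exp_nat_mul, ← Real.exp_neg]
    congr 1
    push_cast
    ring
  simp_rw [hexp]
  exact hasSum_log_one_sub_pow (Real.exp_pos _) (Real.exp_lt_one_iff.mpr (by linarith))

/-- The Dedekind eta function on the imaginary axis in terms of a Lambert-type series. -/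
theorem eta_ofReal_mul_I {a : ℝ} (ha : 0 < a) :
    ModularForm.eta (((a / Real.pi : ℝ) : ℂ) * Complex.I) = ((Real.exp (-a / 12 -
      ∑' n : ℕ, 1 / (((n : ℝ) + 1) * (Real.exp (2 * ((n : ℝ) + 1) * a) - 1))) : ℝ) : ℂ) := by
  have hπ : (Real.pi : ℂ) ≠ 0 := Complex.ofReal_ne_zero.mpr Real.pi_ne_zero
  have hprod := Real.hasProd_of_hasSum_log (fun m : ℕ ↦ sub_pos.mpr
    (pow_lt_one₀ (Real.exp_pos (-2 * a)).le (Real.exp_lt_one_iff.mpr (by linarith)) m.succ_ne_zero))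
    (hasSum_log_one_sub_exp_pow ha)
  have hprodC := (hprod.map Complex.ofRealHom Complex.continuous_ofReal).tprod_eq
  have harg : 2 * (Real.pi : ℂ) * Complex.I * (((a / Real.pi : ℝ) : ℂ) * Complex.I)
      = ((-2 * a : ℝ) : ℂ) := by
    push_cast
    field_simp
    rw [Complex.I_sq]
    ring
  rw [ModularForm.eta, sub_eq_add_neg, Real.exp_add, Complex.ofReal_mul]
  congr 1
  · rw [Function.Periodic.qParam, harg, Complex.ofReal_exp]
    congr 1
    push_cast
    ring
  · refine Eq.trans ?_ hprodC
    refine tprod_congr fun m ↦ ?_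
    rw [ModularForm.eta_q_eq_pow, harg]
    simp

theorem stmt7 (α β : ℝ) (hα : 0 < α) (hβ : 0 < β) (hαβ : α * β = Real.pi ^ 2) :
    (∑' n : ℕ, 1 / (((n : ℝ) + 1) * (Real.exp (2 * ((n : ℝ) + 1) * α) - 1)))
      - ∑' n : ℕ, 1 / (((n : ℝ) + 1) * (Real.exp (2 * ((n : ℝ) + 1) * β) - 1))
    = (β - α) / 12 + (1 / 4) * Real.log (α / β) := by
  have hπ := Real.pi_pos
  have hr : 0 < α / Real.pi := by positivity
  have htrans := ModularForm.eta_comp_eq_csqrt_I_inv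
    (show ((α / Real.pi : ℝ) : ℂ) * Complex.I ∈ UpperHalfPlane.upperHalfPlaneSet by
      simpa using hr)
  have hinv : -1 / (((α / Real.pi : ℝ) : ℂ) * Complex.I) =
      ((β / Real.pi : ℝ) : ℂ) * Complex.I := by
    have hβ' : β / Real.pi = (α / Real.pi)⁻¹ := by
      field_simp
      linarith
    rw [hβ', Complex.ofReal_inv, neg_div, one_div, mul_inv, Complex.inv_I]
    ring
  have hsqrt : Complex.sqrt (((α / Real.pi : ℝ) : ℂ) * Complex.I) =
      ((Real.exp (Real.log (α / Real.pi) / 2) : ℝ) : ℂ) * Complex.sqrt Complex.I := by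
    rw [sqrt_eq_exp (mul_ne_zero (Complex.ofReal_ne_zero.mpr hr.ne') Complex.I_ne_zero),
      sqrt_eq_exp Complex.I_ne_zero, Complex.log_ofReal_mul hr Complex.I_ne_zero,
      Complex.ofReal_exp, ← Complex.exp_add]
    congr 1
    push_cast
    ring
  have hI : Complex.sqrt Complex.I ≠ 0 := by
    rw [sqrt_eq_exp Complex.I_ne_zero]
    exact Complex.exp_ne_zero _
  simp only [Function.comp_apply, Pi.smul_apply, Pi.mul_apply, smul_eq_mul, hinv, hsqrt,
    eta_ofReal_mul_I hα, eta_ofReal_mul_I hβ] at htrans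
  rw [mul_comm (Complex.ofReal _) (Complex.sqrt _), mul_assoc, inv_mul_cancel_left₀ hI,
    ← Complex.ofReal_mul, Complex.ofReal_inj, ← Real.exp_add, Real.exp_eq_exp] at htrans
  have hlog : Real.log (α / β) = 2 * Real.log (α / Real.pi) := by
    have hsq : α / β = (α / Real.pi) ^ 2 := by
      rw [div_pow, ← hαβ]
      field_simp
    rw [hsq, Real.log_pow]
    norm_num
  rw [hlog]
  linarith
end

section
/- Let x > 0, let N be a positive integer, let q ≥ 1 and let χ be a Dirichlet character modulo q. Then for every integer h and every real c₀ > max{1, (N−2h+1)/N}, Σ_{r=1}^{q} Σ_{n=1}^{∞} χ(r)·n^{N−2h}·e^{−(r/q) n^N x} / (1 − e^{−n^N x}) = (1/(2π)) ∫_{−∞}^{∞} Γ(c₀+it)·L(c₀+it, χ)·ζ(N(c₀+it) − (N−2h))·(q/x)^{c₀+it} dt, where the integral is the contour integral (1/(2πi)) ∫_{(c₀)} Γ(s) L(s,χ) ζ(Ns − (N−2h)) (q/x)^s ds along the vertical line Re(s) = c₀. -/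
open Complex MeasureTheory

/-- On the half-plane `0 < re s`, the complex Gamma function is bounded by its value at `re s`. -/
lemma Complex.norm_Gamma_le {s : ℂ} (hs : 0 < s.re) : ‖Gamma s‖ ≤ Real.Gamma s.re := by
  rw [Gamma_eq_integral hs, Real.Gamma_eq_integral hs, GammaIntegral]
  refine (norm_integral_le_integral_norm _).trans_eq
    (setIntegral_congr_fun measurableSet_Ioi fun t ht ↦ ?_)
  simp only [norm_mul, norm_real, Real.norm_eq_abs, Real.abs_exp,
    norm_cpow_eq_rpow_re_of_pos (Set.mem_Ioi.mp ht), sub_re, one_re]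

lemma Complex.verticalIntegrable_Gamma {c : ℝ} (hc : 0 < c) : VerticalIntegrable Gamma c := by
  have hne (t : ℝ) (m : ℕ) : (c : ℂ) + t * I ≠ -m := fun h ↦ by
    have := congrArg re h
    simp at this
    linarith [m.cast_nonneg (α := ℝ)]
  have hcont : Continuous fun t : ℝ ↦ Gamma (c + t * I) :=
    continuous_iff_continuousAt.mpr fun t ↦
      (continuousAt_Gamma _ (hne t)).comp (f := fun t : ℝ ↦ (c : ℂ) + t * I) (by fun_prop)
  refine (integrable_inv_one_add_sq.const_mul (Real.Gamma (c + 2) / min 1 (c ^ 2))).mono'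
    hcont.aestronglyMeasurable (.of_forall fun t ↦ ?_)
  set s : ℂ := c + t * I with hs
  have hs0 : s ≠ 0 := by simpa using hne t 0
  have hs1 : s + 1 ≠ 0 := fun h ↦ hne t 1 (by simpa using eq_neg_of_add_eq_zero_left h)
  have hrec : Gamma (s + 2) = (s + 1) * (s * Gamma s) := by
    rw [← Gamma_add_one s hs0, ← Gamma_add_one (s + 1) hs1]
    ring_nf
  have hle : ‖s‖ ^ 2 * ‖Gamma s‖ ≤ Real.Gamma (c + 2) := calc
    ‖s‖ ^ 2 * ‖Gamma s‖ ≤ ‖s + 1‖ * (‖s‖ * ‖Gamma s‖) := by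
      have : ‖s‖ ≤ ‖s + 1‖ := by
        rw [← sq_le_sq₀ (norm_nonneg _) (norm_nonneg _), ← normSq_eq_norm_sq,
          ← normSq_eq_norm_sq]
        simp [hs, normSq_apply]
        nlinarith
      nlinarith [mul_le_mul_of_nonneg_right this (by positivity : 0 ≤ ‖s‖ * ‖Gamma s‖)]
    _ = ‖Gamma (s + 2)‖ := by simp [hrec]
    _ ≤ Real.Gamma (c + 2) := by
      have := norm_Gamma_le (s := s + 2) (by simp [hs]; linarith)
      simpa [hs] using this
  have hmin : min 1 (c ^ 2) * (1 + t ^ 2) ≤ ‖s‖ ^ 2 := by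
    rw [← normSq_eq_norm_sq]
    simp only [hs, normSq_add_mul_I]
    nlinarith [min_le_left 1 (c ^ 2), min_le_right 1 (c ^ 2), sq_nonneg t]
  have hpos : 0 < min 1 (c ^ 2) := by positivity
  rw [div_mul_eq_mul_div, ← div_eq_mul_inv, div_div, le_div_iff₀ (by positivity)]
  nlinarith [mul_le_mul_of_nonneg_right hmin (norm_nonneg (Gamma s))]

/-- The Cahen–Mellin integral. -/
lemma Complex.exp_neg_eq_integral_Gamma {c y : ℝ} (hc : 0 < c) (hy : 0 < y) :
    cexp (-y) = 1 / (2 * (Real.pi : ℂ)) *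
      ∫ t : ℝ, Gamma (c + t * I) * (y : ℂ) ^ (-((c : ℂ) + t * I)) := by
  have hre (t : ℝ) : 0 < ((c : ℂ) + t * I).re := by simpa
  have hG (t : ℝ) : mellin (fun x : ℝ ↦ ((Real.exp (-x) : ℝ) : ℂ)) (c + t * I)
      = Gamma (c + t * I) := by
    rw [← GammaIntegral_eq_mellin, Gamma_eq_integral (hre t)]
  have := mellinInv_mellin_eq c (fun x : ℝ ↦ ((Real.exp (-x) : ℝ) : ℂ)) hy ?_ ?_ ?_
  · simp only [mellinInv, hG, smul_eq_mul, real_smul] at this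
    push_cast at this
    rw [← this]
    simp_rw [mul_comm (Gamma _)]
  · have := GammaIntegral_convergent (s := c) (by simpa)
    simpa only [MellinConvergent, smul_eq_mul, mul_comm] using this
  · simpa only [VerticalIntegrable, hG] using verticalIntegrable_Gamma hc
  · fun_prop

/-- Termwise Mellin inversion for a general Dirichlet series `∑ a i * y i ^ (-s)`. -/
lemma hasSum_mul_exp_neg_eq_integral_Gamma {ι : Type*} [Countable ι] {a : ι → ℂ} {y : ι → ℝ}
    {c : ℝ} (hc : 0 < c) (hy : ∀ i, 0 < y i) (ha : Summable fun i ↦ ‖a i‖ * y i ^ (-c)) :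
    HasSum (fun i ↦ a i * cexp (-y i)) (1 / (2 * (Real.pi : ℂ)) *
      ∫ t : ℝ, Gamma (c + t * I) * ∑' i, a i * (y i : ℂ) ^ (-((c : ℂ) + t * I))) := by
  let F (i : ι) (t : ℝ) : ℂ := Gamma (c + t * I) * (a i * (y i : ℂ) ^ (-((c : ℂ) + t * I)))
  have hG := verticalIntegrable_Gamma hc
  have hnorm (i : ι) (t : ℝ) :
      ‖F i t‖ = ‖a i‖ * y i ^ (-c) * ‖Gamma (c + t * I)‖ := by
    simp [F, norm_cpow_eq_rpow_re_of_pos (hy i)]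
    ring
  have hF (i : ι) : Integrable (F i) := by
    refine (hG.norm.const_mul (‖a i‖ * y i ^ (-c))).mono'
      (hG.aestronglyMeasurable.mul ?_) (.of_forall fun t ↦ (hnorm i t).le)
    refine Continuous.aestronglyMeasurable (.mul (by fun_prop) ?_)
    exact .const_cpow (by fun_prop) (.inl (by exact_mod_cast (hy i).ne'))
  have hsum : Summable fun i ↦ ∫ t, ‖F i t‖ := by
    simp_rw [hnorm, integral_const_mul]
    exact ha.mul_right _
  have hterm (i : ι) : a i * cexp (-y i) = 1 / (2 * (Real.pi : ℂ)) * ∫ t, F i t := by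
    rw [exp_neg_eq_integral_Gamma hc (hy i), mul_left_comm, ← integral_const_mul]
    simp only [F, mul_left_comm]
  simp_rw [hterm, ← tsum_mul_left]
  exact (hasSum_integral_of_summable_integral_norm hF hsum).mul_left _

lemma tsum_eq_sum_range_div_one_sub {f : ℕ → ℂ} (hf : Summable f) {z : ℂ} (hz : z ≠ 1) {q : ℕ}
    (hfz : ∀ m, f (m + q) = z * f m) :
    ∑' m, f m = (∑ i ∈ Finset.range q, f i) / (1 - z) := by
  have := hf.sum_add_tsum_nat_add q
  simp_rw [hfz, tsum_mul_left] at this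
  rw [eq_div_iff (sub_ne_zero.mpr hz.symm)]
  linear_combination -this

lemma summable_norm_natCast_add_one_cpow_neg {s : ℂ} (hs : 1 < s.re) :
    Summable fun n : ℕ ↦ ‖((n + 1 : ℕ) : ℂ) ^ (-s)‖ := by
  refine ((summable_nat_add_iff 1).mpr (Real.summable_nat_rpow (p := -s.re).mpr
    (by linarith))).congr fun n ↦ ?_
  rw [norm_natCast_cpow_of_pos n.succ_pos, neg_re]

lemma riemannZeta_eq_tsum_natCast_add_one_cpow_neg {s : ℂ} (hs : 1 < s.re) :
    riemannZeta s = ∑' n : ℕ, ((n + 1 : ℕ) : ℂ) ^ (-s) := by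
  simp [zeta_eq_tsum_one_div_nat_add_one_cpow hs, cpow_neg]

namespace DirichletCharacter

variable {q : ℕ} (χ : DirichletCharacter ℂ q)

lemma summable_norm_mul_natCast_add_one_cpow_neg {s : ℂ} (hs : 1 < s.re) :
    Summable fun m : ℕ ↦ ‖χ ((m + 1 : ℕ) : ZMod q) * ((m + 1 : ℕ) : ℂ) ^ (-s)‖ := by
  refine (summable_norm_natCast_add_one_cpow_neg hs).of_nonneg_of_le
    (fun _ ↦ norm_nonneg _) fun m ↦ ?_
  rw [norm_mul]
  exact mul_le_of_le_one_left (norm_nonneg _) (χ.norm_le_one _)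

lemma LFunction_eq_tsum_natCast_add_one [NeZero q] {s : ℂ} (hs : 1 < s.re) :
    LFunction χ s = ∑' m : ℕ, χ ((m + 1 : ℕ) : ZMod q) * ((m + 1 : ℕ) : ℂ) ^ (-s) := by
  rw [χ.LFunction_eq_LSeries hs, LSeries,
    (χ.LSeriesSummable_of_one_lt_re hs).tsum_eq_zero_add, LSeries.term_zero, zero_add]
  refine tsum_congr fun m ↦ ?_
  rw [LSeries.term_of_ne_zero m.succ_ne_zero, cpow_neg, div_eq_mul_inv]

/-- The generating series of a Dirichlet character is a finite sum over one period. -/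
lemma tsum_mul_exp_neg_mul {w : ℝ} (hw : 0 < w) (hq : 0 < q)
    (hs : Summable fun m : ℕ ↦ χ ((m + 1 : ℕ) : ZMod q) * cexp (-(((m + 1 : ℕ) : ℂ) * w))) :
    ∑' m : ℕ, χ ((m + 1 : ℕ) : ZMod q) * cexp (-(((m + 1 : ℕ) : ℂ) * w)) =
      ∑ r ∈ Finset.Icc 1 q, χ (r : ZMod q) * cexp (-((r : ℂ) * w)) / (1 - cexp (-(q * w))) := by
  have hz : cexp (-(q * w)) ≠ 1 := by
    have : Real.exp (-(q * w)) ≠ 1 := by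
      rw [Ne, Real.exp_eq_one_iff]
      have : (0 : ℝ) < q := by exact_mod_cast hq
      nlinarith
    exact_mod_cast this
  rw [tsum_eq_sum_range_div_one_sub hs hz, ← Finset.sum_div]
  · congr 1
    rw [Finset.range_eq_Ico, Finset.sum_Ico_add' (fun r : ℕ ↦ χ (r : ZMod q) *
      cexp (-((r : ℂ) * w))) 0 q 1]
    rfl
  · intro m
    have : ((m + q + 1 : ℕ) : ZMod q) = ((m + 1 : ℕ) : ZMod q) := by simp
    rw [this, mul_left_comm, ← Complex.exp_add]
    push_cast
    ring_nf

end DirichletCharacter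

theorem stmt9 (x : ℝ) (hx : 0 < x) (N : ℕ) (hN : 0 < N) (q : ℕ) [NeZero q] (hq : 1 ≤ q)
    (χ : DirichletCharacter ℂ q) (h : ℤ) (c₀ : ℝ)
    (hc₀ : max 1 (((N : ℝ) - 2 * h + 1) / N) < c₀) :
    ∑ r ∈ Finset.Icc 1 q, ∑' n : ℕ,
        χ (r : ZMod q) * ((n : ℂ) + 1) ^ ((N : ℤ) - 2 * h) *
          Complex.exp (-((r : ℂ) / q) * ((n : ℂ) + 1) ^ (N : ℕ) * x) /
          (1 - Complex.exp (-((n : ℂ) + 1) ^ (N : ℕ) * x))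
    = (1 / (2 * (Real.pi : ℂ))) *
        ∫ t : ℝ, Complex.Gamma (c₀ + t * Complex.I) *
          DirichletCharacter.LFunction χ (c₀ + t * Complex.I) *
          riemannZeta ((N : ℂ) * (c₀ + t * Complex.I) - ((N : ℂ) - 2 * h)) *
          ((q : ℂ) / x) ^ ((c₀ : ℂ) + t * Complex.I) := by
  obtain ⟨hc1, hcN⟩ := max_lt_iff.mp hc₀
  have hN' : (0 : ℝ) < N := by exact_mod_cast hN
  have hq' : (0 : ℝ) < q := by exact_mod_cast hq
  rw [div_lt_iff₀ hN'] at hcN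
  let w (n : ℕ) : ℝ := ((n + 1 : ℕ) : ℝ) ^ N * x / q
  have hw (n : ℕ) : 0 < w n := by positivity
  let y (p : ℕ × ℕ) : ℝ := ((p.2 + 1 : ℕ) : ℝ) * w p.1
  have hy (p : ℕ × ℕ) : 0 < y p := mul_pos (by positivity) (hw _)
  let a (p : ℕ × ℕ) : ℂ := χ ((p.2 + 1 : ℕ) : ZMod q) * ((p.1 + 1 : ℕ) : ℂ) ^ ((N : ℤ) - 2 * h)
  have hre (t : ℝ) : 1 < ((c₀ : ℂ) + t * I).re := by simpa
  have hreN (t : ℝ) : 1 < ((N : ℂ) * (c₀ + t * I) - ((N : ℂ) - 2 * h)).re := by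
    simp
    linarith
  have hfactor (s : ℂ) (p : ℕ × ℕ) : a p * (y p : ℂ) ^ (-s) =
      ((p.1 + 1 : ℕ) : ℂ) ^ (-((N : ℂ) * s - ((N : ℂ) - 2 * h))) *
        (χ ((p.2 + 1 : ℕ) : ZMod q) * ((p.2 + 1 : ℕ) : ℂ) ^ (-s)) * ((q : ℂ) / x) ^ s := by
    have hn : ((p.1 + 1 : ℕ) : ℂ) ≠ 0 := by exact_mod_cast p.1.succ_ne_zero
    have hyp : y p = ((p.2 + 1 : ℕ) : ℝ) * (((p.1 + 1 : ℕ) : ℝ) ^ N * (q / x)⁻¹) := by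
      simp only [y, w, inv_div, mul_div_assoc]
    have hqx : ((q / x : ℝ) : ℂ)⁻¹ ^ (-s) = ((q : ℂ) / x) ^ s := by
      rw [inv_cpow _ _ (by rw [arg_ofReal_of_nonneg (by positivity)]; exact Real.pi_pos.ne),
        cpow_neg, inv_inv]
      push_cast
      rfl
    have hpow : (((p.1 + 1 : ℕ) : ℂ) ^ N) ^ (-s) = ((p.1 + 1 : ℕ) : ℂ) ^ ((N : ℂ) * -s) := by
      rw [← natCast_cpow_natCast_mul]
    rw [hyp, ofReal_mul, mul_cpow_ofReal_nonneg (by positivity) (by positivity), ofReal_mul,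
      mul_cpow_ofReal_nonneg (by positivity) (by positivity), ofReal_inv, hqx, ofReal_pow,
      ofReal_natCast, ofReal_natCast, hpow,
      show -((N : ℂ) * s - ((N : ℂ) - 2 * h)) = (N : ℂ) * -s + (((N : ℤ) - 2 * h : ℤ) : ℂ) by
        push_cast; ring,
      cpow_add _ _ hn, cpow_intCast]
    simp only [a]
    ring
  have hnorm (s : ℂ) (p : ℕ × ℕ) : ‖a p‖ * y p ^ (-s.re) = ‖a p * (y p : ℂ) ^ (-s)‖ := by
    rw [norm_mul (a p), norm_cpow_eq_rpow_re_of_pos (hy p), neg_re]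
  have ha : Summable fun p ↦ ‖a p‖ * y p ^ (-c₀) := by
    have hz := summable_norm_natCast_add_one_cpow_neg (hreN 0)
    have hL := χ.summable_norm_mul_natCast_add_one_cpow_neg (hre 0)
    have := (hz.mul_of_nonneg hL (fun _ ↦ norm_nonneg _) (fun _ ↦ norm_nonneg _)).mul_right
      ‖((q : ℂ) / x) ^ ((c₀ : ℂ) + (0 : ℝ) * I)‖
    refine this.congr fun p ↦ ?_
    rw [← norm_mul, ← norm_mul, ← hfactor, ← hnorm]
    simp
  have key := hasSum_mul_exp_neg_eq_integral_Gamma (by linarith) hy ha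
  have hint (t : ℝ) : Gamma (c₀ + t * I) * ∑' p, a p * (y p : ℂ) ^ (-((c₀ : ℂ) + t * I)) =
      Gamma (c₀ + t * I) * χ.LFunction (c₀ + t * I) *
        riemannZeta ((N : ℂ) * (c₀ + t * I) - ((N : ℂ) - 2 * h)) *
          ((q : ℂ) / x) ^ ((c₀ : ℂ) + t * I) := by
    simp_rw [hfactor]
    rw [tsum_mul_right, ← tsum_mul_tsum_of_summable_norm
      (summable_norm_natCast_add_one_cpow_neg (hreN t))
      (χ.summable_norm_mul_natCast_add_one_cpow_neg (hre t)),
      ← riemannZeta_eq_tsum_natCast_add_one_cpow_neg (hreN t),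
      ← χ.LFunction_eq_tsum_natCast_add_one (hre t)]
    ring
  simp_rw [hint] at key
  rw [← (key.prod_fiberwise fun n ↦ (key.summable.prod_factor n).hasSum).tsum_eq]
  have hqw (n : ℕ) : (q : ℝ) * w n = ((n + 1 : ℕ) : ℝ) ^ N * x := by
    simp only [w]
    field_simp
  have hterm (r n : ℕ) : χ (r : ZMod q) * ((n : ℂ) + 1) ^ ((N : ℤ) - 2 * h) *
      cexp (-((r : ℂ) / q) * ((n : ℂ) + 1) ^ N * x) / (1 - cexp (-((n : ℂ) + 1) ^ N * x)) =
      ((n + 1 : ℕ) : ℂ) ^ ((N : ℤ) - 2 * h) *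
        (χ (r : ZMod q) * cexp (-((r : ℂ) * w n)) / (1 - cexp (-(q * w n)))) := by
    have h1 : -((r : ℂ) / q) * ((n : ℂ) + 1) ^ N * x = -((r : ℂ) * w n) := by
      simp only [w]
      push_cast
      ring
    have h2 : -((n : ℂ) + 1) ^ N * x = -(q * w n) := by
      have := congrArg ofReal (hqw n)
      push_cast at this
      rw [this]
      ring
    rw [h1, h2]
    push_cast
    ring
  simp_rw [hterm]
  rw [← Summable.tsum_finsetSum]
  · refine tsum_congr fun n ↦ ?_
    have hn : ((n + 1 : ℕ) : ℂ) ^ ((N : ℤ) - 2 * h) ≠ 0 :=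
      zpow_ne_zero _ (by exact_mod_cast n.succ_ne_zero)
    have hfib (m : ℕ) : a (n, m) * cexp (-y (n, m)) = ((n + 1 : ℕ) : ℂ) ^ ((N : ℤ) - 2 * h) *
        (χ ((m + 1 : ℕ) : ZMod q) * cexp (-(((m + 1 : ℕ) : ℂ) * w n))) := by
      simp only [a, y]
      push_cast
      ring
    have hs := key.summable.prod_factor n
    simp_rw [hfib] at hs ⊢
    rw [tsum_mul_left, ← Finset.mul_sum,
      χ.tsum_mul_exp_neg_mul (hw n) hq ((summable_mul_left_iff hn).mp hs)]
  · intro r hr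
    obtain ⟨m, rfl⟩ := Nat.exists_eq_add_of_le' (Finset.mem_Icc.mp hr).1
    have hs : Summable fun n ↦ ‖a (n, m) * cexp (-y (n, m))‖ :=
      key.summable.norm.prod_symm.prod_factor m
    refine .of_norm_bounded (hs.mul_right (1 - Real.exp (-x))⁻¹) fun n ↦ ?_
    have hxlt : Real.exp (-x) < 1 := by simpa
    have hle : Real.exp (-(q * w n)) ≤ Real.exp (-x) := by
      rw [hqw, Real.exp_le_exp, neg_le_neg_iff]
      exact le_mul_of_one_le_left hx.le (one_le_pow₀ (by simp))
    have hden : ‖1 - cexp (-(q * w n))‖ = 1 - Real.exp (-(q * w n)) := by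
      rw [← Real.norm_of_nonneg (r := 1 - Real.exp (-(q * w n))) (by linarith), ← norm_real]
      push_cast
      rfl
    have hy' : (y (n, m) : ℂ) = ((m + 1 : ℕ) : ℂ) * w n := by simp [y]
    rw [← mul_div_assoc, norm_div, hden, div_eq_mul_inv, hy']
    refine mul_le_mul (le_of_eq ?_) (inv_anti₀ (by linarith) (by linarith))
      (inv_nonneg.mpr (by linarith)) (norm_nonneg _)
    congr 1
    simp only [a]
    ring
end

section
/- Let N be a positive integer and x > 0. The function s ↦ s²·Γ(s)·ζ(s)·ζ(Ns+1)·x^{−s} extends holomorphically to a neighborhood of s = 0, and the value of its derivative at s = 0 (equivalently, the residue at the double pole s = 0 of Γ(s)·ζ(s)·ζ(Ns+1)·x^{−s}) equals (1/(2N))·( log(x) − log(2π) − γ·(N−1) ), where γ is the Euler–Mascheroni constant. -/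
/-- The regular part of `s² Γ(s) ζ(s) ζ(Ns+1) x^{-s}` near `s = 0`, written with
`s Γ(s) = Γ(s+1)` and `Ns ζ(Ns+1) = ζ₁(Ns+1)`. -/
noncomputable def regularizedGammaZetaZeta (N : ℕ) (x : ℝ) (s : ℂ) : ℂ :=
  (N : ℂ)⁻¹ * (Complex.Gamma (s + 1) * riemannZeta s * riemannZeta₁ ((N : ℂ) * s + 1) *
    (x : ℂ) ^ (-s))

lemma regularizedGammaZetaZeta_eq {N : ℕ} (hN : 0 < N) (x : ℝ) {s : ℂ} (hs : s ≠ 0) :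
    regularizedGammaZetaZeta N x s =
      s ^ 2 * Complex.Gamma s * riemannZeta s * riemannZeta ((N : ℂ) * s + 1) *
        (x : ℂ) ^ (-s) := by
  have hN' : (N : ℂ) ≠ 0 := by exact_mod_cast hN.ne'
  have h : (N : ℂ) * s + 1 ≠ 1 := by simp [hN', hs]
  rw [regularizedGammaZetaZeta, riemannZeta_eq_inv_sub_mul h, Complex.Gamma_add_one s hs,
    add_sub_cancel_right]
  field_simp

lemma analyticAt_regularizedGammaZetaZeta (N : ℕ) {x : ℝ} (hx : 0 < x) :
    AnalyticAt ℂ (regularizedGammaZetaZeta N x) 0 := by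
  have hx' : (x : ℂ) ≠ 0 := by exact_mod_cast hx.ne'
  rw [Complex.analyticAt_iff_eventually_differentiableAt]
  filter_upwards [Metric.ball_mem_nhds (0 : ℂ) one_pos] with s hs
  have hs' : ‖s‖ < 1 := by simpa using hs
  have hre : 0 < (s + 1).re := by
    have := (abs_lt.1 ((Complex.abs_re_le_norm s).trans_lt hs')).1
    rw [Complex.add_re, Complex.one_re]
    linarith
  have hne (m : ℕ) : s + 1 ≠ -m := by
    intro h
    rw [h] at hre
    simp only [Complex.neg_re, Complex.natCast_re] at hre
    linarith [m.cast_nonneg (α := ℝ)]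
  have hΓ : DifferentiableAt ℂ (fun s ↦ Complex.Gamma (s + 1)) s :=
    (Complex.differentiableAt_Gamma _ hne).comp s (f := fun s ↦ s + 1) (by fun_prop)
  have hζ : DifferentiableAt ℂ riemannZeta s :=
    differentiableAt_riemannZeta (by rintro rfl; simp at hs')
  have hζ₁ : DifferentiableAt ℂ (fun s ↦ riemannZeta₁ ((N : ℂ) * s + 1)) s := by fun_prop
  have hpow : DifferentiableAt ℂ (fun s : ℂ ↦ (x : ℂ) ^ (-s)) s :=
    differentiableAt_id.neg.const_cpow (Or.inl hx')
  exact (((hΓ.mul hζ).mul hζ₁).mul hpow).const_mul _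

lemma deriv_regularizedGammaZetaZeta_zero {N : ℕ} (hN : 0 < N) {x : ℝ} (hx : 0 < x) :
    deriv (regularizedGammaZetaZeta N x) 0 = Complex.ofReal ((1 / (2 * (N : ℝ))) *
      (Real.log x - Real.log (2 * Real.pi) -
        Real.eulerMascheroniConstant * ((N : ℝ) - 1))) := by
  have hN' : (N : ℂ) ≠ 0 := by exact_mod_cast hN.ne'
  have hx' : (x : ℂ) ≠ 0 := by exact_mod_cast hx.ne'
  have hΓ : HasDerivAt (fun s ↦ Complex.Gamma (s + 1)) (-Real.eulerMascheroniConstant : ℂ) 0 :=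
    HasDerivAt.comp_add_const 0 1 (by simpa using Complex.hasDerivAt_Gamma_one)
  have hζ : HasDerivAt riemannZeta (-Complex.log (2 * Real.pi) / 2) 0 :=
    deriv_riemannZeta_zero ▸ (differentiableAt_riemannZeta zero_ne_one).hasDerivAt
  have hlin : HasDerivAt (fun s : ℂ ↦ (N : ℂ) * s + 1) (N : ℂ) 0 := by
    simpa using ((hasDerivAt_id (0 : ℂ)).const_mul (N : ℂ)).add_const 1
  have hζ₁ : HasDerivAt (fun s ↦ riemannZeta₁ ((N : ℂ) * s + 1))
      (Real.eulerMascheroniConstant * N : ℂ) 0 := by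
    refine HasDerivAt.comp (h₂ := riemannZeta₁) (0 : ℂ) ?_ hlin
    simpa using (differentiable_riemannZeta₁ 1).hasDerivAt
  have hpow : HasDerivAt (fun s : ℂ ↦ (x : ℂ) ^ (-s)) (-Complex.log x) 0 := by
    simpa using (hasDerivAt_neg (0 : ℂ)).const_cpow (Or.inl hx')
  have hlog : Complex.log (2 * Real.pi) = (Real.log (2 * Real.pi) : ℂ) := by
    rw [Complex.ofReal_log (by positivity)]
    push_cast
    rfl
  refine ((((hΓ.mul hζ).mul hζ₁).mul hpow).const_mul (N : ℂ)⁻¹).deriv.trans ?_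
  rw [hlog, ← Complex.ofReal_log hx.le]
  simp [riemannZeta_zero]
  field_simp
  ring

theorem stmt12 (N : ℕ) (hN : 0 < N) (x : ℝ) (hx : 0 < x) :
    ∃ g : ℂ → ℂ, AnalyticAt ℂ g 0 ∧
      (∀ᶠ s : ℂ in nhdsWithin 0 {(0 : ℂ)}ᶜ,
        g s = s ^ 2 * Complex.Gamma s * riemannZeta s * riemannZeta ((N : ℂ) * s + 1) *
          (x : ℂ) ^ (-s)) ∧
      deriv g 0 = Complex.ofReal ((1 / (2 * (N : ℝ))) *
        (Real.log x - Real.log (2 * Real.pi) - Real.eulerMascheroniConstant * ((N : ℝ) - 1))) :=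
  ⟨regularizedGammaZetaZeta N x, analyticAt_regularizedGammaZetaZeta N hx,
    eventually_nhdsWithin_of_forall fun _ hs ↦ regularizedGammaZetaZeta_eq hN x hs,
    deriv_regularizedGammaZetaZeta_zero hN hx⟩
end

section
/- Let α, β, γ be real numbers such that exp(γ e^{−iα}) ≠ 1. Then 2·Re( e^{iαβ} / ( exp(γ e^{−iα}) − 1 ) ) = ( cos(γ·sin(α) + αβ) − e^{−γ·cos(α)}·cos(αβ) ) / ( cosh(γ·cos(α)) − cos(γ·sin(α)) ), and in particular the denominator cosh(γ·cos(α)) − cos(γ·sin(α)) is nonzero. -/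
/-- The squared modulus of `exp z - 1` in terms of the real and imaginary parts of `z`. -/
theorem normSq_exp_sub_one (z : ℂ) :
    Complex.normSq (Complex.exp z - 1) =
      2 * Real.exp z.re * (Real.cosh z.re - Real.cos z.im) := by
  have hexp : Real.exp z.re * Real.exp (-z.re) = 1 := by
    rw [← Real.exp_add, add_neg_cancel, Real.exp_zero]
  rw [Complex.normSq_apply, Real.cosh_eq]
  simp only [Complex.sub_re, Complex.sub_im, Complex.one_re, Complex.one_im, Complex.exp_re,
    Complex.exp_im]
  linear_combination Real.exp z.re ^ 2 * Real.sin_sq_add_cos_sq z.im - hexp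

theorem cosh_re_sub_cos_im_ne_zero {z : ℂ} (hz : Complex.exp z ≠ 1) :
    Real.cosh z.re - Real.cos z.im ≠ 0 := by
  intro h
  have hsq := normSq_exp_sub_one z
  rw [h, mul_zero, Complex.normSq_eq_zero, sub_eq_zero] at hsq
  exact hz hsq

theorem two_mul_re_exp_mul_I_div_exp_sub_one {z : ℂ} (hz : Complex.exp z ≠ 1) (t : ℝ) :
    2 * (Complex.exp (t * Complex.I) / (Complex.exp z - 1)).re =
      (Real.cos (t - z.im) - Real.exp (-z.re) * Real.cos t) /
        (Real.cosh z.re - Real.cos z.im) := by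
  have hD := cosh_re_sub_cos_im_ne_zero hz
  have hE := Real.exp_ne_zero z.re
  rw [Complex.div_re, normSq_exp_sub_one, Real.cos_sub, Real.exp_neg]
  simp only [Complex.sub_re, Complex.sub_im, Complex.one_re, Complex.one_im, Complex.exp_re z,
    Complex.exp_im z, Complex.exp_ofReal_mul_I_re, Complex.exp_ofReal_mul_I_im]
  field_simp
  ring

theorem stmt19 (α β γ : ℝ)
    (hne : Complex.exp (γ * Complex.exp (-(Complex.I * α))) ≠ 1) :
    Real.cosh (γ * Real.cos α) - Real.cos (γ * Real.sin α) ≠ 0 ∧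
    2 * (Complex.exp (Complex.I * α * β) /
          (Complex.exp (γ * Complex.exp (-(Complex.I * α))) - 1)).re
      = (Real.cos (γ * Real.sin α + α * β)
          - Real.exp (-(γ * Real.cos α)) * Real.cos (α * β)) /
        (Real.cosh (γ * Real.cos α) - Real.cos (γ * Real.sin α)) := by
  have hre : (γ * Complex.exp (-(Complex.I * α))).re = γ * Real.cos α := by
    simp [Complex.exp_re]
  have him : (γ * Complex.exp (-(Complex.I * α))).im = -(γ * Real.sin α) := by
    simp [Complex.exp_im]
  have harg : Complex.I * α * β = ((α * β : ℝ) : ℂ) * Complex.I := by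
    push_cast
    ring
  have hD := cosh_re_sub_cos_im_ne_zero hne
  have hR := two_mul_re_exp_mul_I_div_exp_sub_one hne (α * β)
  rw [hre, him, Real.cos_neg] at hD hR
  rw [sub_neg_eq_add, add_comm (α * β)] at hR
  rw [harg]
  exact ⟨hD, hR⟩
end
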